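/- arXiv:2107.00550 — 2 statements merged into one kernel-verified Lean document; each statement's English description precedes it below -/
import Mathlib

section
/- Let V be a good ssee. Let N ∈ ℕ and let F be a nonempty finite family of simple boxes in [0,1]^{V_N}; set b = ⋃_{f∈F} f and define P = Forb(b), i.e. P_n := [0,1]^{V_n} \ ∂⁺_{V_n}(b) for n ≥ N. Then for every ε > 0 there exists n₀ such that for every n ≥ n₀ there exists a collection C of simple boxes in [0,1]^{V_n} satisfying: (i) P_n ⊆ ⋃_{c∈C} c; (ii) for every c ∈ C, E_φ vol(c_{↓φ} ∩ b) < ε; and (iii) |C| ≤ e^{ε|V_n|}. -/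
open MeasureTheory Filter Set

noncomputable section

/-- A set-sequence equipped with embeddings (ssee): a sequence of finite nonempty
sets `V n` together with, for `N ≤ n`, a collection of injections `V N → V n`. -/
structure Ssee where
  V : ℕ → Type
  fin : ∀ n, Fintype (V n)
  dec : ∀ n, DecidableEq (V n)
  nonemp : ∀ n, Nonempty (V n)
  emb : (N n : ℕ) → Finset (V N → V n)
  emb_inj : ∀ N n, N ≤ n → ∀ φ ∈ emb N n, Function.Injective φ

attribute [instance] Ssee.fin Ssee.dec Ssee.nonemp

/-- `I(N,n)`: the number of pairs of embeddings whose images intersect in exactly `i`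
elements, summed over all `i` with `1 < i < |V_N|`. -/
def Ssee.interCount (S : Ssee) (N n : ℕ) : ℕ :=
  ((S.emb N n ×ˢ S.emb N n).filter (fun p =>
    1 < ((Finset.univ.image p.1) ∩ (Finset.univ.image p.2)).card ∧
    ((Finset.univ.image p.1) ∩ (Finset.univ.image p.2)).card < Fintype.card (S.V N))).card

/-- A ssee is good if `|V_n| → ∞`, and for every `N` with `|V_N| > 1` we have
`|emb N n| / |V_n| → ∞` and `|V_n| · I(N,n) / |emb N n|² → 0`. -/
def Ssee.Good (S : Ssee) : Prop :=
  Tendsto (fun n => Fintype.card (S.V n)) atTop atTop ∧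
  (∀ N, 1 < Fintype.card (S.V N) →
    Tendsto (fun n => ((S.emb N n).card : ℝ) / (Fintype.card (S.V n) : ℝ)) atTop atTop) ∧
  (∀ N, 1 < Fintype.card (S.V N) →
    Tendsto (fun n => ((Fintype.card (S.V n) : ℝ) * (S.interCount N n : ℝ)) /
      ((S.emb N n).card : ℝ) ^ 2) atTop (nhds 0))

/-- Homogeneous: every point of `V n` lies in the same strictly positive number of
images of embeddings of `V N`. -/
def Ssee.Homogeneous (S : Ssee) : Prop :=
  ∀ N n, N ≤ n → ∃ k : ℕ, 0 < k ∧ ∀ x : S.V n,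
    ((S.emb N n).filter (fun φ => x ∈ Finset.univ.image φ)).card = k

/-- The unit cube `[0,1]^ι`. -/
def unitCube (ι : Type) : Set (ι → ℝ) := Set.univ.pi fun _ => Set.Icc (0:ℝ) 1

/-- A box in `[0,1]^ι`: a product of measurable subsets of `[0,1]`. -/
def IsBox {ι : Type} (b : Set (ι → ℝ)) : Prop :=
  ∃ A : ι → Set ℝ, (∀ i, MeasurableSet (A i) ∧ A i ⊆ Set.Icc 0 1) ∧ b = Set.univ.pi A

/-- A simple box: a product of finite unions of intervals (i.e. of order-connected
subsets of `ℝ`) contained in `[0,1]`. -/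
def IsSimpleBox {ι : Type} (b : Set (ι → ℝ)) : Prop :=
  ∃ A : ι → Set ℝ,
    (∀ i, A i ⊆ Set.Icc 0 1 ∧
      ∃ s : Finset (Set ℝ), (∀ J ∈ s, J.OrdConnected) ∧ A i = ⋃₀ ↑s) ∧
    b = Set.univ.pi A

/-- The projection `b_{↓φ}` of a body `b ⊆ [0,1]^β` along `φ : α → β`: those `c` whose
fiber (in the coordinates outside the range of `φ`) has positive measure. -/
def projBody {α β : Type} [Fintype α] [Fintype β] (φ : α → β) (b : Set (β → ℝ)) :
    Set (α → ℝ) :=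
  letI : ∀ p : Prop, Decidable p := fun p => Classical.propDecidable p
  {c | 0 < volume {d : {i : β // i ∉ Set.range φ} → ℝ |
    (fun i : β => if h : i ∈ Set.range φ then c h.choose else d ⟨i, h⟩) ∈ b}}

/-- The lift `b_{↑φ}` of a body `b ⊆ [0,1]^α` along `φ : α → β`. -/
def liftBody {α β : Type} (φ : α → β) (b : Set (α → ℝ)) : Set (β → ℝ) :=
  {c | c ∈ unitCube β ∧ (fun j => c (φ j)) ∈ b}

/-- The upper shadow `∂⁺_{V_n}(b)` of a body `b ⊆ [0,1]^{V_N}`. -/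
def Ssee.upperShadow (S : Ssee) (N n : ℕ) (b : Set (S.V N → ℝ)) : Set (S.V n → ℝ) :=
  ⋃ φ ∈ S.emb N n, liftBody φ b

/-- A hereditary `[0,1]`-decoration property: a sequence of measurable subsets of the
unit cubes whose complements (within the cubes) are closed under upper shadows. -/
def Ssee.Hereditary (S : Ssee) (P : ∀ n, Set (S.V n → ℝ)) : Prop :=
  (∀ n, MeasurableSet (P n) ∧ P n ⊆ unitCube (S.V n)) ∧
  ∀ N n, N ≤ n → S.upperShadow N n (unitCube (S.V N) \ P N) ⊆ unitCube (S.V n) \ P n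

/-- Expectation of `f φ` over an embedding `φ` chosen uniformly from `emb N n`. -/
def Ssee.expProj (S : Ssee) (N n : ℕ) (f : (S.V N → S.V n) → ℝ) : ℝ :=
  (∑ φ ∈ S.emb N n, f φ) / ((S.emb N n).card : ℝ)

/-- The entropy `Ent(b) = -log vol(b)`, valued in `EReal` (so `Ent(b) = ⊤` when
`vol(b) = 0`). -/
def entE {ι : Type} [Fintype ι] (b : Set (ι → ℝ)) : EReal := -(ENNReal.log (volume b))

/-- Extremal entropy `ex(V_n, P_n) = inf { Ent(b) : b a box with vol(b \ P_n) = 0 }`. -/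
def Ssee.exEnt (S : Ssee) (P : ∀ n, Set (S.V n → ℝ)) (n : ℕ) : EReal :=
  sInf {e : EReal | ∃ b : Set (S.V n → ℝ), IsBox b ∧ volume (b \ P n) = 0 ∧ e = entE b}



/-- Few small subsets. -/
lemma aux_card_small (δ : ℝ) (hδ : 0 < δ) : ∃ q : ℝ, 0 < q ∧ ∀ (W : Type) [Fintype W] [DecidableEq W],
    (((Finset.univ : Finset (Finset W)).filter
      (fun T => (T.card : ℝ) ≤ q * Fintype.card W)).card : ℝ) ≤ Real.exp (δ * Fintype.card W) := by
  set x : ℝ := min 1 (δ / 2) with hx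
  have hx0 : 0 < x := lt_min one_pos (by positivity)
  have hx1 : x ≤ 1 := min_le_left _ _
  have hx2 : x ≤ δ / 2 := min_le_right _ _
  have hlog : Real.log x ≤ 0 := Real.log_nonpos hx0.le hx1
  set q : ℝ := (δ / 2) / (1 - Real.log x) with hq
  have hden : 0 < 1 - Real.log x := by linarith
  have hq0 : 0 < q := by positivity
  have hqlog : q * (1 - Real.log x) = δ / 2 := by rw [hq]; field_simp
  refine ⟨q, hq0, ?_⟩
  intro W _ _
  set m : ℝ := (Fintype.card W : ℝ) with hm
  have hm0 : 0 ≤ m := by positivity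
  have hsum : ∑ s : Finset W, x ^ s.card = (x + 1) ^ Fintype.card W := by
    have := Fintype.sum_pow_mul_eq_add_pow W x 1
    simpa using this
  set S := (Finset.univ : Finset (Finset W)).filter (fun T => (T.card : ℝ) ≤ q * m) with hS
  have h1 : (S.card : ℝ) * Real.exp (-(δ / 2 * m)) ≤ ∑ s ∈ S, x ^ s.card := by
    rw [← nsmul_eq_mul]
    apply Finset.card_nsmul_le_sum
    intro T hT
    have hT' : (T.card : ℝ) ≤ q * m := (Finset.mem_filter.1 hT).2
    have : x ^ T.card = Real.exp (T.card * Real.log x) := by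
      rw [Real.exp_nat_mul, Real.exp_log hx0]
    rw [this]
    apply Real.exp_le_exp.2
    nlinarith [mul_nonneg hq0.le hm0, mul_nonneg (sub_nonneg.2 hT') (neg_nonneg.2 hlog)]
  have h2 : ∑ s ∈ S, x ^ s.card ≤ (x + 1) ^ Fintype.card W := by
    rw [← hsum]
    apply Finset.sum_le_sum_of_subset_of_nonneg (Finset.subset_univ _)
    intros; positivity
  have h3 : (x + 1) ^ Fintype.card W ≤ Real.exp (δ / 2 * m) := by
    calc (x + 1) ^ Fintype.card W ≤ (Real.exp x) ^ Fintype.card W := by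
          gcongr
          exact Real.add_one_le_exp x
      _ = Real.exp (m * x) := by rw [Real.exp_nat_mul]
      _ ≤ _ := Real.exp_le_exp.2 (by nlinarith)
  have h4 := h1.trans (h2.trans h3)
  rw [Real.exp_neg, ← div_eq_mul_inv, div_le_iff₀ (Real.exp_pos _), ← Real.exp_add] at h4
  have h5 : δ / 2 * m + δ / 2 * m = δ * m := by ring
  rwa [h5] at h4

set_option linter.unusedSectionVars false
section hyp
variable {W α : Type} [Fintype W] [DecidableEq W] [DecidableEq α]

lemma aux_double_count (E : Finset α) (f : α → Finset W) :
    ∑ v : W, ((E.filter (fun e => v ∈ f e)).card : ℝ) = ∑ e ∈ E, ((f e).card : ℝ) := by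
  have : ∀ v : W, ((E.filter (fun e => v ∈ f e)).card : ℝ) = ∑ e ∈ E, if v ∈ f e then (1:ℝ) else 0 := by
    intro v; simp
  simp_rw [this]
  rw [Finset.sum_comm]
  apply Finset.sum_congr rfl
  intro e _
  simp

lemma aux_touch (E : Finset α) (f : α → Finset W) (Δ : ℝ) (X : Finset W)
    (hΔ : ∀ v ∈ X, ((E.filter (fun e => v ∈ f e)).card : ℝ) ≤ Δ) :
    ((E.filter (fun e => ∃ v ∈ X, v ∈ f e)).card : ℝ) ≤ X.card * Δ := by
  have h1 : E.filter (fun e => ∃ v ∈ X, v ∈ f e) ⊆ X.biUnion (fun v => E.filter (fun e => v ∈ f e)) := by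
    intro e he
    simp only [Finset.mem_filter, Finset.mem_biUnion] at he ⊢
    obtain ⟨h, v, hv, hve⟩ := he
    exact ⟨v, hv, h, hve⟩
  calc ((E.filter (fun e => ∃ v ∈ X, v ∈ f e)).card : ℝ)
      ≤ ((X.biUnion (fun v => E.filter (fun e => v ∈ f e))).card : ℝ) := by
        exact_mod_cast Finset.card_le_card h1
    _ ≤ ∑ v ∈ X, ((E.filter (fun e => v ∈ f e)).card : ℝ) := by
        exact_mod_cast Finset.card_biUnion_le
    _ ≤ ∑ v ∈ X, Δ := Finset.sum_le_sum hΔ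
    _ = X.card * Δ := by simp

/-- Greedy choice of the fingerprint. -/
lemma aux_greedy (E : Finset α) (f : α → Finset W) (s : ℕ) (hcard : ∀ e ∈ E, (f e).card = s + 1)
    (Δ z κ y : ℝ) (hΔ0 : 0 ≤ Δ) (hy : 0 < y) (hκ : 0 < κ) (hzκ : z ≤ κ) (hm : 0 < Fintype.card W)
    (hΔ : ∀ v : W, ((E.filter (fun e => v ∈ f e)).card : ℝ) ≤ Δ)
    (hz : ∀ u v : W, u ≠ v → ((E.filter (fun e => u ∈ f e ∧ v ∈ f e)).card : ℝ) ≤ z)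
    (J : Finset W) (n0 : ℕ)
    (hJ : y * Fintype.card W + (s + 1) * Δ * (n0 + s * (n0 * Δ) / κ) ≤
      ∑ v ∈ J, ((E.filter (fun e => v ∈ f e)).card : ℝ)) :
    ∃ (T : Finset W) (EH : Finset α) (g : α → W), T ⊆ J ∧ T.card ≤ n0 ∧ EH ⊆ E ∧
      (∀ e ∈ EH, g e ∈ T ∧ g e ∈ f e) ∧
      (∀ u : W, ((EH.filter (fun e => u ∈ (f e).erase (g e))).card : ℝ) ≤ 2 * κ) ∧
      n0 * y ≤ EH.card := by
  have key : ∀ j : ℕ, j ≤ n0 → ∃ (T : Finset W) (EH : Finset α) (g : α → W), T ⊆ J ∧ T.card ≤ j ∧ EH ⊆ E ∧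
      (∀ e ∈ EH, g e ∈ T ∧ g e ∈ f e) ∧
      (∀ u : W, ((EH.filter (fun e => u ∈ (f e).erase (g e))).card : ℝ) ≤ 2 * κ) ∧
      j * y ≤ EH.card := by
    intro j
    induction j with
    | zero =>
      intro _
      have : Nonempty W := Fintype.card_pos_iff.1 hm
      refine ⟨∅, ∅, fun _ => Classical.arbitrary W, by simp, by simp, by simp, by simp, ?_, by simp⟩
      intro u; simp; positivity
    | succ j ih =>
      intro hj
      obtain ⟨T, EH, g, hTJ, hTc, hEH, hg, hdeg, hyj⟩ := ih (by omega)
      set dH : W → ℝ := fun u => ((EH.filter (fun e => u ∈ (f e).erase (g e))).card : ℝ) with hdH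
      set Sat : Finset W := Finset.univ.filter (fun u => κ ≤ dH u) with hSat
      have hjn : (j : ℝ) ≤ n0 := by exact_mod_cast (by omega : j ≤ n0)
      -- number of edges of H
      have hEHc : (EH.card : ℝ) ≤ n0 * Δ := by
        have h1 := aux_touch EH f Δ T (fun v _ => le_trans (by
          exact_mod_cast Finset.card_le_card (Finset.filter_subset_filter _ hEH)) (hΔ v))
        have h2 : EH.filter (fun e => ∃ v ∈ T, v ∈ f e) = EH := by
          apply Finset.filter_true_of_mem
          intro e he
          exact ⟨g e, hg e he⟩
        rw [h2] at h1
        have : (T.card : ℝ) ≤ n0 := le_trans (by exact_mod_cast hTc) hjn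
        nlinarith
      have hSatc : (Sat.card : ℝ) ≤ s * (n0 * Δ) / κ := by
        rw [le_div_iff₀ hκ]
        calc (Sat.card : ℝ) * κ = ∑ u ∈ Sat, κ := by simp
          _ ≤ ∑ u ∈ Sat, dH u := Finset.sum_le_sum (fun u hu => (Finset.mem_filter.1 hu).2)
          _ ≤ ∑ u, dH u := Finset.sum_le_sum_of_subset_of_nonneg (Finset.subset_univ _)
              (by intros; simp only [hdH]; positivity)
          _ = ∑ e ∈ EH, (((f e).erase (g e)).card : ℝ) :=
              aux_double_count EH (fun e => (f e).erase (g e))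
          _ = ∑ e ∈ EH, (s : ℝ) := by
              apply Finset.sum_congr rfl
              intro e he
              rw [Finset.card_erase_of_mem (hg e he).2, hcard e (hEH he)]
              simp
          _ = EH.card * s := by simp
          _ ≤ _ := by
              have : (0:ℝ) ≤ s := by positivity
              nlinarith
      set X := T ∪ Sat with hX
      have hXc : (X.card : ℝ) ≤ n0 + s * (n0 * Δ) / κ := by
        have h1 : (X.card : ℝ) ≤ T.card + Sat.card := by exact_mod_cast Finset.card_union_le _ _
        have h2 : (T.card : ℝ) ≤ n0 := le_trans (by exact_mod_cast hTc) hjn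
        linarith
      set Bd := E.filter (fun e => ∃ v ∈ X, v ∈ f e) with hBd
      set Gd := E.filter (fun e => ¬ ∃ v ∈ X, v ∈ f e) with hGd
      have hBdc : (Bd.card : ℝ) ≤ Δ * (n0 + s * (n0 * Δ) / κ) := by
        have := aux_touch E f Δ X (fun v _ => hΔ v)
        nlinarith
      have hsplit : ∀ v, ((E.filter (fun e => v ∈ f e)).card : ℝ) =
          (Bd.filter (fun e => v ∈ f e)).card + (Gd.filter (fun e => v ∈ f e)).card := by
        intro v
        have h1 : Bd.filter (fun e => v ∈ f e) =
            (E.filter (fun e => v ∈ f e)).filter (fun e => ∃ v ∈ X, v ∈ f e) := by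
          rw [hBd, Finset.filter_comm]
        have h2 : Gd.filter (fun e => v ∈ f e) =
            (E.filter (fun e => v ∈ f e)).filter (fun e => ¬ ∃ v ∈ X, v ∈ f e) := by
          rw [hGd, Finset.filter_comm]
        rw [h1, h2]
        exact_mod_cast (Finset.card_filter_add_card_filter_not _).symm
      have hex : ∃ v ∈ J, y ≤ ((Gd.filter (fun e => v ∈ f e)).card : ℝ) := by
        by_contra hcon
        push Not at hcon
        have h1 : ∑ v ∈ J, ((Gd.filter (fun e => v ∈ f e)).card : ℝ) ≤ J.card * y := by
          calc _ ≤ ∑ v ∈ J, y := Finset.sum_le_sum (fun v hv => (hcon v hv).le)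
            _ = _ := by simp
        have h2 : ∑ v ∈ J, ((Bd.filter (fun e => v ∈ f e)).card : ℝ) ≤ Bd.card * (s + 1) := by
          calc _ ≤ ∑ v, ((Bd.filter (fun e => v ∈ f e)).card : ℝ) :=
                Finset.sum_le_sum_of_subset_of_nonneg (Finset.subset_univ _) (by intros; positivity)
            _ = ∑ e ∈ Bd, ((f e).card : ℝ) := aux_double_count Bd f
            _ = ∑ e ∈ Bd, ((s : ℝ) + 1) := by
                apply Finset.sum_congr rfl
                intro e he
                rw [hcard e (Finset.mem_filter.1 he).1]; simp
            _ = _ := by simp; ring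
        have h3 : ∑ v ∈ J, ((E.filter (fun e => v ∈ f e)).card : ℝ) =
          ∑ v ∈ J, ((Bd.filter (fun e => v ∈ f e)).card : ℝ) +
          ∑ v ∈ J, ((Gd.filter (fun e => v ∈ f e)).card : ℝ) := by
          rw [← Finset.sum_add_distrib]
          exact Finset.sum_congr rfl (fun v _ => hsplit v)
        have hs0 : (0:ℝ) ≤ s + 1 := by positivity
        have h4 : (Bd.card : ℝ) * (s + 1) ≤ (s + 1) * Δ * (n0 + s * (n0 * Δ) / κ) := by
          calc (Bd.card : ℝ) * (s + 1) ≤ (Δ * (n0 + s * (n0 * Δ) / κ)) * (s + 1) :=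
                mul_le_mul_of_nonneg_right hBdc hs0
            _ = _ := by ring
        have hJW : (J.card : ℝ) ≤ Fintype.card W := by exact_mod_cast Finset.card_le_univ J
        rcases J.eq_empty_or_nonempty with hJe | hJne
        · rw [hJe] at hJ
          simp only [Finset.sum_empty] at hJ
          have : 0 < y * (Fintype.card W : ℝ) := by positivity
          have : 0 ≤ (s + 1) * Δ * (n0 + s * (n0 * Δ) / κ) := by positivity
          linarith
        · have h1' : ∑ v ∈ J, ((Gd.filter (fun e => v ∈ f e)).card : ℝ) < J.card * y := by
            calc _ < ∑ v ∈ J, y := Finset.sum_lt_sum_of_nonempty hJne (fun v hv => (hcon v hv))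
              _ = _ := by simp
          nlinarith
      obtain ⟨v, hvJ, hvy⟩ := hex
      set New := Gd.filter (fun e => v ∈ f e) with hNew
      have hNewE : New ⊆ E := (Finset.filter_subset _ _).trans (Finset.filter_subset _ _)
      have hNewX : ∀ e ∈ New, ∀ w ∈ X, w ∉ f e := by
        intro e he w hw hwe
        exact (Finset.mem_filter.1 (Finset.mem_filter.1 he).1).2 ⟨w, hw, hwe⟩
      have hNewv : ∀ e ∈ New, v ∈ f e := fun e he => (Finset.mem_filter.1 he).2
      have hdisj : Disjoint EH New := by
        rw [Finset.disjoint_left]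
        intro e he hn
        exact hNewX e hn (g e) (Finset.mem_union_left _ (hg e he).1) (hg e he).2
      refine ⟨insert v T, EH ∪ New, fun e => if e ∈ EH then g e else v, ?_, ?_, ?_, ?_, ?_, ?_⟩
      · exact Finset.insert_subset hvJ hTJ
      · exact (Finset.card_insert_le _ _).trans (by omega)
      · exact Finset.union_subset hEH hNewE
      · intro e he
        by_cases hE : e ∈ EH
        · simp only [hE, if_true]
          exact ⟨Finset.mem_insert_of_mem (hg e hE).1, (hg e hE).2⟩
        · simp only [hE, if_false]
          exact ⟨Finset.mem_insert_self _ _, hNewv e ((Finset.mem_union.1 he).resolve_left hE)⟩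
      · intro u
        have e1 : ((EH ∪ New).filter (fun e => u ∈ (f e).erase (if e ∈ EH then g e else v))).card ≤
            (EH.filter (fun e => u ∈ (f e).erase (g e))).card +
            (New.filter (fun e => u ∈ (f e).erase v)).card := by
          rw [Finset.filter_union]
          refine (Finset.card_union_le _ _).trans ?_
          apply Nat.add_le_add
          · apply le_of_eq; congr 1
            apply Finset.filter_congr
            intro e he; simp [he]
          · apply le_of_eq; congr 1
            apply Finset.filter_congr
            intro e he
            have : e ∉ EH := fun h => Finset.disjoint_left.1 hdisj h he
            simp [this]
        have e2 : (((EH ∪ New).filter (fun e => u ∈ (f e).erase (if e ∈ EH then g e else v))).card : ℝ) ≤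
            dH u + ((New.filter (fun e => u ∈ (f e).erase v)).card : ℝ) := by
          simp only [hdH]
          exact_mod_cast e1
        refine e2.trans ?_
        by_cases hu : u ∈ Sat ∨ u = v
        · have : New.filter (fun e => u ∈ (f e).erase v) = ∅ := by
            apply Finset.filter_false_of_mem
            intro e he hue
            rcases hu with hu | hu
            · exact hNewX e he u (Finset.mem_union_right _ hu) (Finset.mem_of_mem_erase hue)
            · exact Finset.ne_of_mem_erase hue hu
          rw [this]; simp
          exact hdeg u
        · push Not at hu
          have h1 : dH u ≤ κ := by
            by_contra h; push Not at h
            exact hu.1 (Finset.mem_filter.2 ⟨Finset.mem_univ _, h.le⟩)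
          have h2 : ((New.filter (fun e => u ∈ (f e).erase v)).card : ℝ) ≤ z := by
            refine le_trans ?_ (hz u v hu.2)
            norm_cast
            apply Finset.card_le_card
            intro e he
            rw [Finset.mem_filter] at he ⊢
            exact ⟨hNewE he.1, Finset.mem_of_mem_erase he.2, hNewv e he.1⟩
          linarith
      · rw [Finset.card_union_of_disjoint hdisj]
        push_cast
        linarith
  exact key n0 le_rfl

/-- Abstract iteration. -/
lemma aux_rounds (good Ind : Finset W → Prop) (N0 N1 b : ℝ) (hN0 : 0 ≤ N0) (hN1 : 0 ≤ N1)
    (step : ∀ A : Finset W, ∃ C0 C1 : Finset (Finset W), (C0.card : ℝ) ≤ N0 ∧ (C1.card : ℝ) ≤ N1 ∧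
      (∀ C ∈ C0, good C) ∧ (∀ C ∈ C1, (C.card : ℝ) ≤ A.card - b) ∧
      ∀ I, I ⊆ A → Ind I → (∃ C ∈ C0, I ⊆ C) ∨ (∃ C ∈ C1, I ⊆ C)) (R : ℕ) :
    ∀ A : Finset W, (A.card : ℝ) < R * b → ∃ C : Finset (Finset W),
      (C.card : ℝ) ≤ N0 * (1 + N1) ^ R ∧ (∀ c ∈ C, good c) ∧
      ∀ I, I ⊆ A → Ind I → ∃ c ∈ C, I ⊆ c := by
  induction R with
  | zero =>
    intro A hA
    have h0 : (0:ℝ) ≤ A.card := by positivity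
    simp only [Nat.cast_zero, zero_mul] at hA
    linarith
  | succ R ih =>
    intro A hA
    obtain ⟨C0, C1, h0, h1, hgood, hsmall, hcov⟩ := step A
    have hC : ∀ B : Finset W, ∃ C : Finset (Finset W), (C.card : ℝ) ≤ N0 * (1 + N1) ^ R ∧
        (∀ c ∈ C, good c) ∧ (B ∈ C1 → ∀ I, I ⊆ B → Ind I → ∃ c ∈ C, I ⊆ c) := by
      intro B
      by_cases hB : B ∈ C1
      · obtain ⟨C, a1, a2, a3⟩ := ih B (by
          have := hsmall B hB
          push_cast at hA
          linarith)
        exact ⟨C, a1, a2, fun _ => a3⟩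
      · exact ⟨∅, by simp; positivity, by simp, fun h => absurd h hB⟩
    choose Fm f1 f2 f3 using hC
    refine ⟨C0 ∪ C1.biUnion Fm, ?_, ?_, ?_⟩
    · have a1 : ((C0 ∪ C1.biUnion Fm).card : ℝ) ≤ C0.card + ((C1.biUnion Fm).card : ℝ) := by
        exact_mod_cast Finset.card_union_le _ _
      have a2 : ((C1.biUnion Fm).card : ℝ) ≤ ∑ B ∈ C1, ((Fm B).card : ℝ) := by
        exact_mod_cast Finset.card_biUnion_le
      have a3 : ∑ B ∈ C1, ((Fm B).card : ℝ) ≤ C1.card * (N0 * (1 + N1) ^ R) := by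
        calc _ ≤ ∑ B ∈ C1, (N0 * (1 + N1) ^ R) := Finset.sum_le_sum (fun B _ => f1 B)
          _ = _ := by simp
      have a4 : (1:ℝ) ≤ (1 + N1) ^ R := one_le_pow₀ (by linarith)
      have a5 : (C1.card : ℝ) * (N0 * (1 + N1) ^ R) ≤ N1 * (N0 * (1 + N1) ^ R) :=
        mul_le_mul_of_nonneg_right h1 (by positivity)
      have a6 : N0 * (1 + N1) ^ (R + 1) = N0 * (1 + N1) ^ R + N1 * (N0 * (1 + N1) ^ R) := by ring
      nlinarith
    · intro c hc
      rw [Finset.mem_union, Finset.mem_biUnion] at hc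
      rcases hc with hc | ⟨B, _, hc⟩
      · exact hgood c hc
      · exact f2 B c hc
    · intro I hI hInd
      rcases hcov I hI hInd with ⟨C, hC, hIC⟩ | ⟨B, hB, hIB⟩
      · exact ⟨C, Finset.mem_union_left _ hC, hIC⟩
      · obtain ⟨c, hc, hIc⟩ := f3 B hB I hIB hInd
        exact ⟨c, Finset.mem_union_right _ (Finset.mem_biUnion.2 ⟨B, hB, hc⟩), hIc⟩
end hyp

set_option linter.unusedSectionVars false
section hyp2
variable {W α : Type} [Fintype W] [DecidableEq W] [DecidableEq α]

/-- Pruning edges with many bad partners bounds codegrees. -/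
lemma aux_prune (E : Finset α) (f : α → Finset W) (w x : ℝ) (hw : 1 ≤ w)
    (hbad : (((E ×ˢ E).filter (fun p => p.1 ≠ p.2 ∧ 2 ≤ (f p.1 ∩ f p.2).card)).card : ℝ) ≤ x * (w / 2)) :
    ∃ E' ⊆ E, ((E \ E').card : ℝ) ≤ x ∧
      ∀ u v : W, u ≠ v → ((E'.filter (fun e => u ∈ f e ∧ v ∈ f e)).card : ℝ) ≤ w := by
  set part : α → Finset α := fun e => E.filter (fun e' => e ≠ e' ∧ 2 ≤ (f e ∩ f e').card) with hpart
  have hsum : ∑ e ∈ E, ((part e).card : ℝ) =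
      (((E ×ˢ E).filter (fun p => p.1 ≠ p.2 ∧ 2 ≤ (f p.1 ∩ f p.2).card)).card : ℝ) := by
    rw [Finset.card_filter, Finset.sum_product]
    push_cast
    apply Finset.sum_congr rfl
    intro e _
    simp [hpart]
  refine ⟨E.filter (fun e => ((part e).card : ℝ) ≤ w / 2), Finset.filter_subset _ _, ?_, ?_⟩
  · set B := E \ E.filter (fun e => ((part e).card : ℝ) ≤ w / 2) with hB
    have hBm : ∀ e ∈ B, w / 2 ≤ ((part e).card : ℝ) := by
      intro e he
      simp only [hB, Finset.mem_sdiff, Finset.mem_filter, not_and, not_le] at he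
      exact (he.2 he.1).le
    have h1 : (B.card : ℝ) * (w / 2) ≤ x * (w / 2) := by
      calc (B.card : ℝ) * (w / 2) = ∑ e ∈ B, (w / 2) := by rw [Finset.sum_const, nsmul_eq_mul]
        _ ≤ ∑ e ∈ B, ((part e).card : ℝ) := Finset.sum_le_sum hBm
        _ ≤ ∑ e ∈ E, ((part e).card : ℝ) :=
          Finset.sum_le_sum_of_subset_of_nonneg Finset.sdiff_subset (by intros; positivity)
        _ ≤ _ := by rw [hsum]; exact hbad
    exact le_of_mul_le_mul_right h1 (by positivity)
  · intro u v huv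
    set Q := (E.filter (fun e => ((part e).card : ℝ) ≤ w / 2)).filter (fun e => u ∈ f e ∧ v ∈ f e) with hQ
    rcases Q.eq_empty_or_nonempty with h0 | ⟨e, he⟩
    · rw [h0]; simp; linarith
    · have he' := he
      simp only [hQ, Finset.mem_filter] at he'
      have hsub : Q.erase e ⊆ part e := by
        intro e' hee'
        have h1 := Finset.ne_of_mem_erase hee'
        have h2 := Finset.mem_of_mem_erase hee'
        simp only [hQ, Finset.mem_filter] at h2
        simp only [hpart, Finset.mem_filter]
        refine ⟨h2.1.1, h1.symm, ?_⟩
        have : ({u, v} : Finset W) ⊆ f e ∩ f e' := by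
          intro a ha
          simp only [Finset.mem_insert, Finset.mem_singleton] at ha
          rw [Finset.mem_inter]
          rcases ha with rfl | rfl
          · exact ⟨he'.2.1, h2.2.1⟩
          · exact ⟨he'.2.2, h2.2.2⟩
        calc 2 = ({u, v} : Finset W).card := (Finset.card_pair huv).symm
          _ ≤ _ := Finset.card_le_card this
      have h3 := Finset.card_le_card hsub
      rw [Finset.card_erase_of_mem he] at h3
      have h4 : (Q.card : ℝ) - 1 ≤ w / 2 := by
        have : (Q.card : ℝ) - 1 ≤ ((part e).card : ℝ) := by
          have : Q.card ≤ (part e).card + 1 := by omega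
          have : (Q.card : ℝ) ≤ (part e).card + 1 := by exact_mod_cast this
          linarith
        linarith [he'.1.2]
      by_cases h5 : Q.card ≤ 1
      · have : (Q.card : ℝ) ≤ 1 := by exact_mod_cast h5
        linarith
      · have : (2:ℝ) ≤ Q.card := by exact_mod_cast (by omega : 2 ≤ Q.card)
        linarith

/-- One round of the container algorithm. -/
lemma aux_round (E : Finset α) (f : α → Finset W) (s : ℕ) (hcard : ∀ e ∈ E, (f e).card = s + 1)
    (Δ z κ y t θ x b N0 N1 N2 : ℝ) (n0 : ℕ)
    (hΔ0 : 0 ≤ Δ) (hy : 0 < y) (hκ : 0 < κ) (hzκ : z ≤ κ) (hθ : 0 ≤ θ) (hm : 0 < Fintype.card W)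
    (hN2 : 0 ≤ N2)
    (hΔ : ∀ v : W, ((E.filter (fun e => v ∈ f e)).card : ℝ) ≤ Δ)
    (hz : ∀ u v : W, u ≠ v → ((E.filter (fun e => u ∈ f e ∧ v ∈ f e)).card : ℝ) ≤ z)
    (hcount0 : (((Finset.univ : Finset (Finset W)).filter (fun T => (T.card : ℝ) ≤ t)).card : ℝ) ≤ N0)
    (hcount1 : (((Finset.univ : Finset (Finset W)).filter (fun T => T.card ≤ n0)).card : ℝ) ≤ N1)
    (hIH : ∀ (EH : Finset α) (g : α → W), EH ⊆ E → (∀ e ∈ EH, g e ∈ f e) →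
      ∃ 𝒟 : Finset (Finset W), (𝒟.card : ℝ) ≤ N2 ∧
        (∀ C ∈ 𝒟, ((EH.filter (fun e => (f e).erase (g e) ⊆ C)).card : ℝ) ≤ x) ∧
        ∀ I : Finset W, (∀ e ∈ EH, ¬ (f e).erase (g e) ⊆ I) → ∃ C ∈ 𝒟, I ⊆ C)
    (hJ : y * Fintype.card W + (s + 1) * Δ * (n0 + s * (n0 * Δ) / κ) ≤ t * θ)
    (hb : b * (2 * κ) ≤ n0 * y - x) (A : Finset W) :
    ∃ C0 C1 : Finset (Finset W), (C0.card : ℝ) ≤ N0 ∧ (C1.card : ℝ) ≤ N1 * N2 ∧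
      (∀ C ∈ C0, ((E.filter (fun e => f e ⊆ C)).card : ℝ) ≤ t * Δ + Fintype.card W * θ) ∧
      (∀ C ∈ C1, (C.card : ℝ) ≤ A.card - b) ∧
      ∀ I, I ⊆ A → (∀ e ∈ E, ¬ f e ⊆ I) → (∃ C ∈ C0, I ⊆ C) ∨ (∃ C ∈ C1, I ⊆ C) := by
  set EA := E.filter (fun e => f e ⊆ A) with hEA
  have hEAE : EA ⊆ E := Finset.filter_subset _ _
  have hEAsub : ∀ e ∈ EA, f e ⊆ A := fun e he => (Finset.mem_filter.1 he).2
  set dA : W → ℝ := fun v => ((EA.filter (fun e => v ∈ f e)).card : ℝ) with hdA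
  have hΔA : ∀ v, dA v ≤ Δ := fun v => le_trans (by
    simp only [hdA]
    exact_mod_cast Finset.card_le_card (Finset.filter_subset_filter _ hEAE)) (hΔ v)
  set L := A.filter (fun v => θ ≤ dA v) with hL
  -- the property of a fingerprint
  let fp : Finset W → Prop := fun T => ∃ (EH : Finset α) (g : α → W), EH ⊆ EA ∧
      (∀ e ∈ EH, g e ∈ T ∧ g e ∈ f e) ∧
      (∀ u : W, ((EH.filter (fun e => u ∈ (f e).erase (g e))).card : ℝ) ≤ 2 * κ) ∧
      n0 * y ≤ EH.card
  have hT : ∀ T : Finset W, ∃ 𝒟 : Finset (Finset W), (𝒟.card : ℝ) ≤ N2 ∧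
      (∀ C ∈ 𝒟, (C.card : ℝ) ≤ A.card - b) ∧
      (fp T → ∀ I, I ⊆ A → T ⊆ I → (∀ e ∈ E, ¬ f e ⊆ I) → ∃ C ∈ 𝒟, I ⊆ C) := by
    intro T
    by_cases hfp : fp T
    · obtain ⟨EH, g, hEH, hg, hdeg, hne⟩ := hfp
      obtain ⟨𝒟, d1, d2, d3⟩ := hIH EH g (hEH.trans hEAE) (fun e he => (hg e he).2)
      refine ⟨𝒟.image (fun C => A ∩ C), ?_, ?_, ?_⟩
      · exact le_trans (by exact_mod_cast Finset.card_image_le) d1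
      · intro C hC
        obtain ⟨C', hC', rfl⟩ := Finset.mem_image.1 hC
        have h1 := d2 C' hC'
        have h2 := aux_touch EH (fun e => (f e).erase (g e)) (2 * κ) (A \ C') (fun v _ => hdeg v)
        have h3 : EH ⊆ EH.filter (fun e => (f e).erase (g e) ⊆ C') ∪
            EH.filter (fun e => ∃ v ∈ A \ C', v ∈ (f e).erase (g e)) := by
          intro e he
          by_cases hs : (f e).erase (g e) ⊆ C'
          · exact Finset.mem_union_left _ (Finset.mem_filter.2 ⟨he, hs⟩)
          · obtain ⟨v, hv, hvC⟩ := Finset.not_subset.1 hs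
            refine Finset.mem_union_right _ (Finset.mem_filter.2 ⟨he, v, ?_, hv⟩)
            exact Finset.mem_sdiff.2 ⟨hEAsub e (hEH he) (Finset.mem_of_mem_erase hv), hvC⟩
        have h4 : (EH.card : ℝ) ≤ ((EH.filter (fun e => (f e).erase (g e) ⊆ C')).card : ℝ) +
            ((EH.filter (fun e => ∃ v ∈ A \ C', v ∈ (f e).erase (g e))).card : ℝ) := by
          exact_mod_cast (Finset.card_le_card h3).trans (Finset.card_union_le _ _)
        have h5 : b * (2 * κ) ≤ ((A \ C').card : ℝ) * (2 * κ) := by linarith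
        have h6 : b ≤ ((A \ C').card : ℝ) := le_of_mul_le_mul_right h5 (by positivity)
        have h7 : ((A \ C').card : ℝ) + ((A ∩ C').card : ℝ) = A.card := by
          exact_mod_cast Finset.card_sdiff_add_card_inter A C'
        linarith
      · intro _ I hIA hTI hInd
        obtain ⟨C, hC, hIC⟩ := d3 I (by
          intro e he hsub
          apply hInd e (hEAE (hEH he))
          rw [← Finset.insert_erase (hg e he).2]
          exact Finset.insert_subset (hTI (hg e he).1) hsub)
        exact ⟨A ∩ C, Finset.mem_image_of_mem _ hC, Finset.subset_inter hIA hIC⟩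
    · exact ⟨∅, by simpa using hN2, by simp, fun h => absurd h hfp⟩
  choose 𝒟 d1 d2 d3 using hT
  refine ⟨((Finset.univ : Finset (Finset W)).filter (fun T => (T.card : ℝ) ≤ t)).image
      (fun T => (A \ L) ∪ T),
    ((Finset.univ : Finset (Finset W)).filter (fun T => T.card ≤ n0)).biUnion 𝒟, ?_, ?_, ?_, ?_, ?_⟩
  · exact le_trans (by exact_mod_cast Finset.card_image_le) hcount0
  · set S1 := (Finset.univ : Finset (Finset W)).filter (fun T => T.card ≤ n0) with hS1
    calc ((S1.biUnion 𝒟).card : ℝ) ≤ ∑ T ∈ S1, ((𝒟 T).card : ℝ) := by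
          exact_mod_cast Finset.card_biUnion_le
      _ ≤ ∑ T ∈ S1, N2 := Finset.sum_le_sum (fun T _ => d1 T)
      _ = S1.card * N2 := by rw [Finset.sum_const, nsmul_eq_mul]
      _ ≤ N1 * N2 := mul_le_mul_of_nonneg_right hcount1 hN2
  · intro C hC
    obtain ⟨T, hTm, rfl⟩ := Finset.mem_image.1 hC
    have hTt : (T.card : ℝ) ≤ t := (Finset.mem_filter.1 hTm).2
    have h1 := aux_touch E f Δ T (fun v _ => hΔ v)
    have h2 := aux_touch EA f θ (A \ L) (by
      intro v hv
      rw [Finset.mem_sdiff, hL, Finset.mem_filter] at hv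
      by_contra hcon
      push Not at hcon
      exact hv.2 ⟨hv.1, hcon.le⟩)
    have h3 : E.filter (fun e => f e ⊆ A \ L ∪ T) ⊆ E.filter (fun e => ∃ v ∈ T, v ∈ f e) ∪
        EA.filter (fun e => ∃ v ∈ A \ L, v ∈ f e) := by
      intro e he
      rw [Finset.mem_filter] at he
      by_cases hs : ∃ v ∈ T, v ∈ f e
      · exact Finset.mem_union_left _ (Finset.mem_filter.2 ⟨he.1, hs⟩)
      · have hsub : f e ⊆ A \ L := by
          intro v hv
          rcases Finset.mem_union.1 (he.2 hv) with h | h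
          · exact h
          · exact absurd ⟨v, h, hv⟩ hs
        have hne : (f e).Nonempty := by
          rw [← Finset.card_pos, hcard e he.1]; omega
        obtain ⟨v, hv⟩ := hne
        refine Finset.mem_union_right _ (Finset.mem_filter.2 ⟨?_, v, hsub hv, hv⟩)
        exact Finset.mem_filter.2 ⟨he.1, hsub.trans Finset.sdiff_subset⟩
    have h4 : ((E.filter (fun e => f e ⊆ A \ L ∪ T)).card : ℝ) ≤
        ((E.filter (fun e => ∃ v ∈ T, v ∈ f e)).card : ℝ) +
        ((EA.filter (fun e => ∃ v ∈ A \ L, v ∈ f e)).card : ℝ) := by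
      exact_mod_cast (Finset.card_le_card h3).trans (Finset.card_union_le _ _)
    have h5 : ((A \ L).card : ℝ) ≤ Fintype.card W := by exact_mod_cast Finset.card_le_univ _
    have h6 := mul_le_mul_of_nonneg_right h5 hθ
    have h7 := mul_le_mul_of_nonneg_right hTt hΔ0
    linarith
  · intro C hC
    obtain ⟨T, _, hC⟩ := Finset.mem_biUnion.1 hC
    exact d2 T C hC
  · intro I hIA hInd
    by_cases hc : ((I ∩ L).card : ℝ) ≤ t
    · left
      refine ⟨_, Finset.mem_image.2 ⟨I ∩ L, Finset.mem_filter.2 ⟨Finset.mem_univ _, hc⟩, rfl⟩, ?_⟩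
      intro v hv
      by_cases hvL : v ∈ L
      · exact Finset.mem_union_right _ (Finset.mem_inter.2 ⟨hv, hvL⟩)
      · exact Finset.mem_union_left _ (Finset.mem_sdiff.2 ⟨hIA hv, hvL⟩)
    · right
      push Not at hc
      obtain ⟨T, EH, g, hTJ, hTc, hEH, hg, hdeg, hne⟩ := aux_greedy EA f s
        (fun e he => hcard e (hEAE he)) Δ z κ y hΔ0 hy hκ hzκ hm hΔA
        (fun u v huv => le_trans (by
          exact_mod_cast Finset.card_le_card (Finset.filter_subset_filter _ hEAE)) (hz u v huv))
        (I ∩ L) n0 (by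
          refine hJ.trans ?_
          calc t * θ ≤ (I ∩ L).card * θ := mul_le_mul_of_nonneg_right hc.le hθ
            _ = ∑ v ∈ I ∩ L, θ := by rw [Finset.sum_const, nsmul_eq_mul]
            _ ≤ _ := Finset.sum_le_sum (fun v hv =>
              (Finset.mem_filter.1 (Finset.mem_inter.1 hv).2).2))
      obtain ⟨C, hC, hIC⟩ := d3 T ⟨EH, g, hEH, hg, hdeg, hne⟩ I hIA
        (hTJ.trans Finset.inter_subset_left) hInd
      exact ⟨C, Finset.mem_biUnion.2 ⟨T, Finset.mem_filter.2 ⟨Finset.mem_univ _, hTc⟩, hC⟩, hIC⟩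
end hyp2

/-- Container statement for `s`-uniform hypergraphs of bounded degree. -/
def AuxCont (s : ℕ) : Prop :=
  ∀ K ε δ : ℝ, 0 < K → 0 < ε → 0 < δ → ∃ D0 γ : ℝ, 0 < D0 ∧ 0 < γ ∧
    ∀ (W α : Type) [Fintype W] [DecidableEq W] [DecidableEq α] (E : Finset α) (f : α → Finset W)
      (D : ℝ), D0 ≤ D → D0 ≤ (Fintype.card W : ℝ) → (∀ e ∈ E, (f e).card = s) →
      (∀ v : W, ((E.filter (fun e => v ∈ f e)).card : ℝ) ≤ K * D) →
      (((E ×ˢ E).filter (fun p => p.1 ≠ p.2 ∧ 2 ≤ (f p.1 ∩ f p.2).card)).card : ℝ) ≤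
        γ * D ^ 2 * Fintype.card W →
      ∃ 𝒞 : Finset (Finset W), (𝒞.card : ℝ) ≤ Real.exp (δ * Fintype.card W) ∧
        (∀ C ∈ 𝒞, ((E.filter (fun e => f e ⊆ C)).card : ℝ) ≤ ε * D * Fintype.card W) ∧
        ∀ I : Finset W, (∀ e ∈ E, ¬ f e ⊆ I) → ∃ C ∈ 𝒞, I ⊆ C

lemma auxCont_zero : AuxCont 0 := by
  intro K ε δ hK hε hδ
  refine ⟨1, 1, one_pos, one_pos, ?_⟩
  intro W α _ _ _ E f D hD hW hcard hdeg hbad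
  rcases E.eq_empty_or_nonempty with rfl | ⟨e, he⟩
  · refine ⟨{Finset.univ}, ?_, ?_, ?_⟩
    · simp; positivity
    · intro C _; simp; positivity
    · intro I _; exact ⟨_, Finset.mem_singleton_self _, Finset.subset_univ _⟩
  · refine ⟨∅, by simp; positivity, by simp, ?_⟩
    intro I hI
    exfalso
    apply hI e he
    rw [Finset.card_eq_zero.1 (hcard e he)]
    exact Finset.empty_subset _

set_option maxHeartbeats 2000000 in
lemma auxCont_succ (s : ℕ) (ih : AuxCont s) : AuxCont (s + 1) := by
  intro K ε δ hK hε hδ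
  obtain ⟨q0, hq0, hcnt0⟩ := aux_card_small (δ / 2) (by positivity)
  set t0 : ℝ := min q0 (ε / (4 * K)) with ht0
  have ht0p : 0 < t0 := lt_min hq0 (by positivity)
  have ht0q : t0 ≤ q0 := min_le_left _ _
  have ht0K : t0 * K ≤ ε / 4 := by
    have : t0 ≤ ε / (4 * K) := min_le_right _ _
    rw [le_div_iff₀ (by positivity)] at this
    linarith
  set η : ℝ := t0 * ε / 8 with hη
  have hηp : 0 < η := by positivity
  set c : ℝ := 4 * (s + 1) ^ 2 * K ^ 2 / η with hc
  have hcp : 0 < c := by positivity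
  have hcη : c * η = 4 * (s + 1) ^ 2 * K ^ 2 := by rw [hc]; field_simp
  set β : ℝ := η / (4 * c) with hβ
  have hβp : 0 < β := by positivity
  have hβc : β * c = η / 4 := by rw [hβ]; field_simp
  set R : ℕ := ⌊1 / β⌋₊ + 1 with hR
  have hRp : (0:ℝ) < R := by rw [hR]; positivity
  have hRβ : 1 < R * β := by
    have := Nat.lt_floor_add_one (1 / β)
    rw [div_lt_iff₀ hβp] at this
    rw [hR]; push_cast; exact this
  set δ' : ℝ := δ / (8 * R) with hδ'
  have hδ'p : 0 < δ' := by positivity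
  have hδ'R : δ' * R = δ / 8 := by rw [hδ']; field_simp
  obtain ⟨q1, hq1, hcnt1⟩ := aux_card_small δ' hδ'p
  set q : ℝ := min (q1 / 2) (η / (4 * (s + 1) * K)) with hq
  have hqp : 0 < q := lt_min (by positivity) (by positivity)
  have hqq1 : 2 * q ≤ q1 := by
    have : q ≤ q1 / 2 := min_le_left _ _
    linarith
  have hqη : q * (4 * (s + 1) * K) ≤ η := by
    have : q ≤ η / (4 * (s + 1) * K) := min_le_right _ _
    rwa [le_div_iff₀ (by positivity)] at this
  obtain ⟨D1, γ1, hD1, hγ1, hIH⟩ := ih K (q * η / 2) δ' hK (by positivity) hδ'p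
  set ζ : ℝ := c * q with hζ
  have hζp : 0 < ζ := by positivity
  set γ : ℝ := min γ1 (ε * ζ / 8) with hγ
  refine ⟨max (max D1 (1 / ζ)) (max (1 / q) (1 / (2 * δ'))), γ, by positivity,
    lt_min hγ1 (by positivity), ?_⟩
  intro W α _ _ _ E f D hD hW hcard hdeg hbad
  simp only [max_le_iff] at hD hW
  obtain ⟨⟨hDD1, hDζ⟩, hDq, hDδ⟩ := hD
  obtain ⟨⟨hWD1, hWζ⟩, hWq, hWδ⟩ := hW
  set m : ℝ := (Fintype.card W : ℝ) with hm
  have hDp : 0 < D := lt_of_lt_of_le hD1 hDD1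
  have hmp : 0 < m := lt_of_lt_of_le hD1 hWD1
  have hmp' : 0 < Fintype.card W := Nat.cast_pos.1 hmp
  have hζD : 1 ≤ ζ * D := by
    rw [div_le_iff₀ hζp] at hDζ; linarith
  have hqm : 1 ≤ q * m := by
    rw [div_le_iff₀ hqp] at hWq; linarith
  have hδm : 1 ≤ 2 * δ' * m := by
    rw [div_le_iff₀ (by positivity)] at hWδ; linarith
  obtain ⟨E', hE'E, hpr, hcod⟩ := aux_prune E f (ζ * D) (ε / 4 * D * m) hζD (by
    refine hbad.trans ?_
    have : γ ≤ ε * ζ / 8 := min_le_right _ _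
    calc γ * D ^ 2 * m ≤ (ε * ζ / 8) * D ^ 2 * m := by gcongr
      _ = _ := by ring)
  set n0 : ℕ := ⌈q * m⌉₊ with hn0
  have hn0l : q * m ≤ n0 := Nat.le_ceil _
  have hn0u : (n0 : ℝ) ≤ 2 * q * m := by
    have := Nat.ceil_lt_add_one (a := q * m) (by positivity)
    linarith
  have hdeg' : ∀ v : W, ((E'.filter (fun e => v ∈ f e)).card : ℝ) ≤ K * D := fun v =>
    le_trans (by exact_mod_cast Finset.card_le_card (Finset.filter_subset_filter _ hE'E)) (hdeg v)
  have hround := aux_round E' f s (fun e he => hcard e (hE'E he)) (K * D) (ζ * D) (ζ * D) (η * D)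
    (t0 * m) (ε / 4 * D) (q * η / 2 * D * m) (β * m) (Real.exp (δ / 2 * m)) (Real.exp (δ' * m))
    (Real.exp (δ' * m)) n0 (by positivity) (by positivity) (by positivity) le_rfl (by positivity) hmp'
    (by positivity) hdeg' hcod
    (by
      refine le_trans ?_ (hcnt0 W)
      norm_cast
      apply Finset.card_le_card
      apply Finset.monotone_filter_right
      intro T _ hT
      exact le_trans hT (mul_le_mul_of_nonneg_right ht0q hmp.le))
    (by
      refine le_trans ?_ (hcnt1 W)
      norm_cast
      apply Finset.card_le_card
      apply Finset.monotone_filter_right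
      intro T _ hT
      have h1 : (T.card : ℝ) ≤ n0 := by exact_mod_cast hT
      have h2 := mul_le_mul_of_nonneg_right hqq1 hmp.le
      show (T.card : ℝ) ≤ q1 * m
      linarith)
    (by
      intro EH g hEH hg
      refine hIH W α EH (fun e => (f e).erase (g e)) D hDD1 hWD1 ?_ ?_ ?_
      · intro e he
        rw [Finset.card_erase_of_mem (hg e he), hcard e (hE'E (hEH he))]; simp
      · intro v
        refine le_trans ?_ (hdeg' v)
        norm_cast
        apply Finset.card_le_card
        intro e he
        rw [Finset.mem_filter] at he ⊢
        exact ⟨hEH he.1, Finset.mem_of_mem_erase he.2⟩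
      · have h1 : γ * D ^ 2 * m ≤ γ1 * D ^ 2 * m := by
          have : γ ≤ γ1 := min_le_left _ _
          gcongr
        refine le_trans ?_ (hbad.trans h1)
        norm_cast
        apply Finset.card_le_card
        intro p hp
        rw [Finset.mem_filter, Finset.mem_product] at hp ⊢
        refine ⟨⟨hE'E (hEH hp.1.1), hE'E (hEH hp.1.2)⟩, hp.2.1, hp.2.2.trans ?_⟩
        exact Finset.card_le_card (Finset.inter_subset_inter (Finset.erase_subset _ _)
          (Finset.erase_subset _ _)))
    (by
      have hs0 : (0:ℝ) ≤ s := by positivity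
      have e1 : (s:ℝ) * (n0 * (K * D)) / (ζ * D) ≤ s * (2 * K * m) / c := by
        calc (s:ℝ) * (n0 * (K * D)) / (ζ * D) ≤ (s:ℝ) * ((2 * q * m) * (K * D)) / (ζ * D) := by gcongr
          _ = _ := by rw [hζ]; field_simp
      have e2 : (s + 1) * (K * D) * ((n0:ℝ) + s * (n0 * (K * D)) / (ζ * D)) ≤
          (s + 1) * (K * D) * (2 * q * m + s * (2 * K * m) / c) := by gcongr
      have e3 : (s + 1) * (K * D) * (2 * q * m) ≤ η / 2 * D * m := by
        calc (s + 1) * (K * D) * (2 * q * m) = (q * (4 * (s + 1) * K)) / 2 * D * m := by ring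
          _ ≤ _ := by gcongr
      have e4 : (s + 1) * (K * D) * (s * (2 * K * m) / c) ≤ η / 2 * D * m := by
        rw [← mul_div_assoc, div_le_iff₀ hcp]
        have : η / 2 * D * m * c = (c * η) / 2 * D * m := by ring
        rw [this, hcη]
        have e5 : (s:ℝ) * (s + 1) ≤ (s + 1) ^ 2 := by
          rw [sq]; gcongr; simp
        calc (s + 1) * (K * D) * (s * (2 * K * m)) = ((s:ℝ) * (s + 1)) * (2 * K ^ 2 * D * m) := by ring
          _ ≤ (s + 1) ^ 2 * (2 * K ^ 2 * D * m) := by gcongr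
          _ = _ := by ring
      have e6 : t0 * m * (ε / 4 * D) = 2 * (η * D * m) := by rw [hη]; ring
      rw [e6]
      rw [mul_add] at e2
      have e7 : (s + 1) * (K * D) * ((n0:ℝ) + s * (n0 * (K * D)) / (ζ * D)) ≤ η * D * m := by
        linarith
      show η * D * m + _ ≤ _
      linarith)
    (by
      have e1 : β * m * (2 * (ζ * D)) = (β * c) * (2 * q * D * m) := by rw [hζ]; ring
      rw [e1, hβc]
      have e2 : q * m * (η * D) ≤ n0 * (η * D) := by gcongr
      linarith)
  obtain ⟨𝒞, hc1, hc2, hc3⟩ := aux_rounds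
    (fun C => ((E'.filter (fun e => f e ⊆ C)).card : ℝ) ≤ t0 * m * (K * D) + m * (ε / 4 * D))
    (fun I => ∀ e ∈ E', ¬ f e ⊆ I) (Real.exp (δ / 2 * m)) (Real.exp (δ' * m) * Real.exp (δ' * m))
    (β * m) (by positivity) (by positivity) hround R Finset.univ (by
      rw [Finset.card_univ]
      show m < _
      nlinarith)
  refine ⟨𝒞, hc1.trans ?_, ?_, ?_⟩
  · rw [← Real.exp_add]
    have e1 : 1 + Real.exp (δ' * m + δ' * m) ≤ Real.exp (4 * δ' * m) := by
      have : (2:ℝ) ≤ Real.exp (δ' * m + δ' * m) := by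
        have := Real.add_one_le_exp (δ' * m + δ' * m)
        linarith
      have e2 : Real.exp (4 * δ' * m) = Real.exp (δ' * m + δ' * m) * Real.exp (δ' * m + δ' * m) := by
        rw [← Real.exp_add]; congr 1; ring
      rw [e2]; nlinarith
    calc Real.exp (δ / 2 * m) * (1 + Real.exp (δ' * m + δ' * m)) ^ R
        ≤ Real.exp (δ / 2 * m) * (Real.exp (4 * δ' * m)) ^ R := by gcongr
      _ = Real.exp (δ / 2 * m + R * (4 * δ' * m)) := by rw [Real.exp_add, Real.exp_nat_mul]
      _ = Real.exp (δ * m) := by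
        congr 1
        have : R * (4 * δ' * m) = 4 * (δ' * R) * m := by ring
        rw [this, hδ'R]; ring
  · intro C hC
    have h1 := hc2 C hC
    have h2 : E.filter (fun e => f e ⊆ C) ⊆ E'.filter (fun e => f e ⊆ C) ∪ (E \ E') := by
      intro e he
      rw [Finset.mem_filter] at he
      by_cases h : e ∈ E'
      · exact Finset.mem_union_left _ (Finset.mem_filter.2 ⟨h, he.2⟩)
      · exact Finset.mem_union_right _ (Finset.mem_sdiff.2 ⟨he.1, h⟩)
    have h3 : ((E.filter (fun e => f e ⊆ C)).card : ℝ) ≤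
        ((E'.filter (fun e => f e ⊆ C)).card : ℝ) + ((E \ E').card : ℝ) := by
      exact_mod_cast (Finset.card_le_card h2).trans (Finset.card_union_le _ _)
    have h4 : t0 * m * (K * D) ≤ ε / 4 * D * m := by
      calc t0 * m * (K * D) = (t0 * K) * (D * m) := by ring
        _ ≤ ε / 4 * (D * m) := by gcongr
        _ = _ := by ring
    have h5 : 0 < ε * D * m := by positivity
    linarith
  · intro I hI
    exact hc3 I (Finset.subset_univ _) (fun e he => hI e (hE'E he))

lemma auxCont_all (s : ℕ) : AuxCont s := by
  induction s with
  | zero => exact auxCont_zero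
  | succ s ih => exact auxCont_succ s ih

set_option linter.unusedSectionVars false
/-- Containers for uniform hypergraphs with few bad pairs, without a degree condition. -/
lemma aux_containers (r : ℕ) (ε δ : ℝ) (hε : 0 < ε) (hδ : 0 < δ) : ∃ D0 γ : ℝ, 0 < D0 ∧ 0 < γ ∧
    ∀ (W α : Type) [Fintype W] [DecidableEq W] [DecidableEq α] (E : Finset α) (f : α → Finset W)
      (D : ℝ), D0 ≤ D → D0 ≤ (Fintype.card W : ℝ) → (E.card : ℝ) = D * Fintype.card W →
      (∀ e ∈ E, (f e).card = r) →
      (((E ×ˢ E).filter (fun p => p.1 ≠ p.2 ∧ 2 ≤ (f p.1 ∩ f p.2).card)).card : ℝ) ≤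
        γ * D ^ 2 * Fintype.card W →
      ∃ 𝒞 : Finset (Finset W), (𝒞.card : ℝ) ≤ Real.exp (δ * Fintype.card W) ∧
        (∀ C ∈ 𝒞, ((E.filter (fun e => f e ⊆ C)).card : ℝ) ≤ ε * E.card) ∧
        ∀ I : Finset W, (∀ e ∈ E, ¬ f e ⊆ I) → ∃ C ∈ 𝒞, I ⊆ C := by
  set K : ℝ := 2 * (r + 1) / δ with hK
  have hKp : 0 < K := by positivity
  have hKδ : K * (δ / 2) = r + 1 := by rw [hK]; field_simp
  set ε' : ℝ := ε / (r + 1) with hε'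
  have hε'p : 0 < ε' := by positivity
  set δ' : ℝ := δ / (2 * (r + 1)) with hδ'
  have hδ'p : 0 < δ' := by positivity
  have hall : ∀ s : ℕ, ∃ D0 γ : ℝ, 0 < D0 ∧ 0 < γ ∧
    ∀ (W α : Type) [Fintype W] [DecidableEq W] [DecidableEq α] (E : Finset α) (f : α → Finset W)
      (D : ℝ), D0 ≤ D → D0 ≤ (Fintype.card W : ℝ) → (∀ e ∈ E, (f e).card = s) →
      (∀ v : W, ((E.filter (fun e => v ∈ f e)).card : ℝ) ≤ K * D) →
      (((E ×ˢ E).filter (fun p => p.1 ≠ p.2 ∧ 2 ≤ (f p.1 ∩ f p.2).card)).card : ℝ) ≤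
        γ * D ^ 2 * Fintype.card W →
      ∃ 𝒞 : Finset (Finset W), (𝒞.card : ℝ) ≤ Real.exp (δ' * Fintype.card W) ∧
        (∀ C ∈ 𝒞, ((E.filter (fun e => f e ⊆ C)).card : ℝ) ≤ ε' * D * Fintype.card W) ∧
        ∀ I : Finset W, (∀ e ∈ E, ¬ f e ⊆ I) → ∃ C ∈ 𝒞, I ⊆ C :=
    fun s => auxCont_all s K ε' δ' hKp hε'p hδ'p
  choose D0s γs hD0s hγs hcont using hall
  obtain ⟨D0, hD0⟩ := (Finset.image D0s (Finset.range (r + 1))).exists_le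
  obtain ⟨γ', hγ'⟩ := (Finset.image (fun s => (γs s)⁻¹) (Finset.range (r + 1))).exists_le
  have hD0' : ∀ s ≤ r, D0s s ≤ D0 := fun s hs => hD0 _ (Finset.mem_image_of_mem _ (by simp; omega))
  have hγ'' : ∀ s ≤ r, (γs s)⁻¹ ≤ γ' := fun s hs =>
    hγ' _ (Finset.mem_image.2 ⟨s, by simp; omega, rfl⟩)
  have hD0p : 0 < D0 := (hD0s 0).trans_le (hD0' 0 (Nat.zero_le _))
  have hγ'p : 0 < γ' := (inv_pos.2 (hγs 0)).trans_le (hγ'' 0 (Nat.zero_le _))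
  refine ⟨D0, γ'⁻¹, hD0p, inv_pos.2 hγ'p, ?_⟩
  intro W α _ _ _ E f D hD hW hED hcard hbad
  set m : ℝ := (Fintype.card W : ℝ) with hm
  have hDp : 0 < D := hD0p.trans_le hD
  have hmp : 0 < m := hD0p.trans_le hW
  set B : Finset W := Finset.univ.filter
    (fun v => K * D ≤ ((E.filter (fun e => v ∈ f e)).card : ℝ)) with hB
  have hBc : (B.card : ℝ) ≤ δ / 2 * m := by
    have h1 : (B.card : ℝ) * (K * D) ≤ r * (D * m) := by
      calc (B.card : ℝ) * (K * D) = ∑ v ∈ B, (K * D) := by rw [Finset.sum_const, nsmul_eq_mul]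
        _ ≤ ∑ v ∈ B, ((E.filter (fun e => v ∈ f e)).card : ℝ) :=
          Finset.sum_le_sum (fun v hv => (Finset.mem_filter.1 hv).2)
        _ ≤ ∑ v, ((E.filter (fun e => v ∈ f e)).card : ℝ) :=
          Finset.sum_le_sum_of_subset_of_nonneg (Finset.subset_univ _) (by intros; positivity)
        _ = ∑ e ∈ E, ((f e).card : ℝ) := aux_double_count E f
        _ = ∑ e ∈ E, (r : ℝ) := Finset.sum_congr rfl (fun e he => by rw [hcard e he])
        _ = r * (D * m) := by rw [Finset.sum_const, nsmul_eq_mul, hED]; ring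
    have h2 : (r:ℝ) * (D * m) ≤ (δ / 2 * m) * (K * D) := by
      calc (r:ℝ) * (D * m) ≤ (r + 1) * (D * m) := by gcongr; simp
        _ = (K * (δ / 2)) * (D * m) := by rw [hKδ]
        _ = _ := by ring
    exact le_of_mul_le_mul_right (h1.trans h2) (by positivity)
  -- the families
  have hfam : ∀ (S : Finset W) (s : Fin (r + 1)), ∃ 𝒞 : Finset (Finset W),
      (𝒞.card : ℝ) ≤ Real.exp (δ' * m) ∧
      (∀ C ∈ 𝒞, (((E.filter (fun e => f e ∩ B ⊆ S ∧ (f e \ B).card = s)).filter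
        (fun e => f e \ B ⊆ C)).card : ℝ) ≤ ε' * D * m) ∧
      ∀ I : Finset W, (∀ e ∈ E.filter (fun e => f e ∩ B ⊆ S ∧ (f e \ B).card = s),
        ¬ f e \ B ⊆ I) → ∃ C ∈ 𝒞, I ⊆ C := by
    intro S s
    have hs : (s : ℕ) ≤ r := by omega
    refine hcont s W α (E.filter (fun e => f e ∩ B ⊆ S ∧ (f e \ B).card = s)) (fun e => f e \ B) D
      ((hD0' s hs).trans hD) ((hD0' s hs).trans hW) ?_ ?_ ?_
    · intro e he
      exact (Finset.mem_filter.1 he).2.2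
    · intro v
      by_cases hv : v ∈ B
      · have : (E.filter (fun e => f e ∩ B ⊆ S ∧ (f e \ B).card = s)).filter
            (fun e => v ∈ f e \ B) = ∅ := by
          apply Finset.filter_false_of_mem
          intro e _ hve
          exact (Finset.mem_sdiff.1 hve).2 hv
        rw [this]; simp; positivity
      · have h1 : ((E.filter (fun e => v ∈ f e)).card : ℝ) ≤ K * D := by
          by_contra h; push Not at h
          exact hv (Finset.mem_filter.2 ⟨Finset.mem_univ _, h.le⟩)
        refine le_trans ?_ h1
        norm_cast
        apply Finset.card_le_card
        intro e he
        simp only [Finset.mem_filter, Finset.mem_sdiff] at he ⊢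
        exact ⟨he.1.1, he.2.1⟩
    · have h1 : γ'⁻¹ * D ^ 2 * m ≤ γs s * D ^ 2 * m := by
        have : γ'⁻¹ ≤ γs s := inv_le_of_inv_le₀ (hγs s) (hγ'' s hs)
        gcongr
      refine le_trans ?_ (hbad.trans h1)
      norm_cast
      apply Finset.card_le_card
      intro p hp
      rw [Finset.mem_filter, Finset.mem_product] at hp ⊢
      refine ⟨⟨Finset.mem_of_mem_filter _ hp.1.1, Finset.mem_of_mem_filter _ hp.1.2⟩, hp.2.1,
        hp.2.2.trans ?_⟩
      exact Finset.card_le_card (Finset.inter_subset_inter Finset.sdiff_subset Finset.sdiff_subset)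
  choose Fm f1 f2 f3 using hfam
  refine ⟨B.powerset.biUnion (fun S => (Fintype.piFinset (fun s => Fm S s)).image
    (fun G => (Finset.univ.filter (fun v => ∀ s, v ∈ G s) \ B) ∪ S)), ?_, ?_, ?_⟩
  · have hper : ∀ S, (((Fintype.piFinset (fun s => Fm S s)).image
        (fun G => (Finset.univ.filter (fun v => ∀ s, v ∈ G s) \ B) ∪ S)).card : ℝ) ≤
        Real.exp (δ / 2 * m) := by
      intro S
      calc (((Fintype.piFinset (fun s => Fm S s)).image
        (fun G => (Finset.univ.filter (fun v => ∀ s, v ∈ G s) \ B) ∪ S)).card : ℝ)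
          ≤ ((Fintype.piFinset (fun s => Fm S s)).card : ℝ) := by
            exact_mod_cast Finset.card_image_le
        _ = ∏ s, ((Fm S s).card : ℝ) := by rw [Fintype.card_piFinset]; push_cast; rfl
        _ ≤ ∏ s : Fin (r + 1), Real.exp (δ' * m) :=
          Finset.prod_le_prod (by intros; positivity) (fun s _ => f1 S s)
        _ = Real.exp (δ / 2 * m) := by
          rw [Finset.prod_const, Finset.card_univ, Fintype.card_fin, ← Real.exp_nat_mul]
          congr 1
          rw [hδ']; push_cast; field_simp
    have hpow : ((B.powerset).card : ℝ) ≤ Real.exp (δ / 2 * m) := by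
      rw [Finset.card_powerset]
      push_cast
      calc (2:ℝ) ^ B.card ≤ (Real.exp 1) ^ B.card := by
            gcongr
            have := Real.add_one_le_exp 1
            linarith
        _ = Real.exp (B.card * 1) := by rw [Real.exp_nat_mul]
        _ ≤ _ := Real.exp_le_exp.2 (by linarith)
    refine le_trans (Nat.cast_le.2 Finset.card_biUnion_le) ?_
    push_cast
    refine (Finset.sum_le_sum (fun S _ => hper S)).trans ?_
    rw [Finset.sum_const, nsmul_eq_mul]
    calc _ ≤ Real.exp (δ / 2 * m) * Real.exp (δ / 2 * m) := by gcongr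
      _ = _ := by rw [← Real.exp_add]; congr 1; ring
  · intro C hC
    obtain ⟨S, hS, hC⟩ := Finset.mem_biUnion.1 hC
    obtain ⟨G, hG, rfl⟩ := Finset.mem_image.1 hC
    rw [Finset.mem_powerset] at hS
    rw [Fintype.mem_piFinset] at hG
    have h1 : E.filter (fun e => f e ⊆ (Finset.univ.filter (fun v => ∀ s, v ∈ G s) \ B) ∪ S) ⊆
        (Finset.univ : Finset (Fin (r + 1))).biUnion (fun s =>
          (E.filter (fun e => f e ∩ B ⊆ S ∧ (f e \ B).card = s)).filter (fun e => f e \ B ⊆ G s)) := by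
      intro e he
      rw [Finset.mem_filter] at he
      have hle : (f e \ B).card ≤ r := by
        rw [← hcard e he.1]; exact Finset.card_le_card Finset.sdiff_subset
      refine Finset.mem_biUnion.2 ⟨⟨(f e \ B).card, by omega⟩, Finset.mem_univ _, ?_⟩
      rw [Finset.mem_filter, Finset.mem_filter]
      refine ⟨⟨he.1, ?_, rfl⟩, ?_⟩
      · intro v hv
        rw [Finset.mem_inter] at hv
        rcases Finset.mem_union.1 (he.2 hv.1) with h | h
        · exact absurd hv.2 (Finset.mem_sdiff.1 h).2
        · exact h
      · intro v hv
        rw [Finset.mem_sdiff] at hv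
        rcases Finset.mem_union.1 (he.2 hv.1) with h | h
        · exact (Finset.mem_filter.1 (Finset.mem_sdiff.1 h).1).2 _
        · exact absurd (hS h) hv.2
    refine le_trans (Nat.cast_le.2 ((Finset.card_le_card h1).trans Finset.card_biUnion_le)) ?_
    push_cast
    refine (Finset.sum_le_sum (fun s _ => f2 S s (G s) (hG s))).trans ?_
    rw [Finset.sum_const, nsmul_eq_mul, Finset.card_univ, Fintype.card_fin, hED]
    apply le_of_eq
    rw [hε']; push_cast; field_simp
  · intro I hI
    have : ∀ s : Fin (r + 1), ∃ C ∈ Fm (I ∩ B) s, I ⊆ C := by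
      intro s
      apply f3
      intro e he hsub
      rw [Finset.mem_filter] at he
      apply hI e he.1
      intro v hv
      by_cases hvB : v ∈ B
      · exact (Finset.mem_inter.1 (he.2.1 (Finset.mem_inter.2 ⟨hv, hvB⟩))).1
      · exact hsub (Finset.mem_sdiff.2 ⟨hv, hvB⟩)
    choose G hG hIG using this
    refine ⟨_, Finset.mem_biUnion.2 ⟨I ∩ B, Finset.mem_powerset.2 Finset.inter_subset_right,
      Finset.mem_image.2 ⟨G, Fintype.mem_piFinset.2 hG, rfl⟩⟩, ?_⟩
    intro v hv
    by_cases hvB : v ∈ B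
    · exact Finset.mem_union_right _ (Finset.mem_inter.2 ⟨hv, hvB⟩)
    · refine Finset.mem_union_left _ (Finset.mem_sdiff.2 ⟨Finset.mem_filter.2
        ⟨Finset.mem_univ _, fun s => hIG s hv⟩, hvB⟩)

/-- finite unions of intervals -/
def AuxFU (A : Set ℝ) : Prop := ∃ s : Finset (Set ℝ), (∀ J ∈ s, J.OrdConnected) ∧ A = ⋃₀ ↑s

lemma AuxFU.of_ord {J : Set ℝ} (h : J.OrdConnected) : AuxFU J := ⟨{J}, by simpa using h, by simp⟩

lemma AuxFU.empty : AuxFU ∅ := ⟨∅, by simp, by simp⟩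

lemma AuxFU.union {A B : Set ℝ} (hA : AuxFU A) (hB : AuxFU B) : AuxFU (A ∪ B) := by
  classical
  obtain ⟨s, hs, rfl⟩ := hA
  obtain ⟨t, ht, rfl⟩ := hB
  refine ⟨s ∪ t, ?_, ?_⟩
  · intro J hJ
    rcases Finset.mem_union.1 hJ with h | h
    · exact hs J h
    · exact ht J h
  · rw [Finset.coe_union, sUnion_union]

lemma AuxFU.inter {A B : Set ℝ} (hA : AuxFU A) (hB : AuxFU B) : AuxFU (A ∩ B) := by
  classical
  obtain ⟨s, hs, rfl⟩ := hA
  obtain ⟨t, ht, rfl⟩ := hB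
  refine ⟨(s ×ˢ t).image (fun p => p.1 ∩ p.2), ?_, ?_⟩
  · intro J hJ
    obtain ⟨p, hp, rfl⟩ := Finset.mem_image.1 hJ
    rw [Finset.mem_product] at hp
    exact (hs _ hp.1).inter (ht _ hp.2)
  · ext x
    simp only [mem_inter_iff, mem_sUnion, Finset.mem_coe, Finset.mem_image, Finset.mem_product]
    constructor
    · rintro ⟨⟨J, hJ, hx⟩, J', hJ', hx'⟩
      exact ⟨J ∩ J', ⟨(J, J'), ⟨hJ, hJ'⟩, rfl⟩, hx, hx'⟩
    · rintro ⟨_, ⟨p, ⟨h1, h2⟩, rfl⟩, hx, hx'⟩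
      exact ⟨⟨_, h1, hx⟩, _, h2, hx'⟩

lemma AuxFU.compl_ord {J : Set ℝ} (h : J.OrdConnected) : AuxFU Jᶜ := by
  have h1 : Jᶜ = {x | ∀ y ∈ J, x < y} ∪ {x | ∀ y ∈ J, y < x} := by
    ext x
    simp only [mem_compl_iff, mem_union, mem_ofPred_eq]
    constructor
    · intro hx
      by_contra hcon
      push Not at hcon
      obtain ⟨⟨y, hy, hyx⟩, z, hz, hxz⟩ := hcon
      exact hx (h.out hy hz ⟨hyx, hxz⟩)
    · rintro (hx | hx) hxJ
      · exact lt_irrefl _ (hx x hxJ)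
      · exact lt_irrefl _ (hx x hxJ)
  rw [h1]
  apply AuxFU.union
  · apply AuxFU.of_ord
    constructor
    intro a ha c hc x hx y hy
    exact lt_of_le_of_lt hx.2 (hc y hy)
  · apply AuxFU.of_ord
    constructor
    intro a ha c hc x hx y hy
    exact lt_of_lt_of_le (ha y hy) hx.1

lemma AuxFU.cell (𝒥 : Finset (Set ℝ)) (h : ∀ J ∈ 𝒥, J.OrdConnected) (t : Set ℝ → Prop) :
    AuxFU {x | ∀ J ∈ 𝒥, (x ∈ J ↔ t J)} := by
  classical
  induction 𝒥 using Finset.induction_on with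
  | empty => simpa using AuxFU.of_ord ordConnected_univ
  | insert J s hJ ih =>
    have h1 : {x | ∀ J' ∈ insert J s, (x ∈ J' ↔ t J')} =
        {x | x ∈ J ↔ t J} ∩ {x | ∀ J ∈ s, (x ∈ J ↔ t J)} := by
      ext x; simp
    rw [h1]
    apply AuxFU.inter _ (ih (fun J' hJ' => h J' (Finset.mem_insert_of_mem hJ')))
    by_cases ht : t J
    · simpa [ht] using AuxFU.of_ord (h J (Finset.mem_insert_self _ _))
    · have h2 : {x | x ∈ J ↔ t J} = Jᶜ := by
        ext x; simp [ht]
      rw [h2]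
      exact AuxFU.compl_ord (h J (Finset.mem_insert_self _ _))

lemma AuxFU.biUnion {ι : Type} (s : Finset ι) (A : ι → Set ℝ) (h : ∀ i ∈ s, AuxFU (A i)) :
    AuxFU (⋃ i ∈ s, A i) := by
  classical
  induction s using Finset.induction_on with
  | empty => simpa using AuxFU.empty
  | insert a s ha ih =>
    rw [Finset.set_biUnion_insert]
    exact (h a (Finset.mem_insert_self _ _)).union
      (ih (fun i hi => h i (Finset.mem_insert_of_mem hi)))

/-- Discretisation. -/
lemma aux_discretise {ι : Type} [Fintype ι] (F : Finset (Set (ι → ℝ)))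
    (hF : ∀ f ∈ F, IsSimpleBox f) :
    ∃ (k : ℕ) (τ : ℝ → Fin k), 0 < k ∧ (∀ t, AuxFU {x | x ∈ Icc (0:ℝ) 1 ∧ τ x = t}) ∧
      ∀ x y : ι → ℝ, (∀ j, τ (x j) = τ (y j)) → x ∈ (⋃ f ∈ F, f) → y ∈ (⋃ f ∈ F, f) := by
  classical
  have hF' : ∀ f : Set (ι → ℝ), ∃ (A : ι → Set ℝ) (s : ι → Finset (Set ℝ)), f ∈ F →
      (∀ i, (∀ J ∈ s i, J.OrdConnected) ∧ A i = ⋃₀ ↑(s i)) ∧ f = Set.univ.pi A := by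
    intro f
    by_cases hf : f ∈ F
    · obtain ⟨A, hA, hfA⟩ := hF f hf
      choose h1 s hs using hA
      exact ⟨A, s, fun _ => ⟨hs, hfA⟩⟩
    · exact ⟨fun _ => ∅, fun _ => ∅, fun h => absurd h hf⟩
  choose A s hAs using hF'
  set 𝒥 : Finset (Set ℝ) := F.biUnion (fun f => Finset.univ.biUnion (fun i => s f i)) with h𝒥
  have hmem : ∀ J, J ∈ 𝒥 ↔ ∃ f ∈ F, ∃ i, J ∈ s f i := by
    intro J; simp [h𝒥]
  have hord : ∀ J ∈ 𝒥, J.OrdConnected := by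
    intro J hJ
    obtain ⟨f, hf, i, hi⟩ := (hmem J).1 hJ
    exact ((hAs f hf).1 i).1 J hi
  let e := Fintype.equivFin (𝒥 → Bool)
  let τ0 : ℝ → (𝒥 → Bool) := fun x J => decide (x ∈ J.1)
  refine ⟨Fintype.card (𝒥 → Bool), fun x => e (τ0 x), Fintype.card_pos, ?_, ?_⟩
  · intro t
    have h1 : {x | x ∈ Icc (0:ℝ) 1 ∧ e (τ0 x) = t} = Icc 0 1 ∩
        {x | ∀ J ∈ 𝒥, (x ∈ J ↔ ∃ h : J ∈ 𝒥, e.symm t ⟨J, h⟩ = true)} := by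
      ext x
      simp only [mem_ofPred_eq, mem_inter_iff]
      apply and_congr_right
      intro _
      rw [← Equiv.eq_symm_apply]
      constructor
      · intro h J hJ
        rw [← h]
        simp [τ0, hJ]
      · intro h
        funext J
        have := h J.1 J.2
        simp only [τ0]
        by_cases hx : x ∈ J.1
        · obtain ⟨_, h2⟩ := this.1 hx
          simp [hx, h2]
        · have h2 : ¬ (e.symm t J = true) := fun h2 => hx (this.2 ⟨J.2, h2⟩)
          simp [hx, h2]
    rw [h1]
    exact (AuxFU.of_ord ordConnected_Icc).inter (AuxFU.cell 𝒥 hord _)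
  · intro x y hxy hx
    rw [mem_iUnion₂] at hx ⊢
    obtain ⟨f, hf, hxf⟩ := hx
    refine ⟨f, hf, ?_⟩
    have hfe := (hAs f hf).2
    rw [hfe] at hxf ⊢
    intro i _
    have h1 := hxf i (mem_univ _)
    rw [((hAs f hf).1 i).2, mem_sUnion] at h1 ⊢
    obtain ⟨J, hJ, hxJ⟩ := h1
    refine ⟨J, hJ, ?_⟩
    have h2 : τ0 (x i) = τ0 (y i) := e.injective (hxy i)
    have h3 := congrFun h2 ⟨J, (hmem J).2 ⟨f, hf, i, hJ⟩⟩
    simp only [τ0] at h3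
    simpa [hxJ] using h3

lemma aux_finish (S : Ssee) (N n : ℕ) (hn : N ≤ n) (b : Set (S.V N → ℝ)) (hb : b ⊆ unitCube (S.V N))
    (k : ℕ) (τ : ℝ → Fin k) (hFU : ∀ t, AuxFU {x | x ∈ Icc (0:ℝ) 1 ∧ τ x = t})
    (hinv : ∀ x y : S.V N → ℝ, (∀ j, τ (x j) = τ (y j)) → x ∈ b → y ∈ b)
    (Hs : Finset (S.V N → Fin k)) (hHs : ∀ h, h ∈ Hs ↔ ∃ x ∈ b, ∀ j, τ (x j) = h j)
    (ε ε' : ℝ) (hε : 0 < ε) (hε' : ε' * Hs.card < ε) (M : ℝ)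
    (𝒞 : Finset (Finset (S.V n × Fin k))) (h𝒞 : (𝒞.card : ℝ) ≤ M)
    (hcount : ∀ C ∈ 𝒞, (((S.emb N n ×ˢ Hs).filter
      (fun p => Finset.univ.image (fun j => (p.1 j, p.2 j)) ⊆ C)).card : ℝ) ≤
        ε' * (S.emb N n ×ˢ Hs).card)
    (hcov : ∀ I : Finset (S.V n × Fin k), (∀ p ∈ S.emb N n ×ˢ Hs,
      ¬ Finset.univ.image (fun j => (p.1 j, p.2 j)) ⊆ I) → ∃ C ∈ 𝒞, I ⊆ C) :
    ∃ C : Finset (Set (S.V n → ℝ)),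
      (∀ c ∈ C, IsSimpleBox c) ∧
      (unitCube (S.V n) \ S.upperShadow N n b) ⊆ ⋃ c ∈ C, c ∧
      (∀ c ∈ C, S.expProj N n (fun φ => (volume (projBody φ c ∩ b)).toReal) < ε) ∧
      ((C.card : ℝ) ≤ M) := by
  classical
  let box : Finset (S.V n × Fin k) → Set (S.V n → ℝ) := fun C =>
    Set.univ.pi (fun i => {x | x ∈ Icc (0:ℝ) 1 ∧ (i, τ x) ∈ C})
  refine ⟨𝒞.image box, ?_, ?_, ?_, ?_⟩
  · intro c hc
    obtain ⟨C, hC, rfl⟩ := Finset.mem_image.1 hc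
    refine ⟨_, fun i => ⟨fun x hx => hx.1, ?_⟩, rfl⟩
    have h1 : {x | x ∈ Icc (0:ℝ) 1 ∧ (i, τ x) ∈ C} =
        ⋃ t ∈ Finset.univ.filter (fun t => (i, t) ∈ C), {x | x ∈ Icc (0:ℝ) 1 ∧ τ x = t} := by
      ext x
      simp only [mem_ofPred_eq, mem_iUnion, Finset.mem_filter, Finset.mem_univ, true_and]
      constructor
      · rintro ⟨h1, h2⟩; exact ⟨_, h2, h1, rfl⟩
      · rintro ⟨t, h1, h2, rfl⟩; exact ⟨h2, h1⟩
    show AuxFU {x | x ∈ Icc (0:ℝ) 1 ∧ (i, τ x) ∈ C}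
    rw [h1]
    exact AuxFU.biUnion _ _ (fun t _ => hFU t)
  · rintro x ⟨hx, hxs⟩
    obtain ⟨C, hC, hIC⟩ := hcov (Finset.univ.image (fun i => (i, τ (x i)))) (by
      intro p hp hsub
      rw [Finset.mem_product] at hp
      apply hxs
      rw [Ssee.upperShadow, mem_iUnion₂]
      refine ⟨p.1, hp.1, hx, ?_⟩
      obtain ⟨y, hy, hyp⟩ := (hHs p.2).1 hp.2
      refine hinv y _ ?_ hy
      intro j
      have := hsub (Finset.mem_image_of_mem _ (Finset.mem_univ j))
      rw [Finset.mem_image] at this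
      obtain ⟨i, _, hi⟩ := this
      simp only [Prod.mk.injEq] at hi
      rw [hyp j, ← hi.2, hi.1])
    rw [mem_iUnion₂]
    refine ⟨box C, Finset.mem_image_of_mem _ hC, ?_⟩
    intro i _
    exact ⟨hx i (mem_univ _), hIC (Finset.mem_image_of_mem _ (Finset.mem_univ i))⟩
  · intro c hc
    obtain ⟨C, hC, rfl⟩ := Finset.mem_image.1 hc
    have hvol : volume b ≤ 1 := by
      refine (measure_mono hb).trans ?_
      rw [unitCube, volume_pi_pi]
      simp
    have hper : ∀ φ ∈ S.emb N n, (volume (projBody φ (box C) ∩ b)).toReal ≤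
        ((Hs.filter (fun h => Finset.univ.image (fun j => (φ j, h j)) ⊆ C)).card : ℝ) := by
      intro φ hφ
      have hinj := S.emb_inj N n hn φ hφ
      rcases (projBody φ (box C) ∩ b).eq_empty_or_nonempty with h0 | ⟨x, hx, hxb⟩
      · rw [h0]; simp
      · have h1 : (volume (projBody φ (box C) ∩ b)).toReal ≤ 1 := by
          have : volume (projBody φ (box C) ∩ b) ≤ 1 := (measure_mono inter_subset_right).trans hvol
          simpa using ENNReal.toReal_mono ENNReal.one_ne_top this
        refine h1.trans ?_
        norm_cast
        rw [Nat.one_le_iff_ne_zero, ← Nat.pos_iff_ne_zero, Finset.card_pos]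
        refine ⟨fun j => τ (x j), Finset.mem_filter.2 ⟨(hHs _).2 ⟨x, hxb, fun _ => rfl⟩, ?_⟩⟩
        have hne := nonempty_of_measure_ne_zero (ne_of_gt hx)
        obtain ⟨d, hd⟩ := hne
        rw [Finset.image_subset_iff]
        intro j _
        have h2 := (hd (φ j) (mem_univ _)).2
        have h3 : φ j ∈ Set.range φ := ⟨j, rfl⟩
        beta_reduce at h2
        rw [dif_pos h3] at h2
        have h4 : h3.choose = j := hinj h3.choose_spec
        rwa [h4] at h2
    have hsum : ∑ φ ∈ S.emb N n, (volume (projBody φ (box C) ∩ b)).toReal ≤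
        ε' * Hs.card * (S.emb N n).card := by
      refine (Finset.sum_le_sum hper).trans ?_
      have h1 := hcount C hC
      rw [Finset.card_product, Finset.card_filter, Finset.sum_product] at h1
      push_cast at h1
      simp only [Finset.card_filter]
      push_cast
      linarith
    rw [Ssee.expProj]
    rcases Nat.eq_zero_or_pos (S.emb N n).card with h0 | h0
    · rw [h0]; simpa using hε
    · have : (0:ℝ) < (S.emb N n).card := by exact_mod_cast h0
      rw [div_lt_iff₀ this]
      refine lt_of_le_of_lt hsum ?_
      exact mul_lt_mul_of_pos_right hε' this
  · exact le_trans (by exact_mod_cast Finset.card_image_le) h𝒞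

set_option linter.unusedSectionVars false
lemma aux_edge_card (S : Ssee) (N n : ℕ) (hn : N ≤ n) (k : ℕ) (φ : S.V N → S.V n) (hφ : φ ∈ S.emb N n)
    (h : S.V N → Fin k) :
    (Finset.univ.image (fun j => (φ j, h j))).card = Fintype.card (S.V N) := by
  rw [Finset.card_image_of_injective, Finset.card_univ]
  intro i j hij
  exact S.emb_inj N n hn φ hφ (Prod.mk.inj hij).1

lemma aux_bad_pairs (S : Ssee) (N n : ℕ) (hn : N ≤ n) (k : ℕ) (Hs : Finset (S.V N → Fin k)) :
    ((((S.emb N n ×ˢ Hs) ×ˢ (S.emb N n ×ˢ Hs)).filter (fun p => p.1 ≠ p.2 ∧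
      2 ≤ ((Finset.univ.image (fun j => (p.1.1 j, p.1.2 j))) ∩
        (Finset.univ.image (fun j => (p.2.1 j, p.2.2 j)))).card)).card) ≤
    Hs.card ^ 2 * (S.interCount N n +
      (Fintype.card (S.V N)) ^ (Fintype.card (S.V N)) * (S.emb N n).card) := by
  set r := Fintype.card (S.V N) with hr
  set P1 := (S.emb N n ×ˢ S.emb N n).filter (fun p =>
    1 < ((Finset.univ.image p.1) ∩ (Finset.univ.image p.2)).card ∧
    ((Finset.univ.image p.1) ∩ (Finset.univ.image p.2)).card < Fintype.card (S.V N)) with hP1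
  set P2 : Finset ((S.V N → S.V n) × (S.V N → S.V n)) := (S.emb N n).biUnion (fun φ =>
    (Fintype.piFinset (fun _ : S.V N => Finset.univ.image φ)).image (fun ψ => (φ, ψ))) with hP2
  have hP2c : P2.card ≤ r ^ r * (S.emb N n).card := by
    refine Finset.card_biUnion_le.trans ?_
    calc _ ≤ ∑ φ ∈ S.emb N n, r ^ r := by
          apply Finset.sum_le_sum
          intro φ _
          refine Finset.card_image_le.trans ?_
          rw [Fintype.card_piFinset, Finset.prod_const, Finset.card_univ]
          exact Nat.pow_le_pow_left (Finset.card_image_le.trans (by rw [Finset.card_univ])) _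
      _ = _ := by rw [Finset.sum_const, smul_eq_mul, mul_comm]
  have hsub : (((S.emb N n ×ˢ Hs) ×ˢ (S.emb N n ×ˢ Hs)).filter (fun p => p.1 ≠ p.2 ∧
      2 ≤ ((Finset.univ.image (fun j => (p.1.1 j, p.1.2 j))) ∩
        (Finset.univ.image (fun j => (p.2.1 j, p.2.2 j)))).card)) ⊆
      ((P1 ∪ P2) ×ˢ (Hs ×ˢ Hs)).image (fun x => ((x.1.1, x.2.1), (x.1.2, x.2.2))) := by
    rintro ⟨⟨φ, h⟩, ψ, h'⟩ hp
    simp only [Finset.mem_filter, Finset.mem_product] at hp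
    obtain ⟨⟨⟨hφ, hh⟩, hψ, hh'⟩, -, hc⟩ := hp
    refine Finset.mem_image.2 ⟨((φ, ψ), (h, h')), ?_, rfl⟩
    simp only [Finset.mem_product]
    refine ⟨?_, hh, hh'⟩
    have hc2 : 2 ≤ ((Finset.univ.image φ) ∩ (Finset.univ.image ψ)).card := by
      refine hc.trans ?_
      apply Finset.card_le_card_of_injOn Prod.fst
      · intro w hw
        simp only [Finset.coe_inter, Set.mem_inter_iff, Finset.mem_coe, Finset.mem_image,
          Finset.mem_univ, true_and] at hw ⊢
        obtain ⟨⟨i, hi⟩, j, hj⟩ := hw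
        exact ⟨⟨i, by rw [← hi]⟩, j, by rw [← hj]⟩
      · intro w hw w' hw' hww
        simp only [Finset.coe_inter, Set.mem_inter_iff, Finset.mem_coe, Finset.mem_image,
          Finset.mem_univ, true_and] at hw hw'
        obtain ⟨⟨i, rfl⟩, -⟩ := hw
        obtain ⟨⟨j, rfl⟩, -⟩ := hw'
        have : i = j := S.emb_inj N n hn φ hφ hww
        rw [this]
    rw [Finset.mem_union]
    by_cases hlt : ((Finset.univ.image φ) ∩ (Finset.univ.image ψ)).card < Fintype.card (S.V N)
    · left
      exact Finset.mem_filter.2 ⟨Finset.mem_product.2 ⟨hφ, hψ⟩, hc2, hlt⟩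
    · right
      push Not at hlt
      have h1 : (Finset.univ.image φ) ∩ (Finset.univ.image ψ) = Finset.univ.image ψ := by
        apply Finset.eq_of_subset_of_card_le Finset.inter_subset_right
        exact le_trans (Finset.card_image_le.trans (by rw [Finset.card_univ])) hlt
      refine Finset.mem_biUnion.2 ⟨φ, hφ, Finset.mem_image.2 ⟨ψ, ?_, rfl⟩⟩
      rw [Fintype.mem_piFinset]
      intro j
      have h2 : ψ j ∈ Finset.univ.image ψ := Finset.mem_image_of_mem _ (Finset.mem_univ _)
      rw [← h1] at h2
      exact (Finset.mem_inter.1 h2).1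
  refine (Finset.card_le_card hsub).trans (Finset.card_image_le.trans ?_)
  rw [Finset.card_product, Finset.card_product, mul_comm, sq]
  apply Nat.mul_le_mul_left
  refine (Finset.card_union_le _ _).trans ?_
  exact Nat.add_le_add le_rfl hP2c

lemma aux_exists_family (S : Ssee) (hS : S.Good) (N k : ℕ) (hk : 0 < k) (Hs : Finset (S.V N → Fin k))
    (ε' δ : ℝ) (hε' : 0 < ε') (hδ : 0 < δ) : ∃ n₀ : ℕ, ∀ n ≥ n₀, N ≤ n →
    ∃ 𝒞 : Finset (Finset (S.V n × Fin k)),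
      (𝒞.card : ℝ) ≤ Real.exp (δ * (Fintype.card (S.V n × Fin k) : ℝ)) ∧
      (∀ C ∈ 𝒞, (((S.emb N n ×ˢ Hs).filter
        (fun p => Finset.univ.image (fun j => (p.1 j, p.2 j)) ⊆ C)).card : ℝ) ≤
          ε' * (S.emb N n ×ˢ Hs).card) ∧
      (∀ I : Finset (S.V n × Fin k), (∀ p ∈ S.emb N n ×ˢ Hs,
        ¬ Finset.univ.image (fun j => (p.1 j, p.2 j)) ⊆ I) → ∃ C ∈ 𝒞, I ⊆ C) := by
  classical
  by_cases htriv : Fintype.card (S.V N) ≤ 1 ∨ Hs = ∅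
  · refine ⟨0, fun n _ hn => ⟨{Finset.univ.filter (fun w => ∀ p ∈ S.emb N n ×ˢ Hs,
      Finset.univ.image (fun j => (p.1 j, p.2 j)) ≠ {w})}, ?_, ?_, ?_⟩⟩
    · simp; positivity
    · intro C hC
      rw [Finset.mem_singleton] at hC
      subst hC
      have : (S.emb N n ×ˢ Hs).filter (fun p => Finset.univ.image (fun j => (p.1 j, p.2 j)) ⊆
          Finset.univ.filter (fun w => ∀ p ∈ S.emb N n ×ˢ Hs,
            Finset.univ.image (fun j => (p.1 j, p.2 j)) ≠ {w})) = ∅ := by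
        apply Finset.filter_false_of_mem
        intro p hp hsub
        have hp' := Finset.mem_product.1 hp
        rcases htriv with h1 | h1
        · have h2 : Fintype.card (S.V N) = 1 := le_antisymm h1 Fintype.card_pos
          have h3 := aux_edge_card S N n hn k p.1 hp'.1 p.2
          rw [h2, Finset.card_eq_one] at h3
          obtain ⟨w, hw⟩ := h3
          have h4 : w ∈ Finset.univ.image (fun j => (p.1 j, p.2 j)) := by rw [hw]; simp
          exact (Finset.mem_filter.1 (hsub h4)).2 p hp hw
        · rw [h1] at hp'; simp at hp'
      rw [this]; simp; positivity
    · intro I hI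
      refine ⟨_, Finset.mem_singleton_self _, ?_⟩
      intro w hw
      refine Finset.mem_filter.2 ⟨Finset.mem_univ _, ?_⟩
      intro p hp heq
      apply hI p hp
      rw [heq]; simpa using hw
  · push Not at htriv
    obtain ⟨hr, hHs⟩ := htriv
    have hHc : 0 < Hs.card := Finset.card_pos.2 hHs
    have hHr : (0:ℝ) < Hs.card := by exact_mod_cast hHc
    have hkr : (0:ℝ) < k := by exact_mod_cast hk
    have hk1 : (1:ℝ) ≤ k := by exact_mod_cast hk
    set r := Fintype.card (S.V N) with hrdef
    obtain ⟨D0, γ, hD0, hγ, hmain⟩ := aux_containers r ε' δ hε' hδ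
    have hg1 := (tendsto_natCast_atTop_atTop (R := ℝ)).comp hS.1
    have hg2 := hS.2.1 N hr
    have hg3 := hS.2.2 N hr
    have ev1 := hg1.eventually_ge_atTop D0
    have ev1' := hg1.eventually_ge_atTop 1
    have ev2 := hg2.eventually_ge_atTop (D0 * k / Hs.card)
    have ev3 := hg2.eventually_ge_atTop (2 * (r:ℝ) ^ r * k / γ)
    have ev4 := hg3.eventually_le_const (show (0:ℝ) < γ / (2 * k) by positivity)
    have ev5 := hg2.eventually_ge_atTop 1
    obtain ⟨n₀, hn₀⟩ := eventually_atTop.1 (ev1.and (ev1'.and (ev2.and (ev3.and (ev4.and ev5)))))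
    refine ⟨n₀, fun n hnn hn => ?_⟩
    obtain ⟨e1, e1', e2, e3, e4, e5⟩ := hn₀ n hnn
    simp only [Function.comp_apply] at e1 e1'
    set v : ℝ := (Fintype.card (S.V n) : ℝ) with hv
    set a : ℝ := ((S.emb N n).card : ℝ) with ha
    set i : ℝ := (S.interCount N n : ℝ) with hi
    have hvp : 0 < v := by linarith
    have hap : 0 < a := by
      rw [le_div_iff₀ hvp] at e5; linarith
    have hWc : (Fintype.card (S.V n × Fin k) : ℝ) = v * k := by
      rw [Fintype.card_prod, Fintype.card_fin]; push_cast; rfl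
    have hEc : ((S.emb N n ×ˢ Hs).card : ℝ) = a * Hs.card := by
      rw [Finset.card_product]; push_cast; rfl
    refine hmain (S.V n × Fin k) ((S.V N → S.V n) × (S.V N → Fin k)) (S.emb N n ×ˢ Hs)
      (fun p => Finset.univ.image (fun j => (p.1 j, p.2 j))) (a * Hs.card / (v * k)) ?_ ?_ ?_ ?_ ?_
    · rw [div_le_div_iff₀ hHr hvp] at e2
      rw [le_div_iff₀ (by positivity)]
      linarith
    · rw [hWc]; nlinarith
    · rw [hWc, hEc]; field_simp
    · intro p hp
      exact aux_edge_card S N n hn k p.1 (Finset.mem_product.1 hp).1 p.2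
    · have hb := aux_bad_pairs S N n hn k Hs
      have hb' : ((((S.emb N n ×ˢ Hs) ×ˢ (S.emb N n ×ˢ Hs)).filter (fun p => p.1 ≠ p.2 ∧
        2 ≤ ((Finset.univ.image (fun j => (p.1.1 j, p.1.2 j))) ∩
        (Finset.univ.image (fun j => (p.2.1 j, p.2.2 j)))).card)).card : ℝ) ≤
          (Hs.card : ℝ) ^ 2 * (i + (r:ℝ) ^ r * a) := by
        rw [hi, ha]
        exact_mod_cast hb
      refine hb'.trans ?_
      rw [hWc]
      have h1 : γ * (a * Hs.card / (v * k)) ^ 2 * (v * k) = (Hs.card : ℝ) ^ 2 * (γ * a ^ 2 / (v * k)) := by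
        field_simp
      rw [h1]
      apply mul_le_mul_of_nonneg_left _ (by positivity)
      rw [le_div_iff₀ (by positivity)]
      rw [div_le_div_iff₀ (by positivity) (by positivity)] at e4
      rw [div_le_div_iff₀ hγ hvp] at e3
      have h3 := mul_le_mul_of_nonneg_right e3 hap.le
      have h4 : (i + (r:ℝ) ^ r * a) * (v * k) = (v * i * (2 * k)) / 2 + (2 * (r:ℝ) ^ r * k * v * a) / 2 := by
        ring
      rw [h4]
      have h5 : a * γ * a = γ * a ^ 2 := by ring
      linarith

theorem containers_for_forb_union_of_simple_boxes
    (S : Ssee) (hS : S.Good) (N : ℕ)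
    (F : Finset (Set (S.V N → ℝ))) (hF : F.Nonempty)
    (hFsimple : ∀ f ∈ F, IsSimpleBox f)
    (b : Set (S.V N → ℝ)) (hb : b = ⋃ f ∈ F, f)
    (ε : ℝ) (hε : 0 < ε) :
    ∃ n₀ : ℕ, ∀ n ≥ n₀, ∃ C : Finset (Set (S.V n → ℝ)),
      (∀ c ∈ C, IsSimpleBox c) ∧
      (unitCube (S.V n) \ S.upperShadow N n b) ⊆ ⋃ c ∈ C, c ∧
      (∀ c ∈ C, S.expProj N n (fun φ => (volume (projBody φ c ∩ b)).toReal) < ε) ∧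
      ((C.card : ℝ) ≤ Real.exp (ε * (Fintype.card (S.V n) : ℝ))) := by
  classical
  obtain ⟨k, τ, hk, hFU, hinv⟩ := aux_discretise F hFsimple
  rw [← hb] at hinv
  have hbc : b ⊆ unitCube (S.V N) := by
    rw [hb]
    intro x hx
    rw [mem_iUnion₂] at hx
    obtain ⟨f, hf, hxf⟩ := hx
    obtain ⟨A, hA, rfl⟩ := hFsimple f hf
    intro i hi
    exact (hA i).1 (hxf i hi)
  set Hs : Finset (S.V N → Fin k) := Finset.univ.filter (fun h => ∃ x ∈ b, ∀ j, τ (x j) = h j) with hHs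
  have hkr : (0:ℝ) < k := by exact_mod_cast hk
  obtain ⟨n₀, hn₀⟩ := aux_exists_family S hS N k hk Hs (ε / (Hs.card + 1)) (ε / k)
    (by positivity) (by positivity)
  refine ⟨max n₀ N, fun n hn => ?_⟩
  have hnN : N ≤ n := le_trans (le_max_right _ _) hn
  obtain ⟨𝒞, h1, h2, h3⟩ := hn₀ n (le_trans (le_max_left _ _) hn) hnN
  refine aux_finish S N n hnN b hbc k τ hFU hinv Hs (fun h => by simp [hHs]) ε (ε / (Hs.card + 1)) hε ?_
    _ 𝒞 ?_ h2 h3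
  · rw [div_mul_eq_mul_div, div_lt_iff₀ (by positivity)]
    linarith
  · refine h1.trans (le_of_eq ?_)
    congr 1
    rw [Fintype.card_prod, Fintype.card_fin]
    push_cast
    field_simp


end
end

section
/- Let V be a good ssee and let P be a hereditary property of [0,1]-decorations of V. Suppose in addition that: (a) the limit π(P) := lim_{n→∞} ex(V_n, P_n)/|V_n| exists; and (b) for all ε > 0 there exist η > 0 and positive integers N ≤ n₀ such that if n ≥ n₀ then for every box b in V_n, E_φ vol(b_{↓φ} \ P_N) < η implies Ent(b) > (π(P) − ε)|V_n|, where φ is uniform on binom(V_n,V_N). Then vol(P_n) = e^{−(π(P)+o(1))|V_n|}, i.e. (−log vol(P_n))/|V_n| → π(P) as n → ∞. -/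
open MeasureTheory Filter Set

noncomputable section

set_option linter.unusedSectionVars false

namespace SC

/-- uniform measure on `[0,1]` -/
def mu0 : Measure ℝ := volume.restrict (Set.Icc 0 1)

instance : IsProbabilityMeasure mu0 := ⟨by simp [mu0]⟩

/-- uniform measure on the cube -/
def MU (ι : Type) [Fintype ι] : Measure (ι → ℝ) := Measure.pi fun _ => mu0

instance (ι : Type) [Fintype ι] : IsProbabilityMeasure (MU ι) := by unfold MU; infer_instance

/-- bounded measurable -/
def BM {X : Type} [MeasurableSpace X] (f : X → ℝ) : Prop := Measurable f ∧ ∃ C : ℝ, ∀ x, |f x| ≤ C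

/-- depends only on coordinates in `T` -/
def Dep {ι : Type} {β : Type} (T : Finset ι) (f : (ι → ℝ) → β) : Prop :=
  ∀ x y : ι → ℝ, (∀ i ∈ T, x i = y i) → f x = f y

theorem BM.integrable {X : Type} [MeasurableSpace X] {f : X → ℝ} (h : BM f) (ν : Measure X)
    [IsFiniteMeasure ν] : Integrable f ν := by
  obtain ⟨hm, C, hC⟩ := h
  exact Integrable.of_bound hm.aestronglyMeasurable C (Eventually.of_forall fun x => by
    simpa [Real.norm_eq_abs] using hC x)

theorem BM.mul {X : Type} [MeasurableSpace X] {f g : X → ℝ} (hf : BM f) (hg : BM g) :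
    BM (fun x => f x * g x) := by
  obtain ⟨hf, C, hC⟩ := hf
  obtain ⟨hg, D, hD⟩ := hg
  refine ⟨hf.mul hg, C * D, fun x => ?_⟩
  rw [abs_mul]
  exact mul_le_mul (hC x) (hD x) (abs_nonneg _) ((abs_nonneg _).trans (hC x))

theorem BM.add {X : Type} [MeasurableSpace X] {f g : X → ℝ} (hf : BM f) (hg : BM g) :
    BM (fun x => f x + g x) := by
  obtain ⟨hf, C, hC⟩ := hf
  obtain ⟨hg, D, hD⟩ := hg
  exact ⟨hf.add hg, C + D, fun x => (abs_add_le _ _).trans (add_le_add (hC x) (hD x))⟩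

theorem BM.const {X : Type} [MeasurableSpace X] (c : ℝ) : BM (fun _ : X => c) :=
  ⟨measurable_const, |c|, fun _ => le_rfl⟩

theorem BM.comp {X Y : Type} [MeasurableSpace X] [MeasurableSpace Y] {f : X → ℝ} (hf : BM f)
    {g : Y → X} (hg : Measurable g) : BM (fun y => f (g y)) := by
  obtain ⟨hf, C, hC⟩ := hf
  exact ⟨hf.comp hg, C, fun x => hC _⟩

theorem BM.indicator {X : Type} [MeasurableSpace X] {A : Set X} (hA : MeasurableSet A) :
    BM (A.indicator (fun _ => (1:ℝ))) := by
  refine ⟨measurable_const.indicator hA, 1, fun x => ?_⟩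
  by_cases h : x ∈ A <;> simp [h]

theorem BM.of01 {X : Type} [MeasurableSpace X] {f : X → ℝ} (hf : Measurable f)
    (h0 : ∀ x, 0 ≤ f x) (h1 : ∀ x, f x ≤ 1) : BM f :=
  ⟨hf, 1, fun x => by rw [abs_of_nonneg (h0 x)]; exact h1 x⟩

section op
variable {ι : Type} [Fintype ι] [DecidableEq ι]

theorem measurable_pw (T : Finset ι) :
    Measurable (fun p : (ι → ℝ) × (ι → ℝ) => T.piecewise p.1 p.2) := by
  refine measurable_pi_lambda _ fun i => ?_
  by_cases h : i ∈ T
  · simp only [Finset.piecewise, h, if_true]; fun_prop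
  · simp only [Finset.piecewise, h, if_false]; fun_prop

theorem measurable_pw_right (T : Finset ι) (x : ι → ℝ) :
    Measurable (fun y : (ι → ℝ) => T.piecewise x y) :=
  (measurable_pw T).comp (measurable_const.prodMk measurable_id)

theorem map_pw (T : Finset ι) :
    ((MU ι).prod (MU ι)).map (fun p => T.piecewise p.1 p.2) = MU ι := by
  symm
  refine Measure.pi_eq fun s hs => ?_
  rw [Measure.map_apply (measurable_pw T) (MeasurableSet.univ_pi hs)]
  have : (fun p : (ι → ℝ) × (ι → ℝ) => T.piecewise p.1 p.2) ⁻¹' (Set.univ.pi s)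
      = (Set.univ.pi fun i => if i ∈ T then s i else Set.univ) ×ˢ
        (Set.univ.pi fun i => if i ∈ T then Set.univ else s i) := by
    ext p
    simp only [Set.mem_preimage, Set.mem_pi, Set.mem_univ, true_imp_iff, Set.mem_prod, Finset.piecewise]
    rw [← forall_and]
    refine forall_congr' fun i => ?_
    by_cases h : i ∈ T <;> simp [h]
  rw [this, Measure.prod_prod]
  unfold MU
  rw [Measure.pi_pi, Measure.pi_pi, ← Finset.prod_mul_distrib]
  refine Finset.prod_congr rfl fun i _ => ?_
  by_cases h : i ∈ T <;> simp [h]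

/-- averaging over the coordinates outside `T` -/
def cE (T : Finset ι) (f : (ι → ℝ) → ℝ) (x : ι → ℝ) : ℝ := ∫ y, f (T.piecewise x y) ∂MU ι

theorem cE_bm (T : Finset ι) {f : (ι → ℝ) → ℝ} (hf : BM f) : BM (cE T f) := by
  have h2 := hf.comp (measurable_pw T)
  refine ⟨?_, ?_⟩
  · have := (h2.1.stronglyMeasurable).integral_prod_right' (ν := MU ι)
    exact this.measurable
  · obtain ⟨C, hC⟩ := hf.2
    refine ⟨C, fun x => ?_⟩
    have := norm_integral_le_of_norm_le_const (μ := MU ι) (f := fun y => f (T.piecewise x y)) (C := C)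
      (Eventually.of_forall fun y => by simpa [Real.norm_eq_abs] using hC _)
    simpa [Real.norm_eq_abs, cE] using this

theorem cE_nonneg (T : Finset ι) {f : (ι → ℝ) → ℝ} (hf : ∀ x, 0 ≤ f x) (x) : 0 ≤ cE T f x :=
  integral_nonneg fun _ => hf _

theorem cE_le_one (T : Finset ι) {f : (ι → ℝ) → ℝ} (hf : BM f) (h : ∀ x, f x ≤ 1) (x) :
    cE T f x ≤ 1 := by
  have := integral_mono ((hf.comp (measurable_pw_right T x)).integrable (MU ι))
    (integrable_const (1:ℝ)) (fun y => h (T.piecewise x y))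
  simpa [cE] using this

theorem cE_dep_inter (T U : Finset ι) {f : (ι → ℝ) → ℝ} (hf : Dep U f) : Dep (T ∩ U) (cE T f) := by
  intro x x' h
  unfold cE
  refine integral_congr_ae (Eventually.of_forall fun y => hf _ _ fun i hi => ?_)
  by_cases hT : i ∈ T
  · simp [Finset.piecewise, hT, h i (Finset.mem_inter.2 ⟨hT, hi⟩)]
  · simp [Finset.piecewise, hT]

theorem cE_dep (T : Finset ι) (f : (ι → ℝ) → ℝ) : Dep T (cE T f) := by
  have := cE_dep_inter T Finset.univ (f := f) (fun x y h => by
    rw [show x = y from funext fun i => h i (Finset.mem_univ i)])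
  simpa using this

theorem Dep.mono {β : Type} {T U : Finset ι} (h : T ⊆ U) {f : (ι → ℝ) → β} (hf : Dep T f) : Dep U f :=
  fun x y hxy => hf x y fun i hi => hxy i (h hi)

theorem integral_mul_cE (T : Finset ι) {f g : (ι → ℝ) → ℝ} (hf : BM f) (hg : BM g) (hd : Dep T g) :
    ∫ x, g x * cE T f x ∂MU ι = ∫ x, g x * f x ∂MU ι := by
  have hfg := hg.mul hf
  conv_rhs => rw [← map_pw T]
  rw [integral_map (measurable_pw T).aemeasurable hfg.1.aestronglyMeasurable]
  rw [integral_prod _ ((hfg.comp (measurable_pw T)).integrable _)]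
  refine integral_congr_ae (Eventually.of_forall fun x => ?_)
  simp only [cE]
  rw [← integral_const_mul]
  refine integral_congr_ae (Eventually.of_forall fun y => ?_)
  simp only
  rw [hd x (T.piecewise x y) fun i hi => by simp [Finset.piecewise, hi]]

theorem integral_mul_cE2 (T T' U : Finset ι) (hTT' : T ⊆ T') (hU : T' ∩ U ⊆ T)
    {f g : (ι → ℝ) → ℝ} (hf : BM f) (hg : BM g) (hd : Dep U g) :
    ∫ x, g x * cE T' f x ∂MU ι = ∫ x, g x * cE T f x ∂MU ι := by
  have e1 : ∀ k : (ι → ℝ) → ℝ, BM k → Dep T' k →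
      ∫ x, g x * k x ∂MU ι = ∫ x, cE T' g x * k x ∂MU ι := by
    intro k hk hdk
    have := integral_mul_cE T' hg hk hdk
    simp only [mul_comm] at this ⊢
    exact this.symm
  rw [e1 _ (cE_bm _ hf) (cE_dep _ _), e1 _ (cE_bm _ hf) ((cE_dep T f).mono hTT')]
  rw [integral_mul_cE T' hf (cE_bm _ hg) (cE_dep _ _)]
  rw [integral_mul_cE T hf (cE_bm _ hg) ((cE_dep_inter _ _ hd).mono hU)]

end op
end SC

namespace SC

theorem pointwise_key {γ u w u' w' : ℝ} (hγ : 0 < γ) (hγ1 : γ ≤ 1) (hu : 0 < u) (hw : γ * u ≤ w)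
    (hu' : 0 ≤ u') (hw' : 0 ≤ w') (hlt : w' < γ / 2 * u') :
    γ ^ 2 / 24 * u' + u' * w' / (u' + w') ≤ w ^ 2 / (u + w) ^ 2 * u' + u ^ 2 / (u + w) ^ 2 * w' := by
  have hwp : 0 < w := lt_of_lt_of_le (by positivity) hw
  have hu'p : 0 < u' := by
    rcases hu'.lt_or_eq with h | h
    · exact h
    · rw [← h] at hlt; linarith
  have hid : w ^ 2 / (u + w) ^ 2 * u' + u ^ 2 / (u + w) ^ 2 * w' - u' * w' / (u' + w')
      = (w * u' - u * w') ^ 2 / ((u + w) ^ 2 * (u' + w')) := by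
    have : u + w ≠ 0 := by positivity
    have : u' + w' ≠ 0 := by positivity
    field_simp
    ring
  have h1 : w * u' / 2 ≤ w * u' - u * w' := by
    have : u * w' ≤ u * (γ / 2 * u') := by gcongr
    have : γ * u * u' ≤ w * u' := by gcongr
    nlinarith
  have h2 : γ ^ 2 / 24 * u' ≤ (w * u' - u * w') ^ 2 / ((u + w) ^ 2 * (u' + w')) := by
    rw [le_div_iff₀ (by positivity)]
    have h3 : (w * u' / 2) ^ 2 ≤ (w * u' - u * w') ^ 2 := by gcongr
    refine le_trans ?_ h3
    have h4 : γ * (u + w) ≤ 2 * w := by nlinarith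
    have h5 : (γ * (u + w)) ^ 2 ≤ (2 * w) ^ 2 := by gcongr
    have h6 : u' + w' ≤ 3 / 2 * u' := by nlinarith
    calc γ ^ 2 / 24 * u' * ((u + w) ^ 2 * (u' + w'))
        = (γ * (u + w)) ^ 2 / 24 * u' * (u' + w') := by ring
      _ ≤ (2 * w) ^ 2 / 24 * u' * (3 / 2 * u') := by gcongr
      _ = (w * u' / 2) ^ 2 := by ring
  linarith

theorem pointwise_key0 {u w u' w' : ℝ} (hu : 0 < u) (hw : 0 ≤ w)
    (hu' : 0 ≤ u') (hw' : 0 ≤ w') :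
    u' * w' / (u' + w') ≤ w ^ 2 / (u + w) ^ 2 * u' + u ^ 2 / (u + w) ^ 2 * w' := by
  rcases (add_nonneg hu' hw').eq_or_lt with h | h
  · rw [← h, div_zero]; positivity
  have hid : w ^ 2 / (u + w) ^ 2 * u' + u ^ 2 / (u + w) ^ 2 * w' - u' * w' / (u' + w')
      = (w * u' - u * w') ^ 2 / ((u + w) ^ 2 * (u' + w')) := by
    have : u + w ≠ 0 := by positivity
    have : u' + w' ≠ 0 := by positivity
    field_simp
    ring
  have : 0 ≤ (w * u' - u * w') ^ 2 / ((u + w) ^ 2 * (u' + w')) := by positivity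
  linarith

section q
variable {ι : Type} [Fintype ι] [DecidableEq ι] (Q : Set (ι → ℝ))

/-- the (unnormalised) marginal density of `Q` on the coordinates `T` -/
def q (T : Finset ι) (x : ι → ℝ) : ℝ := cE T (Q.indicator fun _ => (1:ℝ)) x

/-- the energy functional -/
def Psi (i : ι) (T : Finset ι) : ℝ :=
  ∫ x, q Q T x * q Q (insert i T) x / (q Q T x + q Q (insert i T) x) ∂MU ι

variable {Q}

theorem q_bm (hQ : MeasurableSet Q) (T : Finset ι) : BM (q Q T) := cE_bm T (BM.indicator hQ)

theorem q_nonneg (T : Finset ι) (x) : 0 ≤ q Q T x :=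
  cE_nonneg T (fun x => Set.indicator_nonneg (fun _ _ => zero_le_one) x) x

theorem q_le_one (hQ : MeasurableSet Q) (T : Finset ι) (x) : q Q T x ≤ 1 :=
  cE_le_one T (BM.indicator hQ) (fun x => Set.indicator_le_self' (fun _ _ => zero_le_one) x) x

theorem q_dep (T : Finset ι) : Dep T (q Q T) := cE_dep T _

theorem integral_mul_q (hQ : MeasurableSet Q) (T : Finset ι) {g : (ι → ℝ) → ℝ} (hg : BM g) (hd : Dep T g) :
    ∫ x, g x * q Q T x ∂MU ι = ∫ x, g x * Q.indicator (fun _ => (1:ℝ)) x ∂MU ι :=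
  integral_mul_cE T (BM.indicator hQ) hg hd

theorem integral_q (hQ : MeasurableSet Q) (T : Finset ι) : ∫ x, q Q T x ∂MU ι = (MU ι).real Q := by
  have := integral_mul_q hQ T (BM.const 1) (fun _ _ _ => rfl)
  simp only [one_mul] at this
  rw [this, integral_indicator hQ]
  simp

theorem div_bm {f g : (ι → ℝ) → ℝ} (hf : Measurable f) (hg : Measurable g) (h0 : ∀ x, 0 ≤ f x)
    (h1 : ∀ x, f x ≤ g x) : BM (fun x => f x / g x) :=
  BM.of01 (hf.div hg) (fun x => div_nonneg (h0 x) ((h0 x).trans (h1 x)))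
    (fun x => div_le_one_of_le₀ (h1 x) ((h0 x).trans (h1 x)))

theorem h_le {u w : ℝ} (hu : 0 ≤ u) (hw : 0 ≤ w) : u * w / (u + w) ≤ u := by
  rcases (add_nonneg hu hw).eq_or_lt with h | h
  · rw [← h, div_zero]; exact hu
  · rw [div_le_iff₀ h]; nlinarith

theorem psi_bm (hQ : MeasurableSet Q) (i : ι) (T : Finset ι) :
    BM (fun x => q Q T x * q Q (insert i T) x / (q Q T x + q Q (insert i T) x)) := by
  have m1 := (q_bm hQ T).1
  have m2 := (q_bm hQ (insert i T)).1
  refine BM.of01 ((m1.mul m2).div (m1.add m2)) (fun x => ?_) (fun x => ?_)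
  · have := q_nonneg (Q := Q) T x
    have := q_nonneg (Q := Q) (insert i T) x
    positivity
  · exact (h_le (q_nonneg _ _) (q_nonneg _ _)).trans (q_le_one hQ _ _)

theorem psi_nonneg (i : ι) (T : Finset ι) : 0 ≤ Psi Q i T := by
  refine integral_nonneg fun x => ?_
  have := q_nonneg (Q := Q) T x
  have := q_nonneg (Q := Q) (insert i T) x
  simp only [Pi.zero_apply]
  positivity

theorem psi_le (hQ : MeasurableSet Q) (i : ι) (T : Finset ι) : Psi Q i T ≤ (MU ι).real Q := by
  rw [← integral_q hQ T]
  exact integral_mono ((psi_bm hQ i T).integrable _) ((q_bm hQ T).integrable _)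
    (fun x => h_le (q_nonneg _ _) (q_nonneg _ _))

/-- general deficit inequality -/
theorem deficit_gen (hQ : MeasurableSet Q) (i : ι) (T S : Finset ι) (hi : i ∉ S) (er : (ι → ℝ) → ℝ) (her : BM er)
    (h : ∀ x, 0 < q Q T x → er x + q Q (T ∪ S) x * q Q (insert i (T ∪ S)) x /
        (q Q (T ∪ S) x + q Q (insert i (T ∪ S)) x) ≤
        q Q (insert i T) x ^ 2 / (q Q T x + q Q (insert i T) x) ^ 2 * q Q (T ∪ S) x +
        q Q T x ^ 2 / (q Q T x + q Q (insert i T) x) ^ 2 * q Q (insert i (T ∪ S)) x)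
    (h0 : ∀ x, q Q T x = 0 → er x ≤ 0) :
    ∫ x, er x ∂MU ι ≤ Psi Q i T - Psi Q i (T ∪ S) := by
  have m1 := (q_bm hQ T).1
  have m2 := (q_bm hQ (insert i T)).1
  have n1 := q_nonneg (Q := Q) T
  have n2 := q_nonneg (Q := Q) (insert i T)
  have n3 := q_nonneg (Q := Q) (T ∪ S)
  have n4 := q_nonneg (Q := Q) (insert i (T ∪ S))
  have hZ : MeasurableSet {x | q Q T x = 0} := measurableSet_eq_fun m1 measurable_const
  set g1 : (ι → ℝ) → ℝ := fun x => q Q (insert i T) x ^ 2 / (q Q T x + q Q (insert i T) x) ^ 2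
    + {x | q Q T x = 0}.indicator (fun _ => (1:ℝ)) x with hg1
  set g2 : (ι → ℝ) → ℝ := fun x => q Q T x ^ 2 / (q Q T x + q Q (insert i T) x) ^ 2 with hg2
  have b1 : BM g1 := by
    refine BM.add (div_bm (m2.pow_const 2) ((m1.add m2).pow_const 2) (fun x => sq_nonneg _) ?_)
      (BM.indicator hZ)
    intro x
    have := n1 x
    have := n2 x
    gcongr
    linarith
  have b2 : BM g2 := by
    refine (div_bm (m1.pow_const 2) ((m1.add m2).pow_const 2) (fun x => sq_nonneg _) ?_)
    intro x
    have := n1 x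
    have := n2 x
    gcongr
    linarith
  have dd : Dep (insert i T) (fun x => (q Q T x, q Q (insert i T) x)) := by
    intro x y hxy
    simp only
    rw [q_dep T x y (fun j hj => hxy j (Finset.mem_insert_of_mem hj)), q_dep (insert i T) x y hxy]
  have d1 : Dep (insert i T) g1 := by
    intro x y hxy
    have := dd x y hxy
    simp only [Prod.mk.injEq] at this
    simp only [hg1, Set.indicator, Set.mem_ofPred_eq, this.1, this.2]
  have d2 : Dep (insert i T) g2 := by
    intro x y hxy
    have := dd x y hxy
    simp only [Prod.mk.injEq] at this
    simp only [hg2, this.1, this.2]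
  have e1 : ∫ x, g1 x * q Q (T ∪ S) x ∂MU ι = ∫ x, g1 x * q Q T x ∂MU ι := by
    refine integral_mul_cE2 T (T ∪ S) (insert i T) Finset.subset_union_left ?_ (BM.indicator hQ) b1 d1
    intro j hj
    simp only [Finset.mem_inter, Finset.mem_union, Finset.mem_insert] at hj
    rcases hj with ⟨h1 | h1, h2 | h2⟩
    · exact h1
    · exact h1
    · exact absurd (h2 ▸ h1) hi
    · exact h2
  have e2 : ∫ x, g2 x * q Q (insert i (T ∪ S)) x ∂MU ι = ∫ x, g2 x * q Q (insert i T) x ∂MU ι := by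
    refine integral_mul_cE2 (insert i T) (insert i (T ∪ S)) (insert i T) ?_ ?_ (BM.indicator hQ) b2 d2
    · exact Finset.insert_subset_insert _ Finset.subset_union_left
    · exact Finset.inter_subset_right
  have e3 : Psi Q i T = ∫ x, g1 x * q Q T x ∂MU ι + ∫ x, g2 x * q Q (insert i T) x ∂MU ι := by
    rw [← integral_add ((b1.mul (q_bm hQ _)).integrable _) ((b2.mul (q_bm hQ _)).integrable _)]
    refine integral_congr_ae (Eventually.of_forall fun x => ?_)
    simp only [hg1, hg2, Set.indicator, Set.mem_ofPred_eq]
    rcases (n1 x).eq_or_lt with h | h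
    · simp [← h]
    · have : q Q T x + q Q (insert i T) x ≠ 0 := by have := n2 x; positivity
      simp only [h.ne', if_false]
      field_simp
      ring
  rw [e3, ← e1, ← e2, Psi]
  rw [le_sub_iff_add_le, ← integral_add (her.integrable _) ((psi_bm hQ _ _).integrable _),
    ← integral_add ((b1.mul (q_bm hQ _)).integrable _) ((b2.mul (q_bm hQ _)).integrable _)]
  refine integral_mono ((her.add (psi_bm hQ _ _)).integrable _)
    (((b1.mul (q_bm hQ _)).add (b2.mul (q_bm hQ _))).integrable _) fun x => ?_
  simp only [hg1, hg2, Set.indicator, Set.mem_ofPred_eq]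
  rcases (n1 x).eq_or_lt with h' | h'
  · simp only [← h', if_true]
    have a1 := h0 x h'.symm
    have a2 := h_le (n3 x) (n4 x)
    have a3 : 0 ≤ q Q (insert i T) x ^ 2 / (0 + q Q (insert i T) x) ^ 2 * q Q (T ∪ S) x :=
      mul_nonneg (by positivity) (n3 x)
    have a4 : 0 ≤ (0:ℝ) ^ 2 / (0 + q Q (insert i T) x) ^ 2 * q Q (insert i (T ∪ S)) x :=
      mul_nonneg (by positivity) (n4 x)
    linarith
  · simp only [h'.ne', if_false, add_zero]
    exact h x h'

theorem psi_mono (hQ : MeasurableSet Q) (i : ι) (T S : Finset ι) (hi : i ∉ S) : Psi Q i (T ∪ S) ≤ Psi Q i T := by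
  have := deficit_gen hQ i T S hi (fun _ => 0) (BM.const 0) (fun x hx => by
    rw [zero_add]
    exact pointwise_key0 hx (q_nonneg _ _) (q_nonneg _ _) (q_nonneg _ _)) (fun _ _ => le_rfl)
  simp at this
  exact this

/-- the error set -/
def erset (Q : Set (ι → ℝ)) (γ : ℝ) (i : ι) (T S : Finset ι) : Set (ι → ℝ) :=
  {x | 0 < q Q T x ∧ γ * q Q T x ≤ q Q (insert i T) x ∧
    q Q (insert i (T ∪ S)) x < γ / 2 * q Q (T ∪ S) x}

theorem erset_meas (hQ : MeasurableSet Q) (γ : ℝ) (i : ι) (T S : Finset ι) : MeasurableSet (erset Q γ i T S) := by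
  have m1 := (q_bm hQ T).1
  have m2 := (q_bm hQ (insert i T)).1
  have m3 := (q_bm hQ (T ∪ S)).1
  have m4 := (q_bm hQ (insert i (T ∪ S))).1
  exact (measurableSet_lt measurable_const m1).inter
    ((measurableSet_le (m1.const_mul γ) m2).inter (measurableSet_lt m4 (m3.const_mul _)))

theorem deficit (hQ : MeasurableSet Q) {γ : ℝ} (hγ : 0 < γ) (hγ1 : γ ≤ 1) (i : ι) (T S : Finset ι) (hi : i ∉ S) :
    ∫ x, (erset Q γ i T S).indicator (fun _ => (1:ℝ)) x * q Q (T ∪ S) x ∂MU ι ≤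
      24 / γ ^ 2 * (Psi Q i T - Psi Q i (T ∪ S)) := by
  have := deficit_gen hQ i T S hi
    (fun x => γ ^ 2 / 24 * ((erset Q γ i T S).indicator (fun _ => (1:ℝ)) x * q Q (T ∪ S) x))
    ((BM.const _).mul ((BM.indicator (erset_meas hQ γ i T S)).mul (q_bm hQ _))) ?_ ?_
  · rw [integral_const_mul] at this
    have h2 := mul_le_mul_of_nonneg_left this (show 0 ≤ 24 / γ ^ 2 by positivity)
    refine le_trans (le_of_eq ?_) h2
    field_simp
  · intro x hx
    by_cases hm : x ∈ erset Q γ i T S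
    · simp only [Set.indicator, hm, if_true, one_mul]
      exact pointwise_key hγ hγ1 hx hm.2.1 (q_nonneg _ _) (q_nonneg _ _) hm.2.2
    · simp only [Set.indicator, hm, if_false, zero_mul, mul_zero, zero_add]
      exact pointwise_key0 hx (q_nonneg _ _) (q_nonneg _ _) (q_nonneg _ _)
  · intro x hx
    have hm : x ∉ erset Q γ i T S := fun h => by have := h.1; rw [hx] at this; exact lt_irrefl _ this
    simp [Set.indicator, hm]

/-- the event that the coordinates seen by `φ` form a bad copy inside the container -/
def Gset {α : Type} [Fintype α] [DecidableEq α] (Q : Set (ι → ℝ)) (B : Set (α → ℝ)) (γ : ℝ) (T : Finset ι) (φ : α → ι) :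
    Set (ι → ℝ) :=
  {x | 0 < q Q T x ∧ (fun j => x (φ j)) ∈ B ∧ ∀ j, γ * q Q T x ≤ q Q (insert (φ j) T) x}

variable {α : Type} [Fintype α] [DecidableEq α] {B : Set (α → ℝ)}

theorem Gset_meas (hQ : MeasurableSet Q) (hB : MeasurableSet B) (γ : ℝ) (T : Finset ι) (φ : α → ι) : MeasurableSet (Gset Q B γ T φ) := by
  have m1 := (q_bm hQ T).1
  have h1 := MeasurableSet.iInter (fun j : α =>
      measurableSet_le (m1.const_mul γ) (q_bm hQ (insert (φ j) T)).1)
  have h2 : MeasurableSet ((fun (x : ι → ℝ) (j : α) => x (φ j)) ⁻¹' B) :=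
    (show Measurable (fun (x : ι → ℝ) (j : α) => x (φ j)) by fun_prop) hB
  have h3 := (measurableSet_lt (measurable_const (a := (0:ℝ))) m1).inter (h2.inter h1)
  convert h3 using 1
  ext x
  simp [Gset]

theorem M0_bound (hQ : MeasurableSet Q) (hB : MeasurableSet B) {γ : ℝ} (hγ : 0 < γ) (hγ1 : γ ≤ 1) (T : Finset ι) (φ : α → ι)
    (hφ : Function.Injective φ) (hQB : ∀ x ∈ Q, (fun j => x (φ j)) ∉ B) :
    ∫ x, (Gset Q B γ T φ).indicator (fun _ => (1:ℝ)) x * q Q T x ∂MU ι ≤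
      (2 / γ) ^ Fintype.card α * (24 / γ ^ 2 *
        ∑ j, (Psi Q (φ j) T - Psi Q (φ j) (T ∪ (Finset.univ.erase j).image φ))) := by
  set G := Gset Q B γ T φ with hG
  have hGm : MeasurableSet G := Gset_meas hQ hB γ T φ
  have h2γ : 1 ≤ 2 / γ := by rw [le_div_iff₀ hγ]; linarith
  let M : Finset α → ℝ := fun F => ∫ x, G.indicator (fun _ => (1:ℝ)) x * q Q (T ∪ F.image φ) x ∂MU ι
  have hD : ∀ j, 0 ≤ Psi Q (φ j) T - Psi Q (φ j) (T ∪ (Finset.univ.erase j).image φ) := by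
    intro j
    have := psi_mono hQ (φ j) T ((Finset.univ.erase j).image φ) (by
      simp only [Finset.mem_image, Finset.mem_erase, not_exists, not_and]
      rintro k ⟨hk, _⟩ h
      exact hk (hφ h))
    linarith
  have step : ∀ (F : Finset α) (j : α), j ∉ F → M F ≤ 2 / γ * M (insert j F) + 24 / γ ^ 2 *
      (Psi Q (φ j) T - Psi Q (φ j) (T ∪ (Finset.univ.erase j).image φ)) := by
    intro F j hj
    have hjF : φ j ∉ F.image φ := by
      simp only [Finset.mem_image, not_exists, not_and]
      rintro k hk h
      exact hj (hφ h ▸ hk)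
    have h1 := deficit hQ hγ hγ1 (φ j) T (F.image φ) hjF
    have h2 : Psi Q (φ j) (T ∪ (Finset.univ.erase j).image φ) ≤ Psi Q (φ j) (T ∪ F.image φ) := by
      have := psi_mono hQ (φ j) (T ∪ F.image φ) ((Finset.univ.erase j).image φ) (by
        simp only [Finset.mem_image, Finset.mem_erase, not_exists, not_and]
        rintro k ⟨hk, _⟩ h
        exact hk (hφ h))
      have e : T ∪ F.image φ ∪ (Finset.univ.erase j).image φ = T ∪ (Finset.univ.erase j).image φ := by
        rw [Finset.union_assoc]
        congr 1
        refine Finset.union_eq_right.2 (Finset.image_subset_image ?_)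
        intro k hk
        simp only [Finset.mem_erase, Finset.mem_univ, and_true]
        rintro rfl
        exact hj hk
      rwa [e] at this
    have h3 : 24 / γ ^ 2 * (Psi Q (φ j) T - Psi Q (φ j) (T ∪ F.image φ)) ≤ 24 / γ ^ 2 *
      (Psi Q (φ j) T - Psi Q (φ j) (T ∪ (Finset.univ.erase j).image φ)) := by gcongr
    have e : T ∪ (insert j F).image φ = insert (φ j) (T ∪ F.image φ) := by
      rw [Finset.image_insert, Finset.union_insert]
    refine le_trans ?_ (add_le_add_right (h1.trans h3) _)
    simp only [M, e]
    rw [← integral_const_mul]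
    have b1 := (BM.indicator hGm).mul (q_bm hQ (T ∪ F.image φ))
    have b2 := (BM.const (X := ι → ℝ) (2/γ)).mul ((BM.indicator hGm).mul (q_bm hQ (insert (φ j) (T ∪ F.image φ))))
    have b3 := (BM.indicator (erset_meas hQ γ (φ j) T (F.image φ))).mul (q_bm hQ (T ∪ F.image φ))
    rw [← integral_add (b2.integrable _) (b3.integrable _)]
    refine integral_mono (b1.integrable _) ((b2.add b3).integrable _) fun x => ?_
    simp only
    have n3 := q_nonneg (Q := Q) (T ∪ F.image φ) x
    have n4 := q_nonneg (Q := Q) (insert (φ j) (T ∪ F.image φ)) x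
    by_cases hx : x ∈ G
    · by_cases hlt : q Q (insert (φ j) (T ∪ F.image φ)) x < γ / 2 * q Q (T ∪ F.image φ) x
      · have hm : x ∈ erset Q γ (φ j) T (F.image φ) := ⟨hx.1, hx.2.2 j, hlt⟩
        simp only [Set.indicator, hx, hm, if_true, one_mul]
        have : 0 ≤ 2 / γ * q Q (insert (φ j) (T ∪ F.image φ)) x := by positivity
        linarith
      · have hm : x ∉ erset Q γ (φ j) T (F.image φ) := fun h => hlt h.2.2
        simp only [Set.indicator, hx, hm, if_true, one_mul, if_false, zero_mul, add_zero]
        push Not at hlt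
        calc q Q (T ∪ F.image φ) x = 2 / γ * (γ / 2 * q Q (T ∪ F.image φ) x) := by field_simp
          _ ≤ _ := by gcongr
    · simp only [Set.indicator, hx, if_false, zero_mul, mul_zero, zero_add]
      split_ifs <;> simp [n3]
  have key : ∀ F : Finset α, M ∅ ≤ (2 / γ) ^ F.card * (M F + 24 / γ ^ 2 *
      ∑ j ∈ F, (Psi Q (φ j) T - Psi Q (φ j) (T ∪ (Finset.univ.erase j).image φ))) := by
    intro F
    induction F using Finset.induction_on with
    | empty => simp
    | insert j F hj ih =>
      refine ih.trans ?_
      rw [Finset.card_insert_of_notMem hj, Finset.sum_insert hj, pow_succ (2 / γ), mul_assoc]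
      refine mul_le_mul_of_nonneg_left ?_ (by positivity)
      have hs := step F j hj
      have hsum : 0 ≤ 24 / γ ^ 2 *
        ∑ j ∈ F, (Psi Q (φ j) T - Psi Q (φ j) (T ∪ (Finset.univ.erase j).image φ)) :=
        mul_nonneg (by positivity) (Finset.sum_nonneg fun j _ => hD j)
      have hj0 : 0 ≤ 24 / γ ^ 2 * (Psi Q (φ j) T - Psi Q (φ j) (T ∪ (Finset.univ.erase j).image φ)) :=
        mul_nonneg (by positivity) (hD j)
      rw [mul_add (24 / γ ^ 2)]
      nlinarith
  have hlast : M Finset.univ = 0 := by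
    simp only [M]
    rw [integral_mul_q hQ _ (BM.indicator hGm)]
    · rw [integral_eq_zero_of_ae]
      refine Eventually.of_forall fun x => ?_
      simp only [Set.indicator, Pi.zero_apply]
      by_cases hx : x ∈ Q
      · have : x ∉ G := fun h => hQB x hx h.2.1
        simp [this]
      · simp [hx]
    · intro x y hxy
      have a1 : q Q T x = q Q T y := q_dep T x y (fun j hj => hxy j (Finset.mem_union_left _ hj))
      have a2 : (fun j => x (φ j)) = (fun j => y (φ j)) := funext fun j =>
        hxy _ (Finset.mem_union_right _ (Finset.mem_image_of_mem _ (Finset.mem_univ j)))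
      have a3 : ∀ j, q Q (insert (φ j) T) x = q Q (insert (φ j) T) y := fun j =>
        q_dep _ x y fun k hk => by
          rcases Finset.mem_insert.1 hk with rfl | h
          · exact hxy _ (Finset.mem_union_right _ (Finset.mem_image_of_mem _ (Finset.mem_univ j)))
          · exact hxy k (Finset.mem_union_left _ h)
      have : x ∈ G ↔ y ∈ G := by
        simp only [hG, Gset, Set.mem_ofPred_eq, a1, a2, a3]
      by_cases hy : y ∈ G
      · simp [hy, this.2 hy]
      · have hx : x ∉ G := fun h => hy (this.1 h)
        simp [hy, hx]
  have := key Finset.univ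
  rw [hlast, zero_add] at this
  simpa [M] using this

end q
end SC

namespace SC
section comb
variable {ι : Type} [Fintype ι] [DecidableEq ι]

/-- weight of a set in the `τ`-random subset -/
def wt (τ : ℝ) (T : Finset ι) : ℝ := τ ^ T.card * (1 - τ) ^ (Fintype.card ι - T.card)

/-- expectation over a `τ`-random subset -/
def Lx (τ : ℝ) (F : Finset ι → ℝ) : ℝ := ∑ T : Finset ι, wt τ T * F T

theorem wt_nonneg {τ : ℝ} (h0 : 0 ≤ τ) (h1 : τ ≤ 1) (T : Finset ι) : 0 ≤ wt τ T :=
  mul_nonneg (pow_nonneg h0 _) (pow_nonneg (by linarith) _)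

theorem Lx_const (τ c : ℝ) : Lx τ (fun _ : Finset ι => c) = c := by
  have := Fintype.sum_pow_mul_eq_add_pow ι τ (1 - τ)
  simp only [Lx, wt, ← Finset.sum_mul, this]
  simp

theorem Lx_add (τ : ℝ) (F G : Finset ι → ℝ) : Lx τ (fun T => F T + G T) = Lx τ F + Lx τ G := by
  simp only [Lx, mul_add, Finset.sum_add_distrib]

theorem Lx_sub (τ : ℝ) (F G : Finset ι → ℝ) : Lx τ (fun T => F T - G T) = Lx τ F - Lx τ G := by
  simp only [Lx, mul_sub, Finset.sum_sub_distrib]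

theorem Lx_mul (τ c : ℝ) (F : Finset ι → ℝ) : Lx τ (fun T => c * F T) = c * Lx τ F := by
  simp only [Lx, Finset.mul_sum]
  exact Finset.sum_congr rfl fun _ _ => by ring

theorem Lx_sum {κ : Type} (τ : ℝ) (s : Finset κ) (F : κ → Finset ι → ℝ) :
    Lx τ (fun T => ∑ k ∈ s, F k T) = ∑ k ∈ s, Lx τ (F k) := by
  simp only [Lx, Finset.mul_sum]
  exact Finset.sum_comm

theorem Lx_mono {τ : ℝ} (h0 : 0 ≤ τ) (h1 : τ ≤ 1) {F G : Finset ι → ℝ} (h : ∀ T, F T ≤ G T) :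
    Lx τ F ≤ Lx τ G :=
  Finset.sum_le_sum fun T _ => mul_le_mul_of_nonneg_left (h T) (wt_nonneg h0 h1 T)

theorem Lx_exists {τ c : ℝ} (h0 : 0 ≤ τ) (h1 : τ ≤ 1) {F : Finset ι → ℝ} (h : Lx τ F ≤ c) :
    ∃ T, F T ≤ c := by
  by_contra hcon
  push Not at hcon
  have e : ∃ T : Finset ι, 0 < wt τ T := by
    by_contra hw
    push Not at hw
    have := Lx_const (ι := ι) τ 1
    have h2 : Lx τ (fun _ : Finset ι => (1:ℝ)) ≤ 0 := Finset.sum_nonpos fun T _ => by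
      have := hw T; linarith
    linarith
  obtain ⟨T0, hT0⟩ := e
  have : Lx τ (fun _ : Finset ι => c) < Lx τ F := by
    refine Finset.sum_lt_sum (fun T _ => mul_le_mul_of_nonneg_left (hcon T).le (wt_nonneg h0 h1 T))
      ⟨T0, Finset.mem_univ _, mul_lt_mul_of_pos_left (hcon T0) hT0⟩
  rw [Lx_const] at this
  linarith

theorem Lx_single (τ : ℝ) (s : ι) (F : Finset ι → ℝ) :
    Lx τ (fun T => if s ∈ T then F T else 0) = τ * Lx τ (fun T => F (insert s T)) := by
  have hsplit : ∀ g : Finset ι → ℝ, ∑ T : Finset ι, g T =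
      ∑ T ∈ (Finset.univ.erase s).powerset, (g T + g (insert s T)) := by
    intro g
    rw [← Finset.powerset_univ, ← Finset.insert_erase (Finset.mem_univ s),
      Finset.sum_powerset_insert (Finset.notMem_erase s _), Finset.sum_add_distrib]
    simp
  simp only [Lx]
  rw [hsplit, hsplit, Finset.mul_sum]
  refine Finset.sum_congr rfl fun T hT => ?_
  have hs : s ∉ T := fun h => by
    have := Finset.mem_powerset.1 hT h
    simp at this
  have hc : T.card < Fintype.card ι := by
    have : (insert s T).card ≤ Fintype.card ι := Finset.card_le_univ _
    rw [Finset.card_insert_of_notMem hs] at this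
    omega
  simp only [hs, if_false, Finset.mem_insert_self, if_true, Finset.insert_idem, mul_zero, zero_add]
  rw [← add_mul, ← mul_assoc]
  congr 1
  simp only [wt, Finset.card_insert_of_notMem hs]
  obtain ⟨k, hk⟩ := Nat.exists_eq_add_of_lt hc
  rw [hk, show T.card + k + 1 - T.card = k + 1 by omega, show T.card + k + 1 - (T.card + 1) = k by omega]
  ring

theorem Lx_subset (τ : ℝ) (S : Finset ι) : ∀ (F : Finset ι → ℝ),
    Lx τ (fun T => if S ⊆ T then F T else 0) = τ ^ S.card * Lx τ (fun T => F (T ∪ S)) := by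
  induction S using Finset.induction_on with
  | empty => intro F; simp
  | insert s S hs ih =>
    intro F
    have e1 : (fun T => if insert s S ⊆ T then F T else 0) =
        (fun T => if s ∈ T then (if S ⊆ T then F T else 0) else 0) := by
      funext T
      by_cases h1 : s ∈ T <;> by_cases h2 : S ⊆ T <;> simp [Finset.insert_subset_iff, h1, h2]
    rw [e1, Lx_single]
    have e2 : (fun T => (if S ⊆ insert s T then F (insert s T) else 0)) =
        (fun T => if S ⊆ T then F (insert s T) else 0) := by
      funext T
      simp only [Finset.subset_insert_iff_of_notMem hs]
    rw [e2, ih, Finset.card_insert_of_notMem hs, pow_succ]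
    have e3 : (fun T => F (insert s (T ∪ S))) = (fun T => F (T ∪ insert s S)) := by
      funext T; rw [Finset.union_insert]
    rw [e3]
    ring

/-- variance bound -/
theorem var_bound {α : Type} [Fintype α] [DecidableEq α] {τ : ℝ} (h0 : 0 ≤ τ) (h1 : τ ≤ 1)
    (E : Finset (α → ι)) (s : ℕ) (S : (α → ι) → Finset ι) (hS : ∀ φ ∈ E, (S φ).card = s) :
    Lx τ (fun T => (∑ φ ∈ E, ((if S φ ⊆ T then (1:ℝ) else 0) - τ ^ s)) ^ 2) ≤
      (((E ×ˢ E).filter fun p => ¬ Disjoint (S p.1) (S p.2)).card : ℝ) := by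
  have e1 : ∀ T : Finset ι, (∑ φ ∈ E, ((if S φ ⊆ T then (1:ℝ) else 0) - τ ^ s)) ^ 2 =
      ∑ p ∈ E ×ˢ E, ((if S p.1 ⊆ T then (1:ℝ) else 0) - τ ^ s) *
        ((if S p.2 ⊆ T then (1:ℝ) else 0) - τ ^ s) := by
    intro T
    rw [sq, Finset.sum_mul_sum, Finset.sum_product]
  simp only [e1]
  rw [Lx_sum, Finset.card_filter]
  push_cast
  refine Finset.sum_le_sum fun p hp => ?_
  have hp1 := hS _ (Finset.mem_product.1 hp).1
  have hp2 := hS _ (Finset.mem_product.1 hp).2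
  have ht0 : 0 ≤ τ ^ s := pow_nonneg h0 _
  have ht1 : τ ^ s ≤ 1 := pow_le_one₀ h0 h1
  by_cases hd : Disjoint (S p.1) (S p.2)
  · simp only [hd, not_true, if_false]
    have e2 : (fun T : Finset ι => ((if S p.1 ⊆ T then (1:ℝ) else 0) - τ ^ s) *
        ((if S p.2 ⊆ T then (1:ℝ) else 0) - τ ^ s)) =
        fun T => ((if S p.1 ∪ S p.2 ⊆ T then 1 else 0) - τ ^ s * (if S p.1 ⊆ T then (1:ℝ) else 0))
          - (τ ^ s * (if S p.2 ⊆ T then (1:ℝ) else 0) - τ ^ s * τ ^ s) := by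
      funext T
      by_cases a : S p.1 ⊆ T <;> by_cases b : S p.2 ⊆ T <;> simp [Finset.union_subset_iff, a, b] <;> ring
    rw [e2, Lx_sub, Lx_sub, Lx_sub, Lx_mul, Lx_mul, Lx_const, Lx_subset τ _ (fun _ => 1),
      Lx_subset τ _ (fun _ => 1), Lx_subset τ _ (fun _ => 1), Lx_const,
      Finset.card_union_of_disjoint hd, hp1, hp2, pow_add]
    apply le_of_eq
    ring
  · simp only [hd, not_false_iff, if_true]
    refine le_trans (Lx_mono (G := fun _ => 1) h0 h1 fun T => ?_) (le_of_eq (Lx_const τ 1))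
    have : ∀ c : Prop, ∀ _ : Decidable c, |(if c then (1:ℝ) else 0) - τ ^ s| ≤ 1 := by
      intro c _
      split_ifs <;> rw [abs_le] <;> constructor <;> linarith
    refine (le_abs_self _).trans ?_
    rw [abs_mul]
    exact mul_le_one₀ (this _ _) (abs_nonneg _) (this _ _)

theorem energy_bound {α : Type} [Fintype α] [DecidableEq α] {τ : ℝ} (h0 : 0 < τ) (h1 : τ ≤ 1)
    (E : Finset (α → ι)) (hE : ∀ φ ∈ E, Function.Injective φ) (j : α)
    (F : ι → Finset ι → ℝ) (c : ℝ) (hF0 : ∀ i T, 0 ≤ F i T) (hFc : ∀ i T, F i T ≤ c)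
    (ρ : ℝ) (hρ : 0 < ρ) :
    ∑ φ ∈ E, Lx τ (fun T => F (φ j) T - F (φ j) (T ∪ (Finset.univ.erase j).image φ)) ≤
      c / τ ^ (Fintype.card α - 1) * (ρ * Fintype.card ι + ρ⁻¹ *
        (((E ×ˢ E).filter fun p =>
          1 < ((Finset.univ.image p.1) ∩ (Finset.univ.image p.2)).card).card : ℝ)) := by
  set s := Fintype.card α - 1 with hs
  set S : (α → ι) → Finset ι := fun φ => (Finset.univ.erase j).image φ with hSdef
  have hScard : ∀ φ ∈ E, (S φ).card = s := by
    intro φ hφ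
    rw [hSdef]
    simp only
    rw [Finset.card_image_of_injective _ (hE φ hφ), Finset.card_erase_of_mem (Finset.mem_univ _)]
    simp [hs]
  have hτs : 0 < τ ^ s := by positivity
  let Ei : ι → Finset (α → ι) := fun i => E.filter fun φ => φ j = i
  let Z : ι → Finset ι → ℝ := fun i T => ∑ φ ∈ Ei i, ((if S φ ⊆ T then (1:ℝ) else 0) - τ ^ s)
  have hc : 0 ≤ c ∨ IsEmpty ι := by
    by_cases h : Nonempty ι
    · obtain ⟨i⟩ := h
      exact Or.inl ((hF0 i ∅).trans (hFc i ∅))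
    · exact Or.inr (not_nonempty_iff.1 h)
  have hone : ∀ i, ∑ φ ∈ Ei i, Lx τ (fun T => F i T - F i (T ∪ S φ)) =
      - (τ ^ s)⁻¹ * Lx τ (fun T => Z i T * F i T) := by
    intro i
    have : Lx τ (fun T => Z i T * F i T) = ∑ φ ∈ Ei i, Lx τ (fun T =>
        (if S φ ⊆ T then F i T else 0) - τ ^ s * F i T) := by
      rw [← Lx_sum]
      congr 1
      funext T
      simp only [Z]
      rw [Finset.sum_mul]
      refine Finset.sum_congr rfl fun φ _ => ?_
      split_ifs <;> ring
    rw [this, Finset.mul_sum]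
    refine Finset.sum_congr rfl fun φ hφ => ?_
    rw [Lx_sub, Lx_sub, Lx_subset, Lx_mul, hScard φ (Finset.mem_filter.1 hφ).1]
    field_simp
    ring
  have hZ : ∀ i, ∑ φ ∈ Ei i, Lx τ (fun T => F i T - F i (T ∪ S φ)) ≤
      c / τ ^ s * (ρ + ρ⁻¹ * (((Ei i ×ˢ Ei i).filter fun p => ¬ Disjoint (S p.1) (S p.2)).card : ℝ)) := by
    intro i
    have hc0 : 0 ≤ c := (hF0 i ∅).trans (hFc i ∅)
    rw [hone]
    have hv := var_bound h0.le h1 (Ei i) s S (fun φ hφ => hScard φ (Finset.mem_filter.1 hφ).1)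
    have : - (τ ^ s)⁻¹ * Lx τ (fun T => Z i T * F i T) = (τ ^ s)⁻¹ * Lx τ (fun T => -1 * (Z i T * F i T)) := by
      rw [Lx_mul]; ring
    rw [this]
    have h2 : Lx τ (fun T => -1 * (Z i T * F i T)) ≤ Lx τ (fun T => c * (ρ + ρ⁻¹ * Z i T ^ 2)) := by
      refine Lx_mono h0.le h1 fun T => ?_
      have a1 : |Z i T| ≤ ρ + ρ⁻¹ * Z i T ^ 2 := by
        have hx : 0 ≤ (|Z i T| - ρ) ^ 2 := sq_nonneg _
        have hy : |Z i T| ^ 2 = Z i T ^ 2 := sq_abs _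
        have : |Z i T| * ρ ≤ ρ * ρ + Z i T ^ 2 := by
          have := abs_nonneg (Z i T)
          nlinarith
        calc |Z i T| = |Z i T| * ρ * ρ⁻¹ := by field_simp
          _ ≤ (ρ * ρ + Z i T ^ 2) * ρ⁻¹ := by gcongr
          _ = _ := by field_simp
      calc -1 * (Z i T * F i T) ≤ |Z i T| * F i T := by
            have := neg_abs_le (Z i T)
            have := hF0 i T
            nlinarith
        _ ≤ |Z i T| * c := by have := hFc i T; gcongr
        _ ≤ (ρ + ρ⁻¹ * Z i T ^ 2) * c := by gcongr
        _ = _ := by ring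
    rw [Lx_mul τ c (fun T => ρ + ρ⁻¹ * Z i T ^ 2), Lx_add, Lx_const, Lx_mul τ ρ⁻¹] at h2
    calc (τ ^ s)⁻¹ * Lx τ (fun T => -1 * (Z i T * F i T))
        ≤ (τ ^ s)⁻¹ * (c * (ρ + ρ⁻¹ * Lx τ (fun T => Z i T ^ 2))) := by gcongr
      _ ≤ (τ ^ s)⁻¹ * (c * (ρ + ρ⁻¹ * (((Ei i ×ˢ Ei i).filter fun p => ¬ Disjoint (S p.1) (S p.2)).card : ℝ))) := by
          gcongr
      _ = _ := by ring
  have hsum : ∑ φ ∈ E, Lx τ (fun T => F (φ j) T - F (φ j) (T ∪ S φ)) =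
      ∑ i, ∑ φ ∈ Ei i, Lx τ (fun T => F i T - F i (T ∪ S φ)) := by
    rw [← Finset.sum_fiberwise_of_maps_to (s := E) (t := Finset.univ) (g := fun φ => φ j)
      (fun _ _ => Finset.mem_univ _)]
    refine Finset.sum_congr rfl fun i _ => Finset.sum_congr rfl fun φ hφ => ?_
    rw [(Finset.mem_filter.1 hφ).2]
  rw [hsum]
  refine (Finset.sum_le_sum fun i _ => hZ i).trans ?_
  rw [← Finset.mul_sum, Finset.sum_add_distrib, ← Finset.mul_sum]
  have hcount : ∑ i, (((Ei i ×ˢ Ei i).filter fun p => ¬ Disjoint (S p.1) (S p.2)).card : ℝ) ≤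
      (((E ×ˢ E).filter fun p =>
          1 < ((Finset.univ.image p.1) ∩ (Finset.univ.image p.2)).card).card : ℝ) := by
    rw [← Nat.cast_sum, Nat.cast_le, ← Finset.card_biUnion]
    · refine Finset.card_le_card ?_
      intro p hp
      simp only [Finset.mem_biUnion, Finset.mem_univ, true_and, Finset.mem_filter,
        Finset.mem_product, Ei] at hp ⊢
      obtain ⟨i, ⟨⟨h1, h1'⟩, h2, h2'⟩, h3⟩ := hp
      refine ⟨⟨h1, h2⟩, ?_⟩
      rw [Finset.not_disjoint_iff] at h3
      obtain ⟨a, ha1, ha2⟩ := h3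
      simp only [hSdef, Finset.mem_image, Finset.mem_erase, Finset.mem_univ, and_true] at ha1 ha2
      obtain ⟨k, hk, rfl⟩ := ha1
      obtain ⟨l, hl, hl2⟩ := ha2
      rw [Finset.one_lt_card]
      refine ⟨i, ?_, p.1 k, ?_, ?_⟩
      · simp only [Finset.mem_inter, Finset.mem_image, Finset.mem_univ, true_and]
        exact ⟨⟨j, h1'⟩, ⟨j, h2'⟩⟩
      · simp only [Finset.mem_inter, Finset.mem_image, Finset.mem_univ, true_and]
        exact ⟨⟨k, rfl⟩, ⟨l, hl2⟩⟩
      · rw [← h1']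
        exact fun h => hk (hE _ h1 h).symm
    · intro i _ i' _ hii'
      rw [Function.onFun, Finset.disjoint_left]
      intro p hp hp'
      simp only [Finset.mem_filter, Finset.mem_product, Ei] at hp hp'
      exact hii' (hp.1.1.2.symm.trans hp'.1.1.2)
  rcases hc with hc | hc
  · have : ∑ _i : ι, ρ = ρ * Fintype.card ι := by
      rw [Finset.sum_const, nsmul_eq_mul, Finset.card_univ, mul_comm]
    rw [this]
    gcongr
  · have : E = ∅ := by
      refine Finset.eq_empty_of_forall_notMem fun φ _ => hc.elim (φ j)
    subst this
    simp

theorem pair_count {α : Type} [Fintype α] [DecidableEq α]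
    (E : Finset (α → ι)) (hE : ∀ φ ∈ E, Function.Injective φ) :
    ((E ×ˢ E).filter fun p =>
          1 < ((Finset.univ.image p.1) ∩ (Finset.univ.image p.2)).card).card ≤
    ((E ×ˢ E).filter fun p =>
          1 < ((Finset.univ.image p.1) ∩ (Finset.univ.image p.2)).card ∧
          ((Finset.univ.image p.1) ∩ (Finset.univ.image p.2)).card < Fintype.card α).card +
      Fintype.card α ^ Fintype.card α * E.card := by
  set A := ((E ×ˢ E).filter fun p =>
          1 < ((Finset.univ.image p.1) ∩ (Finset.univ.image p.2)).card ∧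
          ((Finset.univ.image p.1) ∩ (Finset.univ.image p.2)).card < Fintype.card α)
  let Bs : Finset ((α → ι) × (α → ι)) := E.biUnion fun φ => (Finset.univ : Finset (α → α)).image fun f => (φ, φ ∘ f)
  have hB : Bs.card ≤ Fintype.card α ^ Fintype.card α * E.card := by
    refine (Finset.card_biUnion_le).trans ?_
    rw [mul_comm, ← smul_eq_mul]
    refine Finset.sum_le_card_nsmul _ _ _ fun φ _ => ?_
    refine Finset.card_image_le.trans ?_
    simp
  refine le_trans (Finset.card_le_card (t := A ∪ Bs) ?_) ((Finset.card_union_le _ _).trans (by gcongr))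
  intro p hp
  rw [Finset.mem_filter] at hp
  obtain ⟨hp, h1⟩ := hp
  by_cases h2 : ((Finset.univ.image p.1) ∩ (Finset.univ.image p.2)).card < Fintype.card α
  · exact Finset.mem_union_left _ (Finset.mem_filter.2 ⟨hp, h1, h2⟩)
  · refine Finset.mem_union_right _ ?_
    have hp' := Finset.mem_product.1 hp
    have c2 : (Finset.univ.image p.2).card = Fintype.card α := by
      rw [Finset.card_image_of_injective _ (hE _ hp'.2), Finset.card_univ]
    have h3 : Finset.univ.image p.1 ∩ Finset.univ.image p.2 = Finset.univ.image p.2 :=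
      Finset.eq_of_subset_of_card_le Finset.inter_subset_right (by omega)
    have h4 : ∀ a, ∃ b, p.1 b = p.2 a := by
      intro a
      have : p.2 a ∈ Finset.univ.image p.1 ∩ Finset.univ.image p.2 := by
        rw [h3]; exact Finset.mem_image_of_mem _ (Finset.mem_univ _)
      have := (Finset.mem_inter.1 this).1
      simpa using this
    choose f hf using h4
    simp only [Bs, Finset.mem_biUnion, Finset.mem_image, Finset.mem_univ, true_and]
    exact ⟨p.1, hp'.1, f, Prod.ext rfl (funext hf)⟩

end comb
end SC

namespace SC
section chooseT
variable {ι : Type} [Fintype ι] [DecidableEq ι] {α : Type} [Fintype α] [DecidableEq α]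

theorem choose_T {Q : Set (ι → ℝ)} (hQ : MeasurableSet Q) {B : Set (α → ℝ)} (hB : MeasurableSet B)
    (E : Finset (α → ι)) (hE : ∀ φ ∈ E, Function.Injective φ)
    (hQB : ∀ φ ∈ E, ∀ x ∈ Q, (fun j => x (φ j)) ∉ B)
    {τ γ ρ : ℝ} (h0 : 0 < τ) (h1 : τ ≤ 1) (hγ : 0 < γ) (hγ1 : γ ≤ 1) (hρ : 0 < ρ) :
    ∃ T : Finset ι,
      ((E.filter fun φ => ∃ j, φ j ∈ T).card : ℝ) * (MU ι).real Q +
        ∑ φ ∈ E, ∫ x, (Gset Q B γ T φ).indicator (fun _ => (1:ℝ)) x * q Q T x ∂MU ι ≤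
      (MU ι).real Q * (E.card * (Fintype.card α * τ) + (2 / γ) ^ Fintype.card α * (24 / γ ^ 2) *
        (Fintype.card α * (1 / τ ^ (Fintype.card α - 1) * (ρ * Fintype.card ι + ρ⁻¹ *
        (((E ×ˢ E).filter fun p =>
          1 < ((Finset.univ.image p.1) ∩ (Finset.univ.image p.2)).card).card : ℝ))))) := by
  set m := (MU ι).real Q with hm
  have hm0 : 0 ≤ m := measureReal_nonneg
  set K : ℝ := (((E ×ˢ E).filter fun p =>
          1 < ((Finset.univ.image p.1) ∩ (Finset.univ.image p.2)).card).card : ℝ) with hK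
  set Cγ : ℝ := (2 / γ) ^ Fintype.card α * (24 / γ ^ 2) with hC
  have hC0 : 0 ≤ Cγ := by positivity
  -- pointwise bound
  have hpt : ∀ T : Finset ι, ((E.filter fun φ => ∃ j, φ j ∈ T).card : ℝ) * m +
        ∑ φ ∈ E, ∫ x, (Gset Q B γ T φ).indicator (fun _ => (1:ℝ)) x * q Q T x ∂MU ι ≤
      m * (∑ φ ∈ E, ∑ j, if φ j ∈ T then (1:ℝ) else 0) +
      Cγ * ∑ j, ∑ φ ∈ E, (Psi Q (φ j) T - Psi Q (φ j) (T ∪ (Finset.univ.erase j).image φ)) := by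
    intro T
    refine add_le_add ?_ ?_
    · rw [mul_comm]
      refine mul_le_mul_of_nonneg_left ?_ hm0
      rw [Finset.card_filter]
      push_cast
      refine Finset.sum_le_sum fun φ _ => ?_
      have hnn : ∀ j ∈ Finset.univ, (0:ℝ) ≤ if φ j ∈ T then (1:ℝ) else 0 := by
        intro j _; split_ifs <;> norm_num
      split_ifs with h
      · obtain ⟨j, hj⟩ := h
        have := Finset.single_le_sum hnn (Finset.mem_univ j)
        simpa [hj] using this
      · exact Finset.sum_nonneg hnn
    · rw [Finset.sum_comm, Finset.mul_sum]
      refine Finset.sum_le_sum fun φ hφ => ?_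
      have := M0_bound hQ hB hγ hγ1 T φ (hE φ hφ) (hQB φ hφ)
      rw [hC]; rw [mul_assoc]; exact this
  have hL : Lx τ (fun T => ((E.filter fun φ => ∃ j, φ j ∈ T).card : ℝ) * m +
        ∑ φ ∈ E, ∫ x, (Gset Q B γ T φ).indicator (fun _ => (1:ℝ)) x * q Q T x ∂MU ι) ≤
      m * (E.card * (Fintype.card α * τ) + Cγ *
        (Fintype.card α * (1 / τ ^ (Fintype.card α - 1) * (ρ * Fintype.card ι + ρ⁻¹ * K)))) := by
    refine (Lx_mono h0.le h1 hpt).trans ?_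
    rw [Lx_add, Lx_mul, Lx_mul, Lx_sum, Lx_sum, mul_add]
    refine add_le_add ?_ ?_
    · refine mul_le_mul_of_nonneg_left (le_of_eq ?_) hm0
      have : ∀ φ ∈ E, Lx τ (fun T => ∑ j, if φ j ∈ T then (1:ℝ) else 0) = Fintype.card α * τ := by
        intro φ _
        rw [Lx_sum]
        have : ∀ j, Lx τ (fun T => if φ j ∈ T then (1:ℝ) else 0) = τ := by
          intro j
          rw [Lx_single τ (φ j) (fun _ => 1), Lx_const, mul_one]
        simp [this]
      rw [Finset.sum_congr rfl this]
      simp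
    · have : ∀ j ∈ (Finset.univ : Finset α), Lx τ (fun T => ∑ φ ∈ E, (Psi Q (φ j) T - Psi Q (φ j) (T ∪ (Finset.univ.erase j).image φ)))
          ≤ m / τ ^ (Fintype.card α - 1) * (ρ * Fintype.card ι + ρ⁻¹ * K) := by
        intro j _
        rw [Lx_sum]
        exact energy_bound h0 h1 E hE j (Psi Q) m (fun i T => psi_nonneg i T) (fun i T => psi_le hQ i T) ρ hρ
      have := mul_le_mul_of_nonneg_left (Finset.sum_le_sum this) hC0
      refine this.trans (le_of_eq ?_)
      simp
      ring
  exact Lx_exists h0.le h1 hL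

end chooseT
end SC

set_option linter.unusedSectionVars false
namespace SC
section cont
variable {ι : Type} [Fintype ι] [DecidableEq ι] {α : Type} [Fintype α] [DecidableEq α]

theorem MU_eq (ι : Type) [Fintype ι] : MU ι = (volume : Measure (ι → ℝ)).restrict (unitCube ι) := by
  unfold MU mu0 unitCube
  rw [volume_pi, Measure.restrict_pi_pi]

theorem vol_eq {A : Set (ι → ℝ)} (hA : MeasurableSet A) (h : A ⊆ unitCube ι) : volume A = MU ι A := by
  rw [MU_eq, Measure.restrict_apply hA, Set.inter_eq_self_of_subset_left h]

theorem cube_meas : MeasurableSet (unitCube ι) :=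
  MeasurableSet.univ_pi fun _ => measurableSet_Icc

theorem map_comp (φ : α → ι) (hφ : Function.Injective φ) :
    (MU ι).map (fun y j => y (φ j)) = MU α := by
  symm
  refine Measure.pi_eq fun s hs => ?_
  rw [Measure.map_apply (by fun_prop) (MeasurableSet.univ_pi hs)]
  have : (fun (y : ι → ℝ) (j : α) => y (φ j)) ⁻¹' (Set.univ.pi s)
      = Set.univ.pi fun i => ⋂ j, ⋂ (_ : φ j = i), s j := by
    ext y
    simp only [Set.mem_preimage, Set.mem_pi, Set.mem_univ, true_imp_iff, Set.mem_iInter]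
    constructor
    · rintro h i j rfl; exact h j
    · intro h j; exact h _ j rfl
  rw [this]
  unfold MU
  rw [Measure.pi_pi]
  rw [← Finset.prod_subset (Finset.subset_univ (Finset.univ.image φ)), Finset.prod_image (fun a _ b _ h => hφ h)]
  · refine Finset.prod_congr rfl fun j _ => ?_
    congr 1
    ext a
    simp only [Set.mem_iInter]
    constructor
    · intro h; exact h j rfl
    · intro h k hk; rw [hφ hk]; exact h
  · intro i _ hi
    have : (⋂ j, ⋂ (_ : φ j = i), s j) = Set.univ := by
      ext a
      simp only [Set.mem_iInter, Set.mem_univ, iff_true]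
      intro j hj
      exact absurd (Finset.mem_image.2 ⟨j, Finset.mem_univ _, hj⟩) hi
    rw [this]; simp

/-- fibres of the container box -/
def Aset (Q : Set (ι → ℝ)) (γ κ : ℝ) (T : Finset ι) (x : ι → ℝ) (i : ι) : Set ℝ :=
  if i ∈ T then Set.Icc 0 1 else
    (Set.Icc 0 1 ∩ {a | γ * q Q T x ≤ q Q (insert i T) (Function.update x i a)}) ∪ Set.Icc 0 κ

theorem Aset_meas {Q : Set (ι → ℝ)} (hQ : MeasurableSet Q) (γ κ : ℝ) (T : Finset ι) (x i) :
    MeasurableSet (Aset Q γ κ T x i) := by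
  unfold Aset
  split_ifs
  · exact measurableSet_Icc
  · refine (measurableSet_Icc.inter ?_).union measurableSet_Icc
    exact measurableSet_le measurable_const ((q_bm hQ _).1.comp (measurable_update x))

theorem Aset_sub {Q : Set (ι → ℝ)} {γ κ : ℝ} (hκ : κ ≤ 1) (T : Finset ι) (x i) :
    Aset Q γ κ T x i ⊆ Set.Icc 0 1 := by
  unfold Aset
  split_ifs
  · exact le_rfl
  · exact Set.union_subset Set.inter_subset_left (Set.Icc_subset_Icc le_rfl hκ)

theorem Aset_sup {Q : Set (ι → ℝ)} {γ κ : ℝ} (hκ : κ ≤ 1) (T : Finset ι) (x i) :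
    Set.Icc 0 κ ⊆ Aset Q γ κ T x i := by
  unfold Aset
  split_ifs
  · exact Set.Icc_subset_Icc le_rfl hκ
  · exact Set.subset_union_right

theorem proj_sub (φ : α → ι) (hφ : Function.Injective φ) (A : ι → Set ℝ) :
    projBody φ (Set.univ.pi A) ⊆ {c | ∀ j, c j ∈ A (φ j)} := by
  intro c hc j
  simp only [projBody, Set.mem_ofPred_eq] at hc
  obtain ⟨d, hd⟩ := nonempty_of_measure_ne_zero hc.ne'
  have := hd (φ j) (Set.mem_univ _)
  have hr : φ j ∈ Set.range φ := ⟨j, rfl⟩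
  simp only [hr, dif_pos] at this
  rwa [hφ hr.choose_spec] at this

theorem proj_vol_le_one (φ : α → ι) (hφ : Function.Injective φ) (A : ι → Set ℝ)
    (hA : ∀ i, A i ⊆ Set.Icc 0 1) (R : Set (α → ℝ)) :
    (volume (projBody φ (Set.univ.pi A) \ R)).toReal ≤ 1 := by
  have h : projBody φ (Set.univ.pi A) \ R ⊆ unitCube α := fun c hc j _ =>
    hA _ (proj_sub φ hφ A hc.1 j)
  have h2 := measure_mono (μ := (volume : Measure (α → ℝ))) h
  rw [vol_eq cube_meas le_rfl] at h2
  exact ENNReal.toReal_le_of_le_ofReal zero_le_one (by simpa using h2.trans prob_le_one)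

theorem proj_vol {Q : Set (ι → ℝ)} (hQ : MeasurableSet Q) {γ κ : ℝ} (hκ0 : 0 ≤ κ) (hκ : κ ≤ 1)
    (T : Finset ι) (x : ι → ℝ) (hx : 0 < q Q T x) (φ : α → ι) (hφ : Function.Injective φ)
    (hT : ∀ j, φ j ∉ T) {R : Set (α → ℝ)} (hR : MeasurableSet R) :
    (volume (projBody φ (Set.univ.pi (Aset Q γ κ T x)) \ R)).toReal ≤
      Fintype.card α * κ + cE T ((Gset Q (unitCube α \ R) γ T φ).indicator fun _ => (1:ℝ)) x := by
  set D : Set (α → ℝ) := {c | c ∈ unitCube α \ R ∧ ∀ j, γ * q Q T x ≤ q Q (insert (φ j) T) (Function.update x (φ j) (c j))} with hD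
  have hDm : MeasurableSet D := by
    have := MeasurableSet.iInter (fun j : α => measurableSet_le (measurable_const (a := γ * q Q T x))
      ((q_bm hQ (insert (φ j) T)).1.comp ((measurable_update x (a := φ j)).comp (measurable_pi_apply j))))
    convert (cube_meas.diff hR).inter this using 1
    ext c
    simp [hD]
  let Sj : α → Set (α → ℝ) := fun j => Set.univ.pi fun k => if k = j then Set.Icc 0 κ else Set.Icc 0 1
  have hSjm : ∀ j, MeasurableSet (Sj j) := fun j => MeasurableSet.univ_pi fun k => by
    split_ifs <;> exact measurableSet_Icc
  have hsub : projBody φ (Set.univ.pi (Aset Q γ κ T x)) \ R ⊆ (⋃ j, Sj j) ∪ D := by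
    rintro c ⟨hc, hcR⟩
    have hc' := proj_sub φ hφ _ hc
    have hcube : ∀ j, c j ∈ Set.Icc (0:ℝ) 1 := fun j => Aset_sub hκ T x _ (hc' j)
    by_cases h : ∃ j, c j ∈ Set.Icc 0 κ
    · left
      obtain ⟨j, hj⟩ := h
      refine Set.mem_iUnion.2 ⟨j, fun k _ => ?_⟩
      by_cases hk : k = j
      · subst hk; simpa using hj
      · simpa [hk] using hcube k
    · right
      push Not at h
      refine ⟨⟨fun j _ => hcube j, hcR⟩, fun j => ?_⟩
      have := hc' j
      rw [Aset, if_neg (hT j)] at this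
      rcases this with h1 | h1
      · exact h1.2
      · exact absurd h1 (h j)
  have hSvol : ∀ j, volume (Sj j) ≤ ENNReal.ofReal κ := by
    intro j
    simp only [Sj, volume_pi, Measure.pi_pi]
    rw [Finset.prod_eq_single j]
    · simp
    · intro k _ hk; simp [hk]
    · simp
  have hDvol : volume D = ENNReal.ofReal (cE T ((Gset Q (unitCube α \ R) γ T φ).indicator fun _ => (1:ℝ)) x) := by
    rw [vol_eq hDm (fun c hc => hc.1.1), ← map_comp φ hφ, Measure.map_apply (by fun_prop) hDm]
    have hG := Gset_meas hQ (cube_meas.diff hR) γ T φ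
    have : (fun y => (Gset Q (unitCube α \ R) γ T φ).indicator (fun _ => (1:ℝ)) (T.piecewise x y)) =
        ((fun (y : ι → ℝ) (j : α) => y (φ j)) ⁻¹' D).indicator (fun _ => (1:ℝ)) := by
      funext y
      have hiff : T.piecewise x y ∈ Gset Q (unitCube α \ R) γ T φ ↔ y ∈ (fun (y : ι → ℝ) (j : α) => y (φ j)) ⁻¹' D := by
        have e1 : q Q T (T.piecewise x y) = q Q T x := q_dep T _ _ fun i hi => by simp [hi]
        have e2 : ∀ j, q Q (insert (φ j) T) (T.piecewise x y) =
            q Q (insert (φ j) T) (Function.update x (φ j) (y (φ j))) := by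
          intro j
          refine q_dep _ _ _ fun i hi => ?_
          rcases Finset.mem_insert.1 hi with rfl | hi
          · simp [hT j]
          · have : i ≠ φ j := fun h => hT j (h ▸ hi)
            simp [hi, this]
        have e3 : (fun j => T.piecewise x y (φ j)) = fun j => y (φ j) := by
          funext j; simp [hT j]
        simp only [Gset, hD, Set.mem_preimage, Set.mem_ofPred_eq, e1, e2, e3, hx, true_and]
      by_cases h : y ∈ (fun (y : ι → ℝ) (j : α) => y (φ j)) ⁻¹' D
      · rw [Set.indicator_of_mem h, Set.indicator_of_mem (hiff.2 h)]
      · rw [Set.indicator_of_notMem h, Set.indicator_of_notMem (fun h' => h (hiff.1 h'))]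
    rw [cE, this, integral_indicator ((show Measurable fun (y : ι → ℝ) (j : α) => y (φ j) by fun_prop) hDm)]
    simp
  have hβ : 0 ≤ cE T ((Gset Q (unitCube α \ R) γ T φ).indicator fun _ => (1:ℝ)) x :=
    cE_nonneg T (fun x => Set.indicator_nonneg (fun _ _ => zero_le_one) x) x
  refine ENNReal.toReal_le_of_le_ofReal (by positivity) ?_
  rw [ENNReal.ofReal_add (by positivity) hβ, ← hDvol]
  refine (measure_mono hsub).trans ((measure_union_le _ _).trans ?_)
  gcongr
  refine (measure_iUnion_fintype_le _ _).trans ((Finset.sum_le_sum fun j _ => hSvol j).trans ?_)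
  rw [Finset.sum_const, nsmul_eq_mul, ENNReal.ofReal_mul (by positivity)]
  simp

/-- weights -/
def wgt (Q : Set (ι → ℝ)) (γ κ : ℝ) (T : Finset ι) (x : ι → ℝ) (i : ι) (a : ℝ) : ℝ :=
  if i ∈ T then 1 else (Aset Q γ κ T x i).indicator (fun _ => 1 - κ ^ 2) a + κ ^ 2

theorem Aset_congr {Q : Set (ι → ℝ)} {γ κ : ℝ} {T : Finset ι} {x y : ι → ℝ} (h : ∀ i ∈ T, x i = y i) (i : ι) :
    Aset Q γ κ T x i = Aset Q γ κ T y i := by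
  unfold Aset
  split_ifs with hi
  · rfl
  · have e1 : q Q T x = q Q T y := q_dep T _ _ h
    have e2 : ∀ a, q Q (insert i T) (Function.update x i a) = q Q (insert i T) (Function.update y i a) := by
      intro a
      refine q_dep _ _ _ fun k hk => ?_
      rcases Finset.mem_insert.1 hk with rfl | hk
      · simp
      · have : k ≠ i := fun h => hi (h ▸ hk)
        simp [this, h k hk]
    simp only [e1, e2]

theorem wgt_pos {Q : Set (ι → ℝ)} {γ κ : ℝ} (hκ0 : 0 ≤ κ) (hκ : κ ≤ 1) (T : Finset ι) (x i a) :
    κ ^ 2 ≤ wgt Q γ κ T x i a ∧ wgt Q γ κ T x i a ≤ 1 := by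
  have h2 : κ ^ 2 ≤ 1 := pow_le_one₀ hκ0 hκ
  unfold wgt
  split_ifs
  · exact ⟨h2, le_rfl⟩
  · by_cases h : a ∈ Aset Q γ κ T x i
    · simp [h, h2]
    · simp [h, h2]

theorem wgt_meas {Q : Set (ι → ℝ)} (hQ : MeasurableSet Q) {γ κ : ℝ} (T : Finset ι) (i) :
    Measurable (fun x : ι → ℝ => wgt Q γ κ T x i (x i)) := by
  unfold wgt
  split_ifs with hi
  · exact measurable_const
  · refine Measurable.add ?_ measurable_const
    have hm : MeasurableSet {x : ι → ℝ | x i ∈ Aset Q γ κ T x i} := by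
      have : {x : ι → ℝ | x i ∈ Aset Q γ κ T x i} =
        ({x | x i ∈ Set.Icc (0:ℝ) 1} ∩ {x | γ * q Q T x ≤ q Q (insert i T) x}) ∪ {x | x i ∈ Set.Icc 0 κ} := by
        ext x
        simp [Aset, hi]
      rw [this]
      refine MeasurableSet.union (MeasurableSet.inter ?_ ?_) ?_
      · exact measurable_pi_apply i measurableSet_Icc
      · exact measurableSet_le ((q_bm hQ _).1.const_mul γ) (q_bm hQ _).1
      · exact measurable_pi_apply i measurableSet_Icc
    have : Measurable ({x : ι → ℝ | x i ∈ Aset Q γ κ T x i}.indicator (fun _ => 1 - κ ^ 2)) :=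
      measurable_const.indicator hm
    exact this

theorem wgt_int {Q : Set (ι → ℝ)} (hQ : MeasurableSet Q) {γ κ : ℝ} (hκ0 : 0 ≤ κ) (hκ : κ ≤ 1)
    (T : Finset ι) (x i) :
    ∫ a, wgt Q γ κ T x i a ∂mu0 ≤ (1 + κ) * (volume (Aset Q γ κ T x i)).toReal := by
  have hA := Aset_meas hQ γ κ T x i
  have hv : mu0.real (Aset Q γ κ T x i) = (volume (Aset Q γ κ T x i)).toReal := by
    rw [mu0, measureReal_def, Measure.restrict_apply hA, Set.inter_eq_self_of_subset_left (Aset_sub hκ T x i)]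
  rw [← hv]
  have hk : κ ≤ mu0.real (Aset Q γ κ T x i) := by
    have : mu0.real (Set.Icc 0 κ) = κ := by
      rw [mu0, measureReal_def, Measure.restrict_apply measurableSet_Icc,
        Set.inter_eq_self_of_subset_left (Set.Icc_subset_Icc le_rfl hκ)]
      simp [hκ0]
    calc κ = mu0.real (Set.Icc 0 κ) := this.symm
      _ ≤ _ := measureReal_mono (Aset_sup hκ T x i)
  unfold wgt
  split_ifs with hi
  · have : mu0.real (Aset Q γ κ T x i) = 1 := by
      rw [Aset, if_pos hi, mu0]; simp [measureReal_def]
    rw [this]; simp [hκ0]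
  · rw [integral_add ((integrable_const _).indicator hA) (integrable_const _), integral_indicator hA]
    simp only [integral_const, measureReal_restrict_apply_univ, probReal_univ, smul_eq_mul, one_mul]
    nlinarith [measureReal_nonneg (μ := mu0) (s := Aset Q γ κ T x i), sq_nonneg κ]

theorem cE_wgt {Q : Set (ι → ℝ)} (hQ : MeasurableSet Q) {γ κ : ℝ} (hκ0 : 0 ≤ κ) (hκ : κ ≤ 1)
    (T : Finset ι) (x) :
    cE T (fun x => ∏ i, wgt Q γ κ T x i (x i)) x ≤
      (1 + κ) ^ Fintype.card ι * (volume (Set.univ.pi (Aset Q γ κ T x))).toReal := by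
  have e : ∀ y, ∏ i, wgt Q γ κ T (T.piecewise x y) i (T.piecewise x y i) = ∏ i, wgt Q γ κ T x i (y i) := by
    intro y
    refine Finset.prod_congr rfl fun i _ => ?_
    unfold wgt
    split_ifs with hi
    · rfl
    · rw [Aset_congr (y := x) (fun k hk => by simp [hk])]
      simp [hi]
  simp only [cE, e, MU]
  rw [integral_fintype_prod_eq_prod]
  rw [volume_pi, Measure.pi_pi, ENNReal.toReal_prod]
  refine (Finset.prod_le_prod (fun i _ => ?_) fun i _ => wgt_int hQ hκ0 hκ T x i).trans (le_of_eq ?_)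
  · exact integral_nonneg fun a => (sq_nonneg κ).trans (wgt_pos hκ0 hκ T x i a).1
  · rw [Finset.prod_mul_distrib]; simp

end cont
end SC

set_option linter.unusedSectionVars false
namespace SC
section count
variable {ι : Type} [Fintype ι] [DecidableEq ι] {α : Type} [Fintype α] [DecidableEq α]

theorem BM.sum {X κ : Type} [MeasurableSpace X] (s : Finset κ) {f : κ → X → ℝ} (hf : ∀ k ∈ s, BM (f k)) :
    BM (fun x => ∑ k ∈ s, f k x) := by
  classical
  induction s using Finset.induction_on with
  | empty => simpa using BM.const 0
  | insert a s ha ih =>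
    simp only [Finset.sum_insert ha]
    exact (hf a (Finset.mem_insert_self _ _)).add (ih fun k hk => hf k (Finset.mem_insert_of_mem hk))

theorem exc_bound {Q : Set (ι → ℝ)} (hQ : MeasurableSet Q) {γ : ℝ} (hγ : 0 < γ) (T : Finset ι) :
    ∫ x, (∑ i, ({x | q Q (insert i T) x < γ * q Q T x} : Set (ι → ℝ)).indicator (fun _ => (1:ℝ)) x) *
      Q.indicator (fun _ => (1:ℝ)) x ∂MU ι ≤ γ * Fintype.card ι * (MU ι).real Q := by
  have hm : ∀ i, MeasurableSet {x | q Q (insert i T) x < γ * q Q T x} := fun i =>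
    measurableSet_lt (q_bm hQ _).1 ((q_bm hQ _).1.const_mul γ)
  have hb := fun i => BM.indicator (hm i)
  simp only [Finset.sum_mul]
  rw [integral_finsetSum _ fun i _ => ((hb i).mul (BM.indicator hQ)).integrable _]
  have : ∀ i ∈ Finset.univ, ∫ x, ({x | q Q (insert i T) x < γ * q Q T x} : Set (ι → ℝ)).indicator (fun _ => (1:ℝ)) x *
      Q.indicator (fun _ => (1:ℝ)) x ∂MU ι ≤ γ * (MU ι).real Q := by
    intro i _
    rw [← integral_mul_q hQ (insert i T) (hb i), ← integral_q hQ T, ← integral_const_mul]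
    · refine integral_mono (((hb i).mul (q_bm hQ _)).integrable _) (((BM.const γ).mul (q_bm hQ _)).integrable _) fun x => ?_
      by_cases h : q Q (insert i T) x < γ * q Q T x
      · simp [Set.indicator, h, h.le]
      · simp only [Set.indicator, Set.mem_ofPred_eq, h, if_false, zero_mul]
        exact mul_nonneg hγ.le (q_nonneg _ _)
    · intro x y hxy
      have e1 : q Q T x = q Q T y := q_dep T _ _ fun i hi => hxy i (Finset.mem_insert_of_mem hi)
      have e2 : q Q (insert i T) x = q Q (insert i T) y := q_dep _ _ _ hxy
      simp only [Set.indicator, Set.mem_ofPred_eq, e1, e2]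
  refine (Finset.sum_le_sum this).trans (le_of_eq ?_)
  simp; ring

theorem count_bound [Nonempty ι] {Q : Set (ι → ℝ)} (hQ : MeasurableSet Q) (hQc : Q ⊆ unitCube ι)
    {R : Set (α → ℝ)} (hR : MeasurableSet R)
    (E : Finset (α → ι)) (hE : ∀ φ ∈ E, Function.Injective φ) (hEp : 0 < E.card)
    {γ κ η δ V : ℝ} (hγ : 0 < γ) (hκ0 : 0 < κ) (hκ : κ ≤ 1) (hη : 0 < η) (hV : 0 ≤ V)
    (T : Finset ι)
    (hT : ((E.filter fun φ => ∃ j, φ j ∈ T).card : ℝ) * (MU ι).real Q +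
        ∑ φ ∈ E, ∫ x, (Gset Q (unitCube α \ R) γ T φ).indicator (fun _ => (1:ℝ)) x * q Q T x ∂MU ι ≤
        (MU ι).real Q * (E.card * δ))
    (hδ : Fintype.card α * κ + δ ≤ η / 4)
    (hb : ∀ b : Set (ι → ℝ), IsBox b →
      (∑ φ ∈ E, (volume (projBody φ b \ R)).toReal) / (E.card : ℝ) < η → (volume b).toReal ≤ V) :
    (MU ι).real Q / 2 * (κ ^ 2) ^ (4 * γ * Fintype.card ι) ≤ (1 + κ) ^ Fintype.card ι * V := by
  set m := (MU ι).real Q with hm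
  have hm0 : 0 ≤ m := measureReal_nonneg
  set e : ℝ := (E.card : ℝ) with he
  have he0 : 0 < e := Nat.cast_pos.2 hEp
  set v : ℝ := (Fintype.card ι : ℝ) with hv
  have hv0 : 0 < v := Nat.cast_pos.2 Fintype.card_pos
  set r : ℝ := (Fintype.card α : ℝ) with hr
  set tch : ℝ := ((E.filter fun φ => ∃ j, φ j ∈ T).card : ℝ) with htch
  have hβbm : ∀ φ, BM (cE T ((Gset Q (unitCube α \ R) γ T φ).indicator fun _ => (1:ℝ))) := fun φ =>
    cE_bm T (BM.indicator (Gset_meas hQ (cube_meas.diff hR) γ T φ))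
  have hβ0 : ∀ φ x, 0 ≤ cE T ((Gset Q (unitCube α \ R) γ T φ).indicator fun _ => (1:ℝ)) x := fun φ =>
    cE_nonneg T (fun x => Set.indicator_nonneg (fun _ _ => zero_le_one) x)
  set g : (ι → ℝ) → ℝ := fun x => (tch + e * (r * κ)) +
    ∑ φ ∈ E, cE T ((Gset Q (unitCube α \ R) γ T φ).indicator fun _ => (1:ℝ)) x with hg
  have hgbm : BM g := (BM.const _).add (BM.sum E fun φ _ => hβbm φ)
  have hg0 : ∀ x, 0 ≤ g x := fun x => by
    have := Finset.sum_nonneg fun φ (_ : φ ∈ E) => hβ0 φ x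
    positivity
  have hgdep : Dep T g := by
    intro x y hxy
    simp only [hg]
    congr 1
    exact Finset.sum_congr rfl fun φ _ => cE_dep T _ x y hxy
  -- total of g
  have hgint : ∫ x, g x * q Q T x ∂MU ι ≤ m * (e * (η / 4)) := by
    have e1 : ∫ x, g x * q Q T x ∂MU ι = (tch + e * (r * κ)) * m +
        ∑ φ ∈ E, ∫ x, (Gset Q (unitCube α \ R) γ T φ).indicator (fun _ => (1:ℝ)) x * q Q T x ∂MU ι := by
      simp only [hg, add_mul _ (∑ φ ∈ E, _), Finset.sum_mul]
      rw [integral_add (((BM.const _).mul (q_bm hQ T)).integrable _)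
        ((BM.sum E fun φ _ => (hβbm φ).mul (q_bm hQ T)).integrable _), integral_const_mul, integral_q hQ T,
        integral_finsetSum _ fun φ _ => ((hβbm φ).mul (q_bm hQ T)).integrable _]
      congr 1
      refine Finset.sum_congr rfl fun φ _ => ?_
      have := integral_mul_cE T (BM.indicator (Gset_meas hQ (cube_meas.diff hR) γ T φ)) (q_bm hQ T) (q_dep T)
      simpa only [mul_comm] using this
    rw [e1]
    have : m * (e * (r * κ + δ)) ≤ m * (e * (η / 4)) := by gcongr
    nlinarith
  -- good set
  set H : Set (ι → ℝ) := {x | g x < η * e ∧ 0 < q Q T x} with hH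
  have hHm : MeasurableSet H :=
    (measurableSet_lt hgbm.1 measurable_const).inter (measurableSet_lt measurable_const (q_bm hQ T).1)
  have hHdep : ∀ x y : ι → ℝ, (∀ i ∈ T, x i = y i) → (x ∈ H ↔ y ∈ H) := by
    intro x y hxy
    simp only [hH, Set.mem_ofPred_eq, hgdep x y hxy, q_dep T x y hxy]
  have hHdep1 : Dep T (H.indicator fun _ => (1:ℝ)) := by
    intro x y hxy
    simp only [Set.indicator, hHdep x y hxy]
  have hHdep2 : Dep T (Hᶜ.indicator fun _ => (1:ℝ)) := by
    intro x y hxy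
    simp only [Set.indicator, Set.mem_compl_iff, hHdep x y hxy]
  have hbad : ∫ x, Hᶜ.indicator (fun _ => (1:ℝ)) x * Q.indicator (fun _ => (1:ℝ)) x ∂MU ι ≤ m / 4 := by
    rw [← integral_mul_q hQ T (BM.indicator hHm.compl) hHdep2]
    have : ∫ x, Hᶜ.indicator (fun _ => (1:ℝ)) x * q Q T x ∂MU ι ≤ ∫ x, (η * e)⁻¹ * (g x * q Q T x) ∂MU ι := by
      refine integral_mono (((BM.indicator hHm.compl).mul (q_bm hQ T)).integrable _)
        (((BM.const _).mul (hgbm.mul (q_bm hQ T))).integrable _) fun x => ?_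
      have hq := q_nonneg (Q := Q) T x
      by_cases h : x ∈ H
      · have : x ∉ Hᶜ := fun h' => h' h
        simp only [Set.indicator_of_notMem this, zero_mul]
        have := hg0 x
        positivity
      · simp only [Set.indicator_of_mem (show x ∈ Hᶜ from h), one_mul]
        rcases hq.eq_or_lt with h0 | h0
        · simp [← h0]
        · have h1 : η * e ≤ g x := by
            by_contra hlt
            exact h ⟨not_le.1 hlt, h0⟩
          rw [le_inv_mul_iff₀ (by positivity)]
          gcongr
    rw [integral_const_mul] at this
    refine this.trans ?_
    rw [inv_mul_le_iff₀ (by positivity)]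
    refine hgint.trans (le_of_eq (by ring))
  -- exceptional coordinates
  set exc : (ι → ℝ) → ℝ := fun x => ∑ i, ({x | q Q (insert i T) x < γ * q Q T x} : Set (ι → ℝ)).indicator (fun _ => (1:ℝ)) x with hexc
  have hexcbm : BM exc := BM.sum _ fun i _ => BM.indicator
    (measurableSet_lt (q_bm hQ _).1 ((q_bm hQ _).1.const_mul γ))
  have hexc0 : ∀ x, 0 ≤ exc x := fun x => Finset.sum_nonneg fun i _ =>
    Set.indicator_nonneg (fun _ _ => zero_le_one) x
  have hexci := exc_bound hQ hγ T
  set F : (ι → ℝ) → ℝ := fun x => ∏ i, wgt Q γ κ T x i (x i) with hF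
  have hF0 : ∀ x, 0 ≤ F x := fun x => Finset.prod_nonneg fun i _ =>
    (sq_nonneg κ).trans (wgt_pos hκ0.le hκ T x i _).1
  have hFbm : BM F := by
    refine BM.of01 (Finset.measurable_prod _ fun i _ => wgt_meas hQ T i) hF0 fun x => ?_
    exact Finset.prod_le_one (fun i _ => (sq_nonneg κ).trans (wgt_pos hκ0.le hκ T x i _).1)
      fun i _ => (wgt_pos hκ0.le hκ T x i _).2
  have hk2 : 0 < κ ^ 2 := by positivity
  have hk2' : κ ^ 2 ≤ 1 := pow_le_one₀ hκ0.le hκ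
  have hFexc : ∀ x ∈ Q, (κ ^ 2) ^ (exc x) ≤ F x := by
    intro x hx
    simp only [hexc, hF]
    rw [Real.rpow_sum_of_pos hk2]
    refine Finset.prod_le_prod (fun i _ => by positivity) fun i _ => ?_
    by_cases h : q Q (insert i T) x < γ * q Q T x
    · rw [Set.indicator_of_mem (show x ∈ {x | q Q (insert i T) x < γ * q Q T x} from h), Real.rpow_one]
      exact (wgt_pos hκ0.le hκ T x i _).1
    · rw [Set.indicator_of_notMem (show x ∉ {x | q Q (insert i T) x < γ * q Q T x} from h), Real.rpow_zero]
      unfold wgt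
      split_ifs with hi
      · exact le_rfl
      · have : x i ∈ Aset Q γ κ T x i := by
          rw [Aset, if_neg hi]
          left
          refine ⟨hQc hx i (Set.mem_univ i), ?_⟩
          simp only [Set.mem_ofPred_eq, Function.update_eq_self]
          exact not_lt.1 h
        simp [this]
  set lam : ℝ := (κ ^ 2) ^ (4 * γ * v) with hlam
  have hlam0 : 0 < lam := Real.rpow_pos_of_pos hk2 _
  -- main pointwise inequality
  have hmain : ∫ x, lam * (Q.indicator (fun _ => (1:ℝ)) x -
      (Hᶜ.indicator (fun _ => (1:ℝ)) x * Q.indicator (fun _ => (1:ℝ)) x +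
      (4 * γ * v)⁻¹ * (exc x * Q.indicator (fun _ => (1:ℝ)) x))) ∂MU ι ≤
      ∫ x, H.indicator (fun _ => (1:ℝ)) x * F x ∂MU ι := by
    have hQi := BM.indicator hQ
    refine integral_mono ?_ (((BM.indicator hHm).mul hFbm).integrable _) fun x => ?_
    · refine Integrable.const_mul (Integrable.sub (hQi.integrable _) (Integrable.add ?_ ?_)) _
      · exact ((BM.indicator hHm.compl).mul hQi).integrable _
      · exact ((hexcbm.mul hQi).integrable _).const_mul _
    · have hr0 : 0 ≤ H.indicator (fun _ => (1:ℝ)) x * F x :=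
        mul_nonneg (Set.indicator_nonneg (fun _ _ => zero_le_one) x) (hF0 x)
      by_cases hx : x ∈ Q
      · by_cases hxH : x ∈ H
        · have : x ∉ Hᶜ := fun h' => h' hxH
          simp only [Set.indicator_of_mem hx, Set.indicator_of_mem hxH, Set.indicator_of_notMem this]
          by_cases hxe : exc x ≤ 4 * γ * v
          · have h1 : lam ≤ F x := by
              refine le_trans ?_ (hFexc x hx)
              exact Real.rpow_le_rpow_of_exponent_ge hk2 hk2' hxe
            have h2 : 0 ≤ (4 * γ * v)⁻¹ * (exc x * 1) := by
              have := hexc0 x; positivity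
            nlinarith
          · have h2 : 1 ≤ (4 * γ * v)⁻¹ * (exc x * 1) := by
              rw [le_inv_mul_iff₀ (by positivity)]; linarith [not_le.1 hxe]
            have := hF0 x
            nlinarith
        · have h2 : 0 ≤ (4 * γ * v)⁻¹ * (exc x * 1) := by
            have := hexc0 x; positivity
          refine le_trans ?_ hr0
          simp only [Set.indicator_of_mem hx, Set.indicator_of_mem (show x ∈ Hᶜ from hxH)]
          nlinarith
      · refine le_trans (le_of_eq ?_) hr0
        simp [Set.indicator_of_notMem hx]
  have hlow : lam * (m / 2) ≤ ∫ x, lam * (Q.indicator (fun _ => (1:ℝ)) x -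
      (Hᶜ.indicator (fun _ => (1:ℝ)) x * Q.indicator (fun _ => (1:ℝ)) x +
      (4 * γ * v)⁻¹ * (exc x * Q.indicator (fun _ => (1:ℝ)) x))) ∂MU ι := by
    have hQi := BM.indicator hQ
    rw [integral_const_mul, integral_sub (hQi.integrable _), integral_add, integral_const_mul]
    · gcongr
      have e1 : ∫ x, Q.indicator (fun _ => (1:ℝ)) x ∂MU ι = m := by
        rw [integral_indicator hQ]; simp [hm]
      rw [e1]
      have e2 : (4 * γ * v)⁻¹ * ∫ x, exc x * Q.indicator (fun _ => (1:ℝ)) x ∂MU ι ≤ m / 4 := by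
        rw [inv_mul_le_iff₀ (by positivity)]
        refine hexci.trans (le_of_eq ?_)
        simp only [hm, hv]; ring
      linarith
    · exact ((BM.indicator hHm.compl).mul hQi).integrable _
    · exact ((hexcbm.mul hQi).integrable _).const_mul _
    · refine Integrable.add ?_ ?_
      · exact ((BM.indicator hHm.compl).mul hQi).integrable _
      · exact ((hexcbm.mul hQi).integrable _).const_mul _
  have hup : ∫ x, H.indicator (fun _ => (1:ℝ)) x * F x ∂MU ι ≤ (1 + κ) ^ Fintype.card ι * V := by
    rw [← integral_mul_cE T hFbm (BM.indicator hHm) hHdep1]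
    have hcn : 0 ≤ (1 + κ) ^ Fintype.card ι * V := by positivity
    have : ∫ x, H.indicator (fun _ => (1:ℝ)) x * cE T F x ∂MU ι ≤ ∫ _x, (1 + κ) ^ Fintype.card ι * V ∂MU ι := by
      refine integral_mono (((BM.indicator hHm).mul (cE_bm T hFbm)).integrable _) (integrable_const _) fun x => ?_
      by_cases hxH : x ∈ H
      · simp only [Set.indicator_of_mem hxH, one_mul]
        refine (cE_wgt hQ hκ0.le hκ T x).trans ?_
        gcongr
        refine hb _ ⟨_, fun i => ⟨Aset_meas hQ γ κ T x i, Aset_sub hκ T x i⟩, rfl⟩ ?_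
        rw [div_lt_iff₀ he0]
        refine lt_of_le_of_lt ?_ hxH.1
        have hterm : ∀ φ ∈ E, (volume (projBody φ (Set.univ.pi (Aset Q γ κ T x)) \ R)).toReal ≤
            ((if ∃ j, φ j ∈ T then (1:ℝ) else 0) + r * κ) + cE T ((Gset Q (unitCube α \ R) γ T φ).indicator fun _ => (1:ℝ)) x := by
          intro φ hφ
          have h0 := hβ0 φ x
          have h00 : 0 ≤ r * κ := by positivity
          split_ifs with h
          · have := proj_vol_le_one φ (hE φ hφ) (Aset Q γ κ T x) (Aset_sub hκ T x) R
            linarith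
          · push Not at h
            have := proj_vol hQ hκ0.le hκ T x hxH.2 φ (hE φ hφ) h hR (γ := γ)
            linarith
        refine (Finset.sum_le_sum hterm).trans (le_of_eq ?_)
        rw [Finset.sum_add_distrib, Finset.sum_add_distrib]
        simp only [hg, htch, Finset.card_filter, he]
        push_cast
        simp
      · simp only [Set.indicator_of_notMem hxH, zero_mul]
        exact hcn
    refine this.trans (le_of_eq ?_)
    simp
  calc m / 2 * lam = lam * (m / 2) := by ring
    _ ≤ _ := hlow.trans (hmain.trans hup)

end count
end SC

set_option linter.unusedSectionVars false
namespace SC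

theorem le_neg_log_iff (a : ℝ) (w : ENNReal) :
    (a : EReal) ≤ -(ENNReal.log w) ↔ w ≤ ENNReal.ofReal (Real.exp (-a)) := by
  rw [EReal.le_neg]
  have : (-(a:EReal)) = ENNReal.log (ENNReal.ofReal (Real.exp (-a))) := by
    rw [ENNReal.log_ofReal_of_pos (Real.exp_pos _), Real.log_exp]; simp
  rw [this, ENNReal.log_le_log_iff]

theorem hered_notin (S : Ssee) (P : ∀ n, Set (S.V n → ℝ)) (hP : S.Hereditary P) {N n : ℕ} (hN : N ≤ n)
    (φ : S.V N → S.V n) (hφ : φ ∈ S.emb N n) (x : S.V n → ℝ) (hx : x ∈ P n) :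
    (fun j => x (φ j)) ∉ unitCube (S.V N) \ P N := by
  intro h
  have : x ∈ S.upperShadow N n (unitCube (S.V N) \ P N) := by
    refine Set.mem_iUnion₂.2 ⟨φ, hφ, (hP.1 n).2 hx, h⟩
  exact (hP.2 N n hN this).2 hx

theorem case_one (S : Ssee) (P : ∀ n, Set (S.V n → ℝ)) (hP : S.Hereditary P) {N n : ℕ} (hN : N ≤ n)
    (h1 : Fintype.card (S.V N) = 1) {η : ℝ} (hη : 0 < η) {V : ENNReal}
    (hb : ∀ b : Set (S.V n → ℝ), IsBox b →
        S.expProj N n (fun φ => (volume (projBody φ b \ P N)).toReal) < η → volume b ≤ V) :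
    volume (P n) ≤ V := by
  classical
  have hsub : Subsingleton (S.V N) := Fintype.card_le_one_iff_subsingleton.1 h1.le
  have hRm := (hP.1 N).1
  set A : S.V n → Set ℝ := fun i => {a | a ∈ Set.Icc (0:ℝ) 1 ∧
    ((∃ φ ∈ S.emb N n, i ∈ Set.range φ) → (fun _ : S.V N => a) ∈ P N)} with hA
  have hAm : ∀ i, MeasurableSet (A i) := by
    intro i
    by_cases h : ∃ φ ∈ S.emb N n, i ∈ Set.range φ
    · have : MeasurableSet ((fun (a : ℝ) (_ : S.V N) => a) ⁻¹' (P N)) :=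
        (measurable_pi_lambda _ fun _ => measurable_id) hRm
      convert measurableSet_Icc.inter this using 1
      ext a
      exact ⟨fun h' => ⟨h'.1, h'.2 h⟩, fun h' => ⟨h'.1, fun _ => h'.2⟩⟩
    · convert measurableSet_Icc (a := (0:ℝ)) (b := 1) using 1
      ext a
      exact ⟨fun h' => h'.1, fun h' => ⟨h', fun h'' => absurd h'' h⟩⟩
  have hQ : P n ⊆ Set.univ.pi A := by
    intro x hx i _
    refine ⟨(hP.1 n).2 hx i (Set.mem_univ i), ?_⟩
    rintro ⟨φ, hφ, j, rfl⟩
    have h := hered_notin S P hP hN φ hφ x hx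
    have hc : (fun j => x (φ j)) ∈ unitCube (S.V N) := fun k _ => (hP.1 n).2 hx _ (Set.mem_univ _)
    have h2 : (fun j => x (φ j)) ∈ P N := by
      by_contra h3; exact h ⟨hc, h3⟩
    convert h2 using 1
    funext k
    rw [Subsingleton.elim k j]
  refine (measure_mono hQ).trans (hb _ ⟨A, fun i => ⟨hAm i, fun a ha => ha.1⟩, rfl⟩ ?_)
  have h0 : ∀ φ ∈ S.emb N n, (volume (projBody φ (Set.univ.pi A) \ P N)).toReal = 0 := by
    intro φ hφ
    have : projBody φ (Set.univ.pi A) \ P N = ∅ := by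
      rw [Set.sdiff_eq_empty]
      intro c hc
      have h := proj_sub φ (S.emb_inj N n hN φ hφ) A hc
      obtain ⟨j⟩ := S.nonemp N
      have := (h j).2 ⟨φ, hφ, j, rfl⟩
      convert this using 1
      funext k
      rw [Subsingleton.elim k j]
    simp [this]
  rw [Ssee.expProj, Finset.sum_congr rfl h0]
  simpa using hη

theorem final_calc {m κ γ ε a : ℝ} {v : ℕ} (hκ0 : 0 < κ) (hκ : κ ≤ ε)
    (hγ : 8 * γ * |Real.log κ| ≤ ε) (hγ0 : 0 < γ) (hv : Real.log 2 ≤ ε * v)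
    (h : m / 2 * (κ ^ 2) ^ (4 * γ * v) ≤ (1 + κ) ^ v * Real.exp (-((a - ε) * v))) :
    m ≤ Real.exp (-((a - 4 * ε) * v)) := by
  have hv0 : (0:ℝ) ≤ v := Nat.cast_nonneg v
  have e1 : (κ ^ 2) ^ (4 * γ * v) = Real.exp (8 * γ * Real.log κ * v) := by
    rw [Real.rpow_def_of_pos (by positivity), Real.log_pow]
    congr 1; push_cast; ring
  have e2 : (1 + κ) ^ v ≤ Real.exp (ε * v) := by
    calc (1 + κ) ^ v ≤ (Real.exp κ) ^ v := by
          gcongr; linarith [Real.add_one_le_exp κ]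
      _ = Real.exp (κ * v) := by rw [← Real.exp_nat_mul]; ring_nf
      _ ≤ _ := by gcongr
  have e3 : Real.exp (-(ε * v)) ≤ (κ ^ 2) ^ (4 * γ * v) := by
    rw [e1]
    apply Real.exp_le_exp.2
    have : -ε ≤ 8 * γ * Real.log κ := by
      have := neg_abs_le (Real.log κ)
      nlinarith
    nlinarith
  by_cases hm : 0 ≤ m
  · have h1 : m / 2 * Real.exp (-(ε * v)) ≤ Real.exp (ε * v) * Real.exp (-((a - ε) * v)) := by
      refine le_trans ?_ (h.trans ?_) <;> gcongr
    have h2 : m ≤ 2 * (Real.exp (ε * v) * Real.exp (-((a - ε) * v)) * Real.exp (ε * v)) := by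
      have h3 : Real.exp (-(ε * v)) * Real.exp (ε * v) = 1 := by rw [← Real.exp_add]; simp
      have h4 := mul_le_mul_of_nonneg_right h1 (Real.exp_pos (ε * v)).le
      rw [mul_assoc, h3] at h4
      linarith
    refine h2.trans ?_
    have h5 : (2:ℝ) ≤ Real.exp (ε * v) := by
      rw [← Real.exp_log (show (0:ℝ) < 2 by norm_num)]; exact Real.exp_le_exp.2 hv
    calc _ ≤ Real.exp (ε * v) * (Real.exp (ε * v) * Real.exp (-((a - ε) * v)) * Real.exp (ε * v)) := by gcongr
      _ = _ := by rw [← Real.exp_add, ← Real.exp_add, ← Real.exp_add]; congr 1; ring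
  · exact (not_le.1 hm).le.trans (Real.exp_pos _).le

theorem case_many (S : Ssee) (hS : S.Good) (P : ∀ n, Set (S.V n → ℝ)) (hP : S.Hereditary P) {N n₀ : ℕ}
    (hN : N ≤ n₀) (h2 : 1 < Fintype.card (S.V N)) {η ε π : ℝ} (hη : 0 < η) (hε : 0 < ε)
    (hb : ∀ n ≥ n₀, ∀ b : Set (S.V n → ℝ), IsBox b →
        S.expProj N n (fun φ => (volume (projBody φ b \ P N)).toReal) < η →
        volume b ≤ ENNReal.ofReal (Real.exp (-((π - ε) * (Fintype.card (S.V n) : ℝ))))) :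
    ∀ᶠ n in atTop, volume (P n) ≤ ENNReal.ofReal (Real.exp (-((π - 4 * ε) * (Fintype.card (S.V n) : ℝ)))) := by
  obtain ⟨hS1, hS2, hS3⟩ := hS
  have hS2 := hS2 N h2
  have hS3 := hS3 N h2
  set r : ℕ := Fintype.card (S.V N) with hr
  have hr0 : (0:ℝ) < r := by have : 0 < r := by omega
                             exact Nat.cast_pos.2 this
  obtain ⟨κ, hκ0, hκ1, hκε, hκη⟩ : ∃ κ : ℝ, 0 < κ ∧ κ ≤ 1 ∧ κ ≤ ε ∧ r * κ ≤ η / 8 := by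
    refine ⟨min (min 1 ε) (η / (8 * r)), by positivity, (min_le_left _ _).trans (min_le_left _ _),
      (min_le_left _ _).trans (min_le_right _ _), ?_⟩
    calc (r:ℝ) * min (min 1 ε) (η / (8 * r)) ≤ r * (η / (8 * r)) := by gcongr; exact min_le_right _ _
      _ = η / 8 := by field_simp
  obtain ⟨γ, hγ0, hγ1, hγε⟩ : ∃ γ : ℝ, 0 < γ ∧ γ ≤ 1 ∧ 8 * γ * |Real.log κ| ≤ ε := by
    refine ⟨min 1 (ε / (8 * (|Real.log κ| + 1))), by positivity, min_le_left _ _, ?_⟩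
    calc 8 * min 1 (ε / (8 * (|Real.log κ| + 1))) * |Real.log κ| ≤
          8 * (ε / (8 * (|Real.log κ| + 1))) * (|Real.log κ| + 1) := by
            gcongr
            · exact min_le_right _ _
            · linarith
      _ = ε := by field_simp
  obtain ⟨τ, hτ0, hτ1, hτη⟩ : ∃ τ : ℝ, 0 < τ ∧ τ ≤ 1 ∧ r * τ ≤ η / 32 := by
    refine ⟨min 1 (η / (32 * r)), by positivity, min_le_left _ _, ?_⟩
    calc (r:ℝ) * min 1 (η / (32 * r)) ≤ r * (η / (32 * r)) := by gcongr; exact min_le_right _ _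
      _ = η / 32 := by field_simp
  set D : ℝ := (2 / γ) ^ r * (24 / γ ^ 2) * (r * (1 / τ ^ (r - 1))) with hD
  have hD0 : 0 < D := by positivity
  set ρ' : ℝ := η / (32 * D) with hρ'
  have hρ0 : 0 < ρ' := by positivity
  have hS2i : Tendsto (fun n => (r:ℝ) ^ r * (((S.emb N n).card : ℝ) / (Fintype.card (S.V n) : ℝ))⁻¹) atTop (nhds 0) := by
    have := (tendsto_inv_atTop_zero.comp hS2).const_mul ((r:ℝ) ^ r)
    simpa using this
  have hsum := hS3.add hS2i
  rw [add_zero] at hsum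
  have ev1 := hsum.eventually (gt_mem_nhds (show (0:ℝ) < ρ' * ρ' by positivity))
  have ev2 := hS2.eventually_gt_atTop 0
  have ev3 := (tendsto_natCast_atTop_atTop (R := ℝ)).comp hS1 |>.eventually_ge_atTop (Real.log 2 / ε)
  filter_upwards [ev1, ev2, ev3, eventually_ge_atTop n₀] with n hn1 hn2 hn3 hn0
  have hNn : N ≤ n := hN.trans hn0
  set v : ℕ := Fintype.card (S.V n) with hv
  have hv0 : (0:ℝ) < v := Nat.cast_pos.2 Fintype.card_pos
  set e : ℝ := ((S.emb N n).card : ℝ) with he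
  have he0 : 0 < e := by
    by_contra h
    have := div_nonpos_of_nonpos_of_nonneg (not_lt.1 h) hv0.le
    linarith
  have hep : 0 < (S.emb N n).card := by
    have : (0:ℝ) < ((S.emb N n).card : ℝ) := he0
    exact_mod_cast this
  have hQ := (hP.1 n).1
  have hRm := (hP.1 N).1
  have hE := S.emb_inj N n hNn
  obtain ⟨T, hT⟩ := choose_T hQ (cube_meas.diff hRm) (S.emb N n) hE
    (fun φ hφ x hx => hered_notin S P hP hNn φ hφ x hx) hτ0 hτ1 hγ0 hγ1
    (show 0 < ρ' * e / v by positivity)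
  have hpc := pair_count (S.emb N n) hE
  set K : ℕ := (((S.emb N n) ×ˢ (S.emb N n)).filter fun p =>
          1 < ((Finset.univ.image p.1) ∩ (Finset.univ.image p.2)).card).card with hK
  have hKb : (K:ℝ) ≤ S.interCount N n + (r:ℝ) ^ r * e := by
    have : (K:ℝ) ≤ ((S.interCount N n + r ^ r * (S.emb N n).card : ℕ) : ℝ) := by
      exact_mod_cast hpc
    push_cast at this
    exact this
  have hvK : v * (K:ℝ) / e ^ 2 ≤ ρ' * ρ' := by
    refine le_trans ?_ hn1.le
    calc v * (K:ℝ) / e ^ 2 ≤ v * (S.interCount N n + (r:ℝ) ^ r * e) / e ^ 2 := by gcongr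
      _ = _ := by field_simp
  have hT' : (((S.emb N n).filter fun φ => ∃ j, φ j ∈ T).card : ℝ) * (MU (S.V n)).real (P n) +
        ∑ φ ∈ S.emb N n, ∫ x, (Gset (P n) (unitCube (S.V N) \ P N) γ T φ).indicator (fun _ => (1:ℝ)) x * q (P n) T x ∂MU (S.V n) ≤
        (MU (S.V n)).real (P n) * ((S.emb N n).card * (η / 8)) := by
    refine hT.trans ?_
    refine mul_le_mul_of_nonneg_left ?_ measureReal_nonneg
    have hA : (ρ' * e / v) * v + (ρ' * e / v)⁻¹ * (K:ℝ) ≤ e * (2 * ρ') := by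
      have e1 : (ρ' * e / v) * v + (ρ' * e / v)⁻¹ * (K:ℝ) = e * (ρ' + ρ'⁻¹ * (v * (K:ℝ) / e ^ 2)) := by
        field_simp
      rw [e1]
      have : ρ'⁻¹ * (v * (K:ℝ) / e ^ 2) ≤ ρ'⁻¹ * (ρ' * ρ') := by gcongr
      have e2 : ρ'⁻¹ * (ρ' * ρ') = ρ' := by field_simp
      gcongr
      linarith
    have hB : D * ((ρ' * e / v) * v + (ρ' * e / v)⁻¹ * (K:ℝ)) ≤ D * (e * (2 * ρ')) := by gcongr
    have hC : D * (e * (2 * ρ')) = e * (η / 16) := by rw [hρ']; field_simp; norm_num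
    have hF : e * (r * τ) ≤ e * (η / 32) := by gcongr
    have hG : e * (η / 32) + e * (η / 16) ≤ e * (η / 8) := by nlinarith
    calc _ = e * (r * τ) + D * ((ρ' * e / v) * v + (ρ' * e / v)⁻¹ * (K:ℝ)) := by
          rw [hD]; ring
      _ ≤ e * (η / 8) := by linarith
  have hcb := count_bound hQ (hP.1 n).2 hRm (S.emb N n) hE hep (V := Real.exp (-((π - ε) * v)))
    hγ0 hκ0 hκ1 hη (Real.exp_pos _).le T hT' (by linarith)
    (fun b hbb hlt => ENNReal.toReal_le_of_le_ofReal (Real.exp_pos _).le (hb n hn0 b hbb hlt))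
  have hfin := final_calc hκ0 hκε hγε hγ0 (by
    have := (div_le_iff₀ hε).1 hn3
    simp only [Function.comp] at this
    linarith) hcb
  rw [vol_eq hQ (hP.1 n).2]
  rw [← ENNReal.ofReal_toReal (measure_ne_top (MU (S.V n)) (P n))]
  exact ENNReal.ofReal_le_ofReal hfin

end SC

/-- **Corollary (volume estimates for hereditary bodies).**
Let `V` be a good ssee and `P` a hereditary property of `[0,1]`-decorations of `V`.
Assume (a) `π(P) = lim ex(V_n,P_n)/|V_n|` exists, and (b) a supersaturation statement:
for all `ε > 0` there are `η > 0` and `N ≤ n₀` such that for `n ≥ n₀` every box `b` in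
`V_n` with `E_φ vol(b_{↓φ} \ P_N) < η` has `Ent(b) > (π(P) − ε)|V_n|`.
Then `(-log vol(P_n))/|V_n| → π(P)`. -/
theorem counting_for_ssee
    (S : Ssee) (hS : S.Good)
    (P : ∀ n, Set (S.V n → ℝ)) (hP : S.Hereditary P) (π : ℝ)
    (ha : Tendsto (fun n => S.exEnt P n / ((Fintype.card (S.V n) : ℝ) : EReal))
      atTop (nhds (π : EReal)))
    (hb : ∀ ε : ℝ, 0 < ε → ∃ η : ℝ, 0 < η ∧ ∃ N n₀ : ℕ, 0 < N ∧ N ≤ n₀ ∧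
      ∀ n ≥ n₀, ∀ b : Set (S.V n → ℝ), IsBox b →
        S.expProj N n (fun φ => (volume (projBody φ b \ P N)).toReal) < η →
        (((π - ε) * (Fintype.card (S.V n) : ℝ) : ℝ) : EReal) < entE b) :
    Tendsto (fun n => (-(ENNReal.log (volume (P n)))) / ((Fintype.card (S.V n) : ℝ) : EReal))
      atTop (nhds (π : EReal)) := by
  have key : ∀ ε : ℝ, 0 < ε → ∀ᶠ n in atTop,
      volume (P n) ≤ ENNReal.ofReal (Real.exp (-((π - 4 * ε) * (Fintype.card (S.V n) : ℝ)))) := by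
    intro ε hε
    obtain ⟨η, hη, N, n₀, _, hN, h⟩ := hb ε hε
    have hb' : ∀ n ≥ n₀, ∀ b : Set (S.V n → ℝ), IsBox b →
        S.expProj N n (fun φ => (volume (projBody φ b \ P N)).toReal) < η →
        volume b ≤ ENNReal.ofReal (Real.exp (-((π - ε) * (Fintype.card (S.V n) : ℝ)))) := by
      intro n hn b hbox hlt
      exact (SC.le_neg_log_iff _ _).1 (h n hn b hbox hlt).le
    rcases (Nat.succ_le_of_lt (Fintype.card_pos (α := S.V N))).eq_or_lt with h1 | h1
    · filter_upwards [eventually_ge_atTop n₀] with n hn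
      refine (SC.case_one S P hP (hN.trans hn) h1.symm hη (hb' n hn)).trans ?_
      refine ENNReal.ofReal_le_ofReal (Real.exp_le_exp.2 ?_)
      have : (0:ℝ) ≤ Fintype.card (S.V n) := Nat.cast_nonneg _
      nlinarith
    · exact SC.case_many S hS P hP hN h1 hη hε hb'
  have hpos : ∀ n, (0 : EReal) < ((Fintype.card (S.V n) : ℝ) : EReal) := by
    intro n
    have : (0:ℝ) < (Fintype.card (S.V n) : ℝ) := Nat.cast_pos.2 Fintype.card_pos
    exact_mod_cast this
  refine tendsto_order.2 ⟨fun a ha' => ?_, fun a ha' => ?_⟩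
  · obtain ⟨c, hac, hcπ⟩ := EReal.lt_iff_exists_real_btwn.1 ha'
    have hcπ' : c < π := by exact_mod_cast hcπ
    filter_upwards [key ((π - c) / 4) (by linarith)] with n hn
    refine lt_of_lt_of_le hac ?_
    rw [EReal.le_div_iff_mul_le (hpos n) (EReal.coe_ne_top _), ← EReal.coe_mul]
    refine (SC.le_neg_log_iff _ _).2 (hn.trans (le_of_eq ?_))
    congr 2
    ring
  · filter_upwards [(tendsto_order.1 ha).2 a ha'] with n hn
    refine lt_of_le_of_lt ?_ hn
    refine EReal.div_le_div_right_of_nonneg (hpos n).le ?_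
    refine le_sInf ?_
    rintro e ⟨b, _, hb0, rfl⟩
    refine EReal.neg_le_neg_iff.2 (ENNReal.log_le_log_iff.2 ?_)
    calc volume b ≤ volume ((b \ P n) ∪ P n) := measure_mono (by
          intro x hx
          by_cases h : x ∈ P n
          · exact Or.inr h
          · exact Or.inl ⟨hx, h⟩)
      _ ≤ volume (b \ P n) + volume (P n) := measure_union_le _ _
      _ = volume (P n) := by rw [hb0, zero_add]

end
end
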